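/- There exist constants τ > 0 and M > 0 such that for every real x > 1, the sum over all sixth-power free integers n with |n| ≤ x of max{βx(Aₙ), βy(Aₙ)}^τ is strictly less than M times the number of sixth-power free integers n with |n| ≤ x (the sum being computed in [0,∞], with the convention ∞^τ = ∞). -/

import Mathlib

open scoped ENNReal

/-- `u 0, …, u (N-1)` is a non-trivial arithmetic progression. -/
def IsNontrivAP {F : Type*} [Field F] {N : ℕ} (u : Fin N → F) : Prop :=
  ∃ a b : F, b ≠ 0 ∧ ∀ i : Fin N, u i = a + (((i : ℕ) + 1 : ℕ) : F) * b

/-- A nonzero integer is sixth-power free if no `p⁶` divides it. -/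
def SixthPowerFree (n : ℤ) : Prop :=
  n ≠ 0 ∧ ∀ p : ℕ, p.Prime → ¬ ((p : ℤ) ^ 6 ∣ n)

/-- The Mordell curve `Aₙ : y² = x³ + n` over `ℚ`. -/
def MordellCurve (n : ℤ) : WeierstrassCurve ℚ :=
  ⟨0, 0, 0, 0, (n : ℚ)⟩

/-- `βx(W) ∈ ℕ ∪ {∞}`: the supremum of lengths of sequences of affine rational points of `W`
whose `x`-coordinates form a non-trivial arithmetic progression. -/
noncomputable def betaX (W : WeierstrassCurve ℚ) : ℕ∞ :=
  ⨆ N ∈ {N : ℕ | ∃ x y : Fin N → ℚ,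
    (∀ i, W.toAffine.Nonsingular (x i) (y i)) ∧ IsNontrivAP x}, (N : ℕ∞)

/-- `βy(W) ∈ ℕ ∪ {∞}`: the supremum of lengths of sequences of affine rational points of `W`
whose `y`-coordinates form a non-trivial arithmetic progression. -/
noncomputable def betaY (W : WeierstrassCurve ℚ) : ℕ∞ :=
  ⨆ N ∈ {N : ℕ | ∃ x y : Fin N → ℚ,
    (∀ i, W.toAffine.Nonsingular (x i) (y i)) ∧ IsNontrivAP y}, (N : ℕ∞)

set_option linter.unusedSectionVars false
set_option linter.unusedVariables false
namespace AM
open WeierstrassCurve WeierstrassCurve.Affine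

/-- The curve `y² = x³ + c`. -/
abbrev EC {F : Type*} [Field F] (c : F) : WeierstrassCurve.Affine F := (⟨0, 0, 0, 0, c⟩ : WeierstrassCurve F)

section basic
variable {F : Type*} [Field F] [CharZero F]

lemma nonsing_iff {c : F} (hc : c ≠ 0) (x y : F) : (EC c).Nonsingular x y ↔ y ^ 2 = x ^ 3 + c := by
  rw [nonsingular_iff', equation_iff]
  simp only [zero_mul, add_zero, mul_zero, zero_sub]
  constructor
  · exact fun h => h.1
  · intro h
    refine ⟨h, ?_⟩
    by_contra! h2
    have hy : y = 0 := by simpa using h2.2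
    have hx : x = 0 := by simpa using h2.1
    subst hx hy
    simp at h
    exact hc h.symm

/-- Affine point constructor. -/
def mk {c : F} (hc : c ≠ 0) (x y : F) (h : y ^ 2 = x ^ 3 + c) : (EC c).Point :=
  .some x y ((nonsing_iff hc x y).2 h)

lemma pt_cases {c : F} (hc : c ≠ 0) (P : (EC c).Point) :
    P = 0 ∨ ∃ x y h, P = mk hc x y h := by
  rcases P with _ | ⟨x, y, h⟩
  · exact Or.inl rfl
  · exact Or.inr ⟨x, y, (nonsing_iff hc x y).1 h, rfl⟩

lemma mk_ne_zero {c : F} (hc : c ≠ 0) {x y : F} (h) : mk hc x y h ≠ 0 := by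
  intro h'; cases h'

lemma mk_inj {c : F} (hc : c ≠ 0) {x y x' y' : F} {h h'} :
    mk hc x y h = mk hc x' y' h' ↔ x = x' ∧ y = y' := by
  simp [mk]

lemma mk_congr {c : F} (hc : c ≠ 0) {x y x' y' : F} {h h'} (hx : x = x') (hy : y = y') :
    mk hc x y h = mk hc x' y' h' := (mk_inj hc).2 ⟨hx, hy⟩

lemma neg_mk {c : F} (hc : c ≠ 0) {x y : F} (h) :
    - mk hc x y h = mk hc x (-y) (by rw [neg_sq]; exact h) := by
  simp [mk, negY]

variable [DecidableEq F]

lemma mk_add_neg {c : F} (hc : c ≠ 0) {x y y' : F} {h h'} (hy : y' = - y) :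
    mk hc x y h + mk hc x y' h' = 0 := by
  subst hy
  exact Point.add_of_Y_eq rfl (by simp [negY])

lemma mk_add {c : F} (hc : c ≠ 0) {x1 y1 x2 y2 x3 y3 l : F} {h1 h2 h3}
    (hne : x1 ≠ x2) (hl : l * (x1 - x2) = y1 - y2) (hx : x3 = l ^ 2 - x1 - x2)
    (hy : y3 = - (l * (x3 - x1) + y1)) :
    mk hc x1 y1 h1 + mk hc x2 y2 h2 = mk hc x3 y3 h3 := by
  have hs : (EC c).slope x1 x2 y1 y2 = l := by
    rw [slope_of_X_ne hne, ← hl, mul_div_cancel_right₀ _ (sub_ne_zero.2 hne)]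
  unfold mk
  rw [Point.add_of_X_ne hne]
  simp only [Point.some.injEq]
  rw [hs]
  simp only [addX, addY, negAddY, negY]
  subst hx hy
  constructor <;> ring

lemma mk_dbl {c : F} (hc : c ≠ 0) {x1 y1 x3 y3 l : F} {h1 h2 h3}
    (hne : y1 ≠ 0) (hl : l * (2 * y1) = 3 * x1 ^ 2) (hx : x3 = l ^ 2 - 2 * x1)
    (hy : y3 = - (l * (x3 - x1) + y1)) :
    mk hc x1 y1 h1 + mk hc x1 y1 h2 = mk hc x3 y3 h3 := by
  have hn : y1 ≠ (EC c).negY x1 y1 := by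
    simp only [negY]; intro h
    apply hne
    linear_combination (1/2 : F) * h
  have hs : (EC c).slope x1 x1 y1 y1 = l := by
    rw [slope_of_Y_ne rfl hn]
    simp only [negY]
    rw [div_eq_iff]
    · linear_combination -hl
    · intro h
      apply hne
      linear_combination (1/2 : F) * h
  unfold mk
  rw [Point.add_self_of_Y_ne hn]
  simp only [Point.some.injEq]
  rw [hs]
  simp only [addX, addY, negAddY, negY]
  subst hx hy
  constructor <;> ring

/-- trichotomy for sum of affine points -/
lemma add_cases {c : F} (hc : c ≠ 0) {x1 y1 x2 y2 : F} (h1 : y1 ^ 2 = x1 ^ 3 + c)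
    (h2 : y2 ^ 2 = x2 ^ 3 + c) :
    (x1 ≠ x2) ∨ (x1 = x2 ∧ y2 = -y1) ∨ (x1 = x2 ∧ y1 = y2 ∧ y1 ≠ 0) := by
  by_cases hx : x1 = x2
  · right
    subst hx
    have : (y2 - y1) * (y2 + y1) = 0 := by linear_combination h2 - h1
    rcases mul_eq_zero.1 this with h | h
    · by_cases h0 : y1 = 0
      · left; refine ⟨rfl, ?_⟩; rw [sub_eq_zero.1 h, h0]; simp
      · right; exact ⟨rfl, (sub_eq_zero.1 h).symm, h0⟩
    · left; exact ⟨rfl, eq_neg_of_add_eq_zero_left h⟩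
  · exact Or.inl hx

lemma chord_eq {c x1 y1 x2 y2 l : F} (h1 : y1 ^ 2 = x1 ^ 3 + c)
    (h2 : y2 ^ 2 = x2 ^ 3 + c) (hne : x1 ≠ x2) (hl : l * (x1 - x2) = y1 - y2) :
    (-(l * ((l ^ 2 - x1 - x2) - x1) + y1)) ^ 2 = (l ^ 2 - x1 - x2) ^ 3 + c := by
  have hd : x1 - x2 ≠ 0 := sub_ne_zero.2 hne
  have hl' : y1 = y2 + l * (x1 - x2) := by rw [hl]; ring
  have key : l * (2 * y2 + l * (x1 - x2)) = x1 ^ 2 + x1 * x2 + x2 ^ 2 := by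
    apply mul_left_cancel₀ hd
    subst hl'
    linear_combination h1 - h2
  subst hl'
  linear_combination h2 + (l^2 - x1 - 2*x2) * key

lemma tangent_eq {c x1 y1 l : F} (h1 : y1 ^ 2 = x1 ^ 3 + c)
    (hl : l * (2 * y1) = 3 * x1 ^ 2) :
    (-(l * ((l ^ 2 - 2 * x1) - x1) + y1)) ^ 2 = (l ^ 2 - 2 * x1) ^ 3 + c := by
  linear_combination h1 + (l^2 - 3*x1) * hl

/-- Scaling homomorphism `(x, y) ↦ (p x, q y)` along a field embedding. -/
noncomputable def scaleHom {K : Type*} [Field K] [CharZero K] [DecidableEq K] (f : F →+* K) {p q : K}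
    (hpq : q ^ 2 = p ^ 3) (hp : p ≠ 0) {c : F} {c' : K} (hc : c ≠ 0) (hcc : c' = q ^ 2 * f c) (hc' : c' ≠ 0) :
    (EC c).Point →+ (EC c').Point where
  toFun P := match P with
    | .zero => 0
    | .some x y h => mk hc' (p * f x) (q * f y) (by
        have := congrArg f ((nonsing_iff hc x y).1 h)
        simp only [map_pow, map_add] at this
        rw [hcc]; linear_combination q ^ 2 * this + (f x)^3 * hpq)
  map_zero' := rfl
  map_add' P Q := by
    have hq : q ≠ 0 := by
      rintro rfl
      exact hp (pow_eq_zero_iff (n := 3) (by norm_num) |>.1 (by rw [← hpq]; ring))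
    rcases pt_cases hc P with rfl | ⟨x1, y1, h1, rfl⟩
    · simp only [zero_add]
    rcases pt_cases hc Q with rfl | ⟨x2, y2, h2, rfl⟩
    · simp only [add_zero]
    rcases add_cases hc h1 h2 with hne | ⟨rfl, rfl⟩ | ⟨rfl, rfl, hy⟩
    · have hl : ((y1 - y2) / (x1 - x2)) * (x1 - x2) = y1 - y2 :=
        div_mul_cancel₀ _ (sub_ne_zero.2 hne)
      generalize (y1 - y2) / (x1 - x2) = l at hl
      rw [mk_add hc hne hl rfl rfl (h3 := chord_eq h1 h2 hne hl)]
      symm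
      have hfl := congrArg f hl
      simp only [map_mul, map_sub] at hfl
      apply mk_add (l := q / p * f l)
      · intro h; exact hne (f.injective (mul_left_cancel₀ hp h))
      · field_simp
        linear_combination hfl
      · simp only [map_pow, map_mul, map_sub]
        rw [mul_pow, div_pow, hpq]
        field_simp
      · simp only [map_pow, map_mul, map_sub, map_neg, map_add]
        field_simp
    · rw [mk_add_neg hc rfl]
      symm
      apply mk_add_neg
      simp
    · have hl : ((3 * x1 ^ 2) / (2 * y1)) * (2 * y1) = 3 * x1 ^ 2 :=
        div_mul_cancel₀ _ (by simpa using hy)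
      generalize (3 * x1 ^ 2) / (2 * y1) = l at hl
      rw [mk_dbl hc hy hl rfl rfl (h3 := tangent_eq h1 hl)]
      symm
      have hfl := congrArg f hl
      simp only [map_mul, map_pow, map_ofNat] at hfl
      apply mk_dbl (l := q / p * f l)
      · simpa using ⟨hq, hy⟩
      · rw [show q / p * f l * (2 * (q * f y1)) = q ^ 2 / p * (f l * (2 * f y1)) by ring, hfl, hpq]
        field_simp
      · simp only [map_pow, map_mul, map_sub, map_ofNat]
        rw [mul_pow, div_pow, hpq]
        field_simp
      · simp only [map_pow, map_mul, map_sub, map_neg, map_add, map_ofNat]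
        field_simp

lemma scaleHom_mk {K : Type*} [Field K] [CharZero K] [DecidableEq K] (f : F →+* K) {p q : K}
    (hpq : q ^ 2 = p ^ 3) (hp : p ≠ 0) {c : F} {c' : K} (hc : c ≠ 0) (hcc : c' = q ^ 2 * f c) (hc' : c' ≠ 0)
    {x y : F} (h) (h') :
    scaleHom f hpq hp hc hcc hc' (mk hc x y h) = mk hc' (p * f x) (q * f y) h' := rfl

end basic
end AM

set_option linter.unusedSectionVars false
set_option linter.unusedVariables false
namespace AM
open WeierstrassCurve WeierstrassCurve.Affine

lemma exists_om : ∃ w : ℂ, w ^ 2 + w + 1 = 0 := by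
  have := IsAlgClosed.exists_pow_nat_eq (-3 : ℂ) (n := 2) (by norm_num)
  obtain ⟨s, hs⟩ := this
  exact ⟨(-1 + s) / 2, by linear_combination hs / 4⟩

/-- primitive cube root of unity -/
noncomputable def om : ℂ := exists_om.choose
lemma om_eq : om ^ 2 + om + 1 = 0 := exists_om.choose_spec
lemma om_ne : om ≠ 0 := by
  intro h; have := om_eq; rw [h] at this; simp at this
lemma om3 : om ^ 3 = 1 := by linear_combination (om - 1) * om_eq

section theta
variable {c : ℂ} (hc : c ≠ 0)

/-- multiplication by ω -/
noncomputable def Wh : (EC c).Point →+ (EC c).Point :=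
  scaleHom (RingHom.id ℂ) (p := om) (q := 1) (by rw [om3]; ring) om_ne hc (by simp) hc

lemma Wh_mk {x y : ℂ} (h) (h') : Wh hc (mk hc x y h) = mk hc (om * x) y h' := by
  unfold Wh
  rw [scaleHom_mk]
  · apply mk_congr <;> simp
  · rw [RingHom.id_apply, RingHom.id_apply, mul_pow om, om3]; linear_combination h

lemma Wh_sum (P : (EC c).Point) : P + Wh hc P + Wh hc (Wh hc P) = 0 := by
  rcases pt_cases hc P with rfl | ⟨x, y, h, rfl⟩
  · simp
  · have h1 : y ^ 2 = (om * x) ^ 3 + c := by rw [mul_pow, om3]; linear_combination h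
    have h2 : y ^ 2 = (om * (om * x)) ^ 3 + c := by rw [mul_pow om, om3]; linear_combination h1
    have h3 : (-y) ^ 2 = (om * (om * x)) ^ 3 + c := by rw [neg_sq, h2]
    rw [Wh_mk hc h h1, Wh_mk hc h1 h2]
    have : mk hc x y h + mk hc (om * x) y h1 = mk hc (om * (om * x)) (-y) h3 := by
      by_cases hx : x = 0
      · subst hx
        have hy : y ≠ 0 := by
          rintro rfl; apply hc; simpa using h.symm
        have e : mk hc (om * 0) y h1 = mk hc 0 y h := mk_congr hc (by simp) rfl
        rw [e]
        apply mk_dbl hc hy (l := 0) <;> simp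
      · apply mk_add hc (l := 0)
        · intro h
          have : om = 1 := by
            apply mul_right_cancel₀ hx; rw [← h, one_mul]
          have := om_eq
          rw [‹om = 1›] at this; norm_num at this
        · simp
        · linear_combination x * om_eq
        · simp
    rw [this]
    apply mk_add_neg
    simp

/-- multiplication by √-3 -/
noncomputable def Th : (EC c).Point →+ (EC c).Point := Wh hc - (Wh hc).comp (Wh hc)

lemma Wh3 (P : (EC c).Point) : Wh hc (Wh hc (Wh hc P)) = P := by
  have h1 := Wh_sum hc P
  have h2 := Wh_sum hc (Wh hc P)
  have : P - Wh hc (Wh hc (Wh hc P)) = 0 := by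
    rw [← sub_eq_zero.2 (h1.trans h2.symm)]; abel
  exact (sub_eq_zero.1 this).symm

lemma Th_Th (P : (EC c).Point) : Th hc (Th hc P) = -((3 : ℕ) • P) := by
  simp only [Th, AddMonoidHom.sub_apply, AddMonoidHom.comp_apply, map_sub, Wh3]
  have h1 := Wh_sum hc P
  have h2 : Wh hc (Wh hc P) = - (P + Wh hc P) := (neg_eq_of_add_eq_zero_right h1).symm
  rw [h2]; abel

lemma Th_mk_zero {y : ℂ} (h) : Th hc (mk hc 0 y h) = 0 := by
  simp only [Th, AddMonoidHom.sub_apply, AddMonoidHom.comp_apply]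
  have h1 : Wh hc (mk hc 0 y h) = mk hc 0 y h := by
    rw [Wh_mk hc h (by simpa using h)]; exact mk_congr hc (by simp) rfl
  rw [h1, h1, sub_self]

lemma Th_mk {x y x3 y3 l : ℂ} {h h3} (hx : x ≠ 0) (hl : l * ((2 * om + 1) * x) = 2 * y)
    (hx3 : x3 = l ^ 2 + x) (hy3 : y3 = -(l * (x3 - om * x) + y)) :
    Th hc (mk hc x y h) = mk hc x3 y3 h3 := by
  have h1 : y ^ 2 = (om * x) ^ 3 + c := by rw [mul_pow, om3]; linear_combination h
  have h2 : y ^ 2 = (om * (om * x)) ^ 3 + c := by rw [mul_pow om, om3]; linear_combination h1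
  simp only [Th, AddMonoidHom.sub_apply, AddMonoidHom.comp_apply]
  rw [Wh_mk hc h h1, Wh_mk hc h1 h2, sub_eq_add_neg, neg_mk]
  apply mk_add hc (l := l)
  · intro h
    have h' : (1 - om) * (om * x) = 0 := by linear_combination h
    have : om = 1 := by
      rcases mul_eq_zero.1 h' with h | h
      · linear_combination -h
      · exact absurd h (mul_ne_zero om_ne hx)
    have := om_eq
    rw [‹om = 1›] at this; norm_num at this
  · linear_combination hl - l * x * om_eq
  · rw [hx3]; linear_combination x * om_eq
  · exact hy3

end theta

section psi
variable {c : ℚ} (hc : c ≠ 0)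

lemma castC_ne (hc : c ≠ 0) : (c : ℂ) ≠ 0 := by exact_mod_cast hc
lemma m27_ne (hc : c ≠ 0) : -27 * c ≠ 0 := mul_ne_zero (by norm_num) hc

/-- inclusion into the complex points -/
noncomputable def io : (EC c).Point →+ (EC (c : ℂ)).Point :=
  scaleHom (algebraMap ℚ ℂ) (p := 1) (q := 1) (by norm_num) one_ne_zero hc (by simp) (castC_ne hc)

lemma castC_eq {x y : ℚ} (h : y ^ 2 = x ^ 3 + c) : (y : ℂ) ^ 2 = (x : ℂ) ^ 3 + (c : ℂ) := by
  exact_mod_cast h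

lemma io_mk {x y : ℚ} (h) : io hc (mk hc x y h) = mk (castC_ne hc) (x : ℂ) (y : ℂ) (castC_eq h) := by
  unfold io
  rw [scaleHom_mk (h' := by simpa using castC_eq h)]
  apply mk_congr <;> simp

lemma io_inj : Function.Injective (io hc) := by
  rw [injective_iff_map_eq_zero]
  intro P hP
  rcases pt_cases hc P with rfl | ⟨x, y, h, rfl⟩
  · rfl
  · rw [io_mk] at hP
    exact absurd hP (mk_ne_zero _ _)

/-- twist map -/
noncomputable def mu : (EC ((-27 * c : ℚ) : ℂ)).Point →+ (EC (c : ℂ)).Point :=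
  scaleHom (RingHom.id ℂ) (p := -1/3) (q := (2 * om + 1) / 9)
    (by linear_combination (4/81) * om_eq) (by norm_num) (castC_ne (m27_ne hc))
    (by simp only [RingHom.id_apply]; push_cast; linear_combination (4 * c / 3 )* om_eq) (castC_ne hc)

lemma mu_mk {x y : ℂ} (h) (h') : mu hc (mk (castC_ne (m27_ne hc)) x y h) =
    mk (castC_ne hc) (-x/3) ((2 * om + 1) * y / 9) h' := by
  unfold mu
  rw [scaleHom_mk]
  · apply mk_congr
    · simp; ring
    · simp; ring
  · simp only [RingHom.id_apply]; linear_combination h'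

lemma mu_eq {x y : ℂ} (h : y ^ 2 = x ^ 3 + ((-27 * c : ℚ) : ℂ)) :
    ((2 * om + 1) * y / 9) ^ 2 = (-x/3) ^ 3 + (c : ℂ) := by
  push_cast at h
  linear_combination (-1/27) * h + (4 * y ^ 2 / 81) * om_eq

lemma mu_Wh (P) : mu hc (Wh (castC_ne (m27_ne hc)) P) = Wh (castC_ne hc) (mu hc P) := by
  rcases pt_cases (castC_ne (m27_ne hc)) P with rfl | ⟨x, y, h, rfl⟩
  · simp
  · have h1 : y ^ 2 = (om * x) ^ 3 + ((-27 * c : ℚ) : ℂ) := by rw [mul_pow, om3]; linear_combination h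
    rw [Wh_mk _ h h1, mu_mk hc h1 (mu_eq h1), mu_mk hc h (mu_eq h), Wh_mk]
    · apply mk_congr
      · ring
      · rfl
    · have := mu_eq h1
      linear_combination this

lemma mu_Th (P) : mu hc (Th (castC_ne (m27_ne hc)) P) = Th (castC_ne hc) (mu hc P) := by
  simp only [Th, AddMonoidHom.sub_apply, AddMonoidHom.comp_apply, map_sub, mu_Wh]

lemma psi_eq {x y : ℚ} (hx : x ≠ 0) (h : y ^ 2 = x ^ 3 + -27 * c) :
    (2 * y / (3 * x) * (4 * y ^ 2 / (9 * x ^ 2) - x / 3) - y / 9) ^ 2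
      = (4 * y ^ 2 / (9 * x ^ 2) - x / 3) ^ 3 + c := by
  have : c = (x ^ 3 - y ^ 2) / 27 := by linear_combination (1/27) * h
  subst this
  field_simp
  ring

lemma psi_mk_C {x y : ℚ} (hx : x ≠ 0) (h : y ^ 2 = x ^ 3 + -27 * c) :
    Th (castC_ne hc) (mu hc (io (m27_ne hc) (mk (m27_ne hc) x y h))) = io hc (mk hc _ _ (psi_eq hx h)) := by
  have hx' : (x : ℂ) ≠ 0 := by exact_mod_cast hx
  rw [io_mk, io_mk, mu_mk _ _ (mu_eq (castC_eq h))]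
  apply Th_mk (l := -2 * y / (3 * x))
  · exact div_ne_zero (neg_ne_zero.2 hx') (by norm_num)
  · field_simp; ring
  · push_cast; field_simp; ring
  · push_cast; field_simp; ring

lemma exists_psi (T : (EC (-27 * c)).Point) :
    ∃ P, io hc P = Th (castC_ne hc) (mu hc (io (m27_ne hc) T)) := by
  rcases pt_cases (m27_ne hc) T with rfl | ⟨x, y, h, rfl⟩
  · exact ⟨0, by simp⟩
  · by_cases hx : x = 0
    · subst hx
      refine ⟨0, ?_⟩
      rw [map_zero, io_mk, mu_mk _ _ (mu_eq (castC_eq h))]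
      have h' := mu_eq (castC_eq h)
      have e : mk (castC_ne hc) (-((0 : ℚ) : ℂ) / 3) ((2 * om + 1) * (y : ℂ) / 9) h' =
        mk (castC_ne hc) 0 ((2 * om + 1) * (y : ℂ) / 9) (by simpa using h') := mk_congr _ (by simp) rfl
      rw [e, Th_mk_zero]
    · exact ⟨_, (psi_mk_C hc hx h).symm⟩

/-- the 3-isogeny -/
noncomputable def psi : (EC (-27 * c)).Point →+ (EC c).Point :=
  AddMonoidHom.mk' (fun T => (exists_psi hc T).choose) (by
    intro S T
    apply io_inj hc
    rw [(exists_psi hc (S + T)).choose_spec, map_add, map_add, map_add, map_add,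
      (exists_psi hc S).choose_spec, (exists_psi hc T).choose_spec])

lemma io_psi (T) : io hc (psi hc T) = Th (castC_ne hc) (mu hc (io (m27_ne hc) T)) :=
  (exists_psi hc T).choose_spec

lemma psi_mk {x y : ℚ} (hx : x ≠ 0) (h : y ^ 2 = x ^ 3 + -27 * c) :
    psi hc (mk (m27_ne hc) x y h) = mk hc _ _ (psi_eq hx h) := by
  apply io_inj hc
  rw [io_psi, psi_mk_C hc hx]

/-- `E_c → E_c1 with c1 = 729 c` -/
noncomputable def jj : (EC c).Point →+ (EC (-27 * (-27 * c))).Point :=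
  scaleHom (RingHom.id ℚ) (p := 9) (q := 27) (by norm_num) (by norm_num) hc
    (by simp only [RingHom.id_apply]; ring) (m27_ne (m27_ne hc))

lemma psi_psi (P : (EC c).Point) : psi hc (psi (m27_ne hc) (jj hc P)) = (3 : ℕ) • P := by
  apply io_inj hc
  rw [io_psi, io_psi, mu_Th, Th_Th, map_nsmul]
  rw [← neg_nsmul]
  congr 1
  rcases pt_cases hc P with rfl | ⟨x, y, h, rfl⟩
  · simp
  · have e : jj hc (mk hc x y h) = mk (m27_ne (m27_ne hc)) (9 * x) (27 * y) (by linear_combination 729 * h) := rfl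
    rw [e, io_mk, io_mk, mu_mk _ _ (mu_eq (castC_eq _)), mu_mk _ _ (mu_eq (mu_eq (castC_eq _))), neg_mk]
    · apply mk_congr
      · push_cast; ring
      · push_cast; linear_combination (-4 * (y : ℂ) / 3) * om_eq
    all_goals linear_combination 729 * h

lemma D1 {x y s t : ℚ} (h : y ^ 2 = x ^ 3 + c) (hy : y = s ^ 3 + 3 * s * t ^ 2 * c)
    (h1 : 1 = 3 * s ^ 2 * t + t ^ 3 * c) : mk hc x y h ∈ (psi hc).range := by
  have ht : t ≠ 0 := by rintro rfl; norm_num at h1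
  have hT : (9 * s / t) ^ 2 = (3 / t) ^ 3 + -27 * c := by
    field_simp; linear_combination -27 * h1
  refine ⟨-mk (m27_ne hc) (3/t) (9 * s / t) hT, ?_⟩
  rw [map_neg, psi_mk hc (by positivity), neg_mk]
  have hx3 : 4 * (9 * s / t) ^ 2 / (9 * (3 / t) ^ 2) - (3 / t) / 3 = s ^ 2 - c * t ^ 2 := by
    field_simp; linear_combination -9 * h1
  have hx : s ^ 2 - c * t ^ 2 = x := by
    have : (s ^ 2 - c * t ^ 2) ^ 3 = x ^ 3 := by
      have : x ^ 3 = y ^ 2 - c * (3 * s ^ 2 * t + t ^ 3 * c) ^ 2 := by rw [← h1]; linear_combination -h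
      rw [this, hy]; ring
    exact (Odd.strictMono_pow (by decide : Odd 3)).injective this
  apply mk_congr
  · rw [hx3, hx]
  · rw [hx3, hy]; field_simp
    linear_combination 9 * s * h1
end psi
end AM

set_option linter.unusedSectionVars false
set_option linter.unusedVariables false
namespace AM

/-! ### abstract canonical heights -/
section canon
variable {G : Type*} [AddCommGroup G]

lemma exists_canon (h : G → ℝ) (h0 : ∀ P, 0 ≤ h P) (C C' : ℝ)
    (hd : ∀ P, |h (P + P) - 4 * h P| ≤ C)
    (hp : ∀ P Q, h (P + Q) + h (P - Q) ≤ 2 * h P + 2 * h Q + C') :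
    ∃ g : G → ℝ, (∀ P, 0 ≤ g P) ∧ (∀ P, |g P - h P| ≤ C) ∧
      ∀ P Q, g (P + Q) + g (P - Q) = 2 * g P + 2 * g Q := by
  have hC : 0 ≤ C := (abs_nonneg _).trans (hd 0)
  let a : G → ℕ → ℝ := fun P k => h ((2 ^ k : ℕ) • P) / 4 ^ k
  have hstep : ∀ P k, dist (a P k) (a P (k+1)) ≤ (C / 4) * (1/4) ^ k := by
    intro P k
    have := hd ((2 ^ k : ℕ) • P)
    have e : (2 ^ (k+1) : ℕ) • P = (2 ^ k : ℕ) • P + (2 ^ k : ℕ) • P := by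
      rw [pow_succ, mul_comm, mul_nsmul', two_nsmul]
    simp only [a]
    rw [Real.dist_eq, abs_sub_comm, e]
    have e2 : h ((2 ^ k : ℕ) • P + (2 ^ k : ℕ) • P) / 4 ^ (k+1) - h ((2 ^ k : ℕ) • P) / 4 ^ k
      = (h ((2 ^ k : ℕ) • P + (2 ^ k : ℕ) • P) - 4 * h ((2 ^ k : ℕ) • P)) / 4 ^ (k+1) := by
      field_simp
      ring
    rw [e2, abs_div, abs_of_pos (by positivity : (0:ℝ) < 4 ^ (k+1)), div_le_iff₀ (by positivity)]
    calc _ ≤ C := this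
      _ = _ := by rw [pow_succ, one_div, inv_pow]; field_simp
  have hlim : ∀ P, ∃ l, Filter.Tendsto (a P) Filter.atTop (nhds l) := fun P =>
    cauchySeq_tendsto_of_complete (cauchySeq_of_le_geometric (1/4) (C/4) (by norm_num) (hstep P))
  choose g hg using hlim
  have hbd : ∀ P, |g P - h P| ≤ C := by
    intro P
    have := dist_le_of_le_geometric_of_tendsto₀ (1/4) (C/4) (by norm_num) (hstep P) (hg P)
    have e : a P 0 = h P := by simp [a]
    rw [e, dist_comm, Real.dist_eq] at this
    refine this.trans ?_
    norm_num
    linarith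
  have hle : ∀ P Q, g (P + Q) + g (P - Q) ≤ 2 * g P + 2 * g Q := by
    intro P Q
    have t1 := (hg (P + Q)).add (hg (P - Q))
    have t2 := (((hg P).const_mul 2).add ((hg Q).const_mul 2)).add
      ((tendsto_pow_atTop_nhds_zero_of_lt_one (r := (1/4 : ℝ)) (by norm_num) (by norm_num)).const_mul C')
    rw [mul_zero, add_zero] at t2
    refine le_of_tendsto_of_tendsto' t1 t2 ?_
    intro k
    have := hp ((2 ^ k : ℕ) • P) ((2 ^ k : ℕ) • Q)
    simp only [a]
    rw [nsmul_add, nsmul_sub]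
    rw [← add_div, one_div, inv_pow]
    rw [div_le_iff₀ (by positivity)]
    refine this.trans (le_of_eq ?_)
    field_simp
  have h2 : ∀ P, g (P + P) = 4 * g P := by
    intro P
    have t1 := (hg (P + P))
    have t2 := ((hg P).comp (Filter.tendsto_add_atTop_nat 1)).const_mul 4
    refine tendsto_nhds_unique t1 (t2.congr ?_)
    intro k
    simp only [a, Function.comp]
    have e : (2 ^ (k+1) : ℕ) • P = (2 ^ k : ℕ) • (P + P) := by
      rw [pow_succ, mul_nsmul', two_nsmul]
    rw [e, pow_succ]; field_simp
  refine ⟨g, ?_, hbd, ?_⟩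
  · intro P
    refine ge_of_tendsto' (hg P) fun k => ?_
    simp only [a]; have := h0 ((2 ^ k : ℕ) • P); positivity
  · intro P Q
    apply le_antisymm (hle P Q)
    have := hle (P + Q) (P - Q)
    have e1 : P + Q + (P - Q) = P + P := by abel
    have e2 : P + Q - (P - Q) = Q + Q := by abel
    rw [e1, e2, h2, h2] at this
    linarith


lemma g_zero {g : G → ℝ} (par : ∀ P Q, g (P + Q) + g (P - Q) = 2 * g P + 2 * g Q) : g 0 = 0 := by
  have := par 0 0
  simp at this; linarith

lemma g_two {g : G → ℝ} (par : ∀ P Q, g (P + Q) + g (P - Q) = 2 * g P + 2 * g Q) (P) : g (P + P) = 4 * g P := by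
  have := par P P
  rw [sub_self, g_zero par] at this; linarith

lemma g_neg {g : G → ℝ} (par : ∀ P Q, g (P + Q) + g (P - Q) = 2 * g P + 2 * g Q) (P) : g (-P) = g P := by
  have := par 0 P
  rw [zero_add, zero_sub, g_zero par] at this; linarith

lemma g_three {g : G → ℝ} (par : ∀ P Q, g (P + Q) + g (P - Q) = 2 * g P + 2 * g Q) (P) : g (3 • P) = 9 * g P := by
  have := par (P + P) P
  rw [g_two par, show P + P + P = 3 • P by abel, show P + P - P = P by abel] at this; linarith


lemma g_sub_le {g : G → ℝ} (g0 : ∀ P, 0 ≤ g P) (par : ∀ P Q, g (P + Q) + g (P - Q) = 2 * g P + 2 * g Q) (P Q) : g (P - Q) ≤ 2 * g P + 2 * g Q := by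
  have := par P Q
  have := g0 (P + Q); linarith

lemma g_add_le {g : G → ℝ} (g0 : ∀ P, 0 ≤ g P) (par : ∀ P Q, g (P + Q) + g (P - Q) = 2 * g P + 2 * g Q) (P Q) : g (P + Q) ≤ 2 * g P + 2 * g Q := by
  have := par P Q
  have := g0 (P - Q); linarith


lemma ball_step {g : G → ℝ} (g0 : ∀ P, 0 ≤ g P) (par : ∀ P Q, g (P + Q) + g (P - Q) = 2 * g P + 2 * g Q) 
    (fin : ∀ t, {P | g P ≤ t}.Finite) {S : ℕ} {f : G → Fin S} (hf : ∀ P Q, f P = f Q → ∃ R : G, P - Q = 3 • R)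
    (t : ℝ) : {P | g P ≤ t}.ncard ≤ S * {P | g P ≤ 4 * t / 9}.ncard := by
  classical
  set A := (fin t).toFinset with hA
  set B := (fin (4 * t / 9)).toFinset with hB
  rw [Set.ncard_eq_toFinset_card _ (fin t), Set.ncard_eq_toFinset_card _ (fin (4 * t / 9))]
  rw [← hA, ← hB, mul_comm]
  have : A.card ≤ B.card * (Finset.univ : Finset (Fin S)).card := by
    apply Finset.card_le_mul_card_image_of_maps_to (f := f) (fun _ _ => Finset.mem_univ _)
    intro b _
    rcases (A.filter (fun P => f P = b)).eq_empty_or_nonempty with h | ⟨P0, hP0⟩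
    · rw [h]; simp
    · have hR : ∀ P, f P = b → ∃ R : G, P - P0 = 3 • R := by
        intro P hP
        apply hf
        rw [hP, (Finset.mem_filter.1 hP0).2]
      have : ∀ P ∈ A.filter (fun P => f P = b), ∃ R : G, P - P0 = 3 • R := fun P hP =>
        hR P (Finset.mem_filter.1 hP).2
      choose! r hr using this
      apply Finset.card_le_card_of_injOn r
      · intro P hP
        have hP' := Finset.mem_coe.1 hP
        have h1 : g P ≤ t := by simpa [hA] using (Finset.mem_filter.1 hP').1
        have h2 : g P0 ≤ t := by simpa [hA] using (Finset.mem_filter.1 hP0).1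
        have h3 := g_three par (r P)
        rw [← hr P hP'] at h3
        have h4 := g_sub_le g0 par P P0
        simp only [hB, Set.Finite.coe_toFinset, Set.mem_ofPred_eq]
        linarith
      · intro P hP Q hQ hPQ
        have e1 := hr P (Finset.mem_coe.1 hP)
        have e2 := hr Q (Finset.mem_coe.1 hQ)
        rw [hPQ, ← e2] at e1
        exact sub_left_injective e1
  simpa using this

lemma ball_iter {g : G → ℝ} (g0 : ∀ P, 0 ≤ g P) (par : ∀ P Q, g (P + Q) + g (P - Q) = 2 * g P + 2 * g Q) 
    (fin : ∀ t, {P | g P ≤ t}.Finite) {S : ℕ} {f : G → Fin S} (hf : ∀ P Q, f P = f Q → ∃ R : G, P - Q = 3 • R)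
    (t : ℝ) (j : ℕ) : {P | g P ≤ t}.ncard ≤ S ^ j * {P | g P ≤ (4 / 9) ^ j * t}.ncard := by
  induction j with
  | zero => simp
  | succ j ih =>
    refine ih.trans ?_
    rw [pow_succ, mul_assoc]
    apply Nat.mul_le_mul_left
    refine (ball_step g0 par fin hf _).trans (le_of_eq ?_)
    congr 4
    ext P
    rw [pow_succ]; ring_nf

lemma packing {g : G → ℝ} (g0 : ∀ P, 0 ≤ g P) (par : ∀ P Q, g (P + Q) + g (P - Q) = 2 * g P + 2 * g Q) 
    (fin : ∀ t, {P | g P ≤ t}.Finite) {S : ℕ} {f : G → Fin S} (hf : ∀ P Q, f P = f Q → ∃ R : G, P - Q = 3 • R)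
    (M : ℝ) (hM : 0 < M) (T : Finset G) (h1 : ∀ P ∈ T, g P ≤ 4 * M)
    (h2 : ∀ P ∈ T, ∀ Q ∈ T, P ≠ Q → 2 * M ≤ g (P - Q)) : T.card ≤ S ^ 5 := by
  classical
  have hcard : T.card * {P | g P ≤ M / 3}.ncard ≤ {P | g P ≤ 9 * M}.ncard := by
    set A := (fin (M/3)).toFinset with hA
    set B := (fin (9 * M)).toFinset with hB
    rw [Set.ncard_eq_toFinset_card _ (fin (M/3)), Set.ncard_eq_toFinset_card _ (fin (9 * M))]
    rw [← hA, ← hB, ← Finset.card_product]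
    apply Finset.card_le_card_of_injOn (fun p => p.1 + p.2)
    · rintro ⟨P, R⟩ hp
      have hp' := Finset.mem_product.1 (Finset.mem_coe.1 hp)
      have e1 := h1 P hp'.1
      have e2 : g R ≤ M / 3 := by simpa [hA] using hp'.2
      have := g_add_le g0 par P R
      simp only [hB, Set.Finite.coe_toFinset, Set.mem_ofPred_eq]
      linarith
    · rintro ⟨P, R⟩ hp ⟨Q, R'⟩ hq hpq
      have hp' := Finset.mem_product.1 (Finset.mem_coe.1 hp)
      have hq' := Finset.mem_product.1 (Finset.mem_coe.1 hq)
      have e1 : g R ≤ M / 3 := by simpa [hA] using hp'.2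
      have e2 : g R' ≤ M / 3 := by simpa [hA] using hq'.2
      simp only at hpq
      by_cases hPQ : P = Q
      · subst hPQ
        simpa using hpq
      · exfalso
        have e3 := h2 P hp'.1 Q hq'.1 hPQ
        have e4 : P - Q = R' - R := by
          rw [sub_eq_sub_iff_add_eq_add, hpq, add_comm]
        rw [e4] at e3
        have := g_sub_le g0 par R' R
        linarith
  have h9 : {P | g P ≤ 9 * M}.ncard ≤ S ^ 5 * {P | g P ≤ M / 3}.ncard := by
    refine (ball_iter g0 par fin hf _ 5).trans ?_
    apply Nat.mul_le_mul_left
    apply Set.ncard_le_ncard _ (fin _)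
    intro P hP
    simp only [Set.mem_ofPred_eq] at hP ⊢
    refine hP.trans ?_
    norm_num; linarith
  have hpos : 0 < {P | g P ≤ M / 3}.ncard := by
    rw [Set.ncard_pos (fin _)]
    exact ⟨0, by simp only [Set.mem_ofPred_eq]; rw [g_zero par]; positivity⟩
  exact Nat.le_of_mul_le_mul_right (hcard.trans h9) hpos

end canon
end AM

set_option linter.unusedSectionVars false
set_option linter.unusedVariables false
namespace AM

/-! ### heights on ℚ -/

/-- multiplicative height -/
def HH (z : ℚ) : ℕ := max z.num.natAbs z.den

/-- logarithmic height -/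
noncomputable def hh (z : ℚ) : ℝ := Real.log (HH z)

lemma HH_pos (z : ℚ) : 1 ≤ HH z := le_max_of_le_right z.den_pos
lemma HH_posR (z : ℚ) : (1:ℝ) ≤ HH z := by exact_mod_cast HH_pos z
lemma hh_nonneg (z : ℚ) : 0 ≤ hh z := Real.log_nonneg (HH_posR z)
lemma num_le_HH (z : ℚ) : |z.num| ≤ HH z := by
  rw [Int.abs_eq_natAbs]; exact_mod_cast le_max_left _ _
lemma den_le_HH (z : ℚ) : (z.den : ℤ) ≤ HH z := by exact_mod_cast le_max_right _ _

lemma exists_mult {z : ℚ} {A B : ℤ} (h : z * B = A) : ∃ k : ℤ, A = k * z.num ∧ B = k * z.den := by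
  have hd : (z.den : ℚ) ≠ 0 := by exact_mod_cast z.den_ne_zero
  have h1 : z.num * B = A * z.den := by
    have e : (z.num : ℚ) = z * z.den := (Rat.mul_den_eq_num z).symm
    have : (z.num : ℚ) * B = A * z.den := by rw [e, ← h]; ring
    exact_mod_cast this
  have hc : IsCoprime (z.den : ℤ) z.num := by
    rw [Int.isCoprime_iff_gcd_eq_one]
    have := z.reduced
    rw [Nat.Coprime, Nat.gcd_comm] at this
    simpa [Int.gcd] using this
  have : (z.den : ℤ) ∣ B := by
    apply hc.dvd_of_dvd_mul_left
    rw [h1]; exact Dvd.intro_left _ rfl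
  obtain ⟨k, rfl⟩ := this
  refine ⟨k, ?_, by ring⟩
  have hd' : (z.den : ℤ) ≠ 0 := by exact_mod_cast z.den_ne_zero
  apply mul_right_cancel₀ hd'
  rw [← h1]; ring

lemma HH_le {z : ℚ} {A B : ℤ} (hB : B ≠ 0) (h : z * B = A) {M : ℝ} (hA : |(A:ℝ)| ≤ M) (hBM : |(B:ℝ)| ≤ M) :
    (HH z : ℝ) ≤ M := by
  obtain ⟨k, rfl, rfl⟩ := exists_mult h
  have hk : k ≠ 0 := by rintro rfl; simp at hB
  have hk1 : (1:ℝ) ≤ |(k:ℝ)| := by exact_mod_cast Int.one_le_abs hk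
  push_cast at hA hBM
  rw [abs_mul] at hA hBM
  have e : (HH z : ℝ) = max |(z.num:ℝ)| |(z.den:ℝ)| := by
    rw [HH]; push_cast; rw [Nat.abs_cast]; congr 1
    rw [Nat.cast_natAbs]; push_cast; rfl
  rw [e]
  apply max_le
  · refine le_trans ?_ hA
    exact le_mul_of_one_le_left (abs_nonneg _) hk1
  · refine le_trans ?_ hBM
    exact le_mul_of_one_le_left (abs_nonneg _) hk1

lemma le_HH {z : ℚ} {A B : ℤ} (h : z * B = A) : ∃ k : ℤ, k ∣ A ∧ k ∣ B ∧ 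
    (|(A:ℝ)| ≤ |(k:ℝ)| * HH z) ∧ (|(B:ℝ)| ≤ |(k:ℝ)| * HH z) := by
  obtain ⟨k, rfl, rfl⟩ := exists_mult h
  refine ⟨k, Dvd.intro _ rfl, Dvd.intro _ rfl, ?_, ?_⟩
  · push_cast; rw [abs_mul]
    apply mul_le_mul_of_nonneg_left _ (abs_nonneg _)
    exact_mod_cast num_le_HH z
  · push_cast; rw [abs_mul]
    apply mul_le_mul_of_nonneg_left _ (abs_nonneg _)
    rw [Nat.abs_cast]
    exact_mod_cast den_le_HH z

lemma abs_num_real (z : ℚ) : |(z.num:ℝ)| ≤ HH z := by exact_mod_cast num_le_HH z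
lemma abs_den_real (z : ℚ) : |((z.den : ℤ):ℝ)| ≤ HH z := by
  have := den_le_HH z
  push_cast; rw [Nat.abs_cast]; exact_mod_cast this

lemma num_den_coprime (z : ℚ) : IsCoprime z.num (z.den : ℤ) := by
  rw [Int.isCoprime_iff_gcd_eq_one]
  have := z.reduced
  rw [Nat.Coprime] at this
  simpa [Int.gcd] using this

/-- duplication constant -/
noncomputable def Cd : ℝ := Real.log 24050368

lemma abs_cubic_le {a b H : ℝ} (ha : |a| ≤ H) (hb : |b| ≤ H) (c0 c1 c2 c3 : ℝ) :
    |c0 * b ^ 3 + c1 * a * b ^ 2 + c2 * a ^ 2 * b + c3 * a ^ 3| ≤ (|c0| + |c1| + |c2| + |c3|) * H ^ 3 := by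
  have hH : 0 ≤ H := (abs_nonneg _).trans ha
  have m : ∀ x y z c : ℝ, |x| ≤ H → |y| ≤ H → |z| ≤ H → |c * (x * y * z)| ≤ |c| * H ^ 3 := by
    intro x y z c hx hy hz
    rw [abs_mul, abs_mul, abs_mul]
    apply mul_le_mul_of_nonneg_left _ (abs_nonneg _)
    calc |x| * |y| * |z| ≤ H * H * H := by gcongr
      _ = H ^ 3 := by ring
  have e : c0 * b ^ 3 + c1 * a * b ^ 2 + c2 * a ^ 2 * b + c3 * a ^ 3 =
    c0 * (b * b * b) + c1 * (a * b * b) + c2 * (a * a * b) + c3 * (a * a * a) := by ring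
  rw [e]
  have := m b b b c0 hb hb hb
  have := m a b b c1 ha hb hb
  have := m a a b c2 ha ha hb
  have := m a a a c3 ha ha ha
  refine (abs_add_le _ _).trans ?_
  refine (add_le_add_left (abs_add_le _ _) _).trans ?_
  refine (add_le_add_left (add_le_add_left (abs_add_le _ _) _) _).trans ?_
  linarith

lemma dup_height {z w : ℚ} (hz : z ≠ -1) (h : w * (64 * (z + 1) ^ 3) = z * (z - 8) ^ 3) :
    |hh w - 4 * hh z| ≤ Cd := by
  set a := z.num with ha
  set b : ℤ := (z.den : ℤ) with hb
  have hb0 : b ≠ 0 := by rw [hb]; exact_mod_cast z.den_ne_zero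
  have hbq : (b : ℚ) ≠ 0 := by exact_mod_cast hb0
  have hzab : z * b = a := by rw [hb, ha]; push_cast; exact Rat.mul_den_eq_num z
  have hab : a + b ≠ 0 := by
    intro h0
    apply hz
    apply mul_right_cancel₀ hbq
    rw [hzab]
    have : (a : ℚ) + b = 0 := by exact_mod_cast h0
    linear_combination this
  have hw : w * ((64 * b * (a + b) ^ 3 : ℤ) : ℚ) = ((a * (a - 8 * b) ^ 3 : ℤ) : ℚ) := by
    push_cast; rw [← hzab]
    linear_combination (b : ℚ) ^ 4 * h
  have hB : 64 * b * (a + b) ^ 3 ≠ 0 := by positivity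
  have haH : |(a:ℝ)| ≤ HH z := abs_num_real z
  have hbH : |(b:ℝ)| ≤ HH z := abs_den_real z
  have hH1 := HH_posR z
  set H : ℝ := (HH z : ℝ) with hH
  have hup : (HH w : ℝ) ≤ 729 * H ^ 4 := by
    apply HH_le hB hw
    · push_cast; rw [abs_mul, abs_pow]
      have : |(a:ℝ) - 8 * b| ≤ 9 * H := by
        refine (abs_sub _ _).trans ?_
        rw [abs_mul, abs_of_pos (by norm_num : (0:ℝ) < 8)]; linarith
      calc |(a:ℝ)| * |(a:ℝ) - 8 * b| ^ 3 ≤ H * (9 * H) ^ 3 := by gcongr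
        _ = _ := by ring
    · push_cast; rw [abs_mul, abs_mul, abs_pow]
      have : |(a:ℝ) + b| ≤ 2 * H := by
        refine (abs_add_le _ _).trans ?_
        linarith
      calc |(64:ℝ)| * |(b:ℝ)| * |(a:ℝ) + b| ^ 3 ≤ 64 * H * (2 * H) ^ 3 := by
            rw [abs_of_pos (by norm_num : (0:ℝ) < 64)]; gcongr
        _ ≤ _ := by nlinarith [pow_pos (by linarith : (0:ℝ) < H) 4]
  have hlow : H ^ 4 ≤ 24050368 * HH w := by
    obtain ⟨k, hkA, hkB, hA', hB'⟩ := le_HH hw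
    set A : ℤ := a * (a - 8 * b) ^ 3 with hAdef
    set B : ℤ := 64 * b * (a + b) ^ 3 with hBdef
    have id1 : 1259712 * a ^ 7 = 64 * (19456 * b ^ 3 + 58496 * a * b ^ 2 + 58696 * a ^ 2 * b + 19683 * a ^ 3) * A
      + 64 * (0 * b ^ 3 + 155648 * a * b ^ 2 + (-57344) * a ^ 2 * b + 6464 * a ^ 3) * B := by
      rw [hAdef, hBdef]; ring
    have id2 : 1259712 * b ^ 7 = (6464 * b ^ 3 + 7168 * a * b ^ 2 + 2432 * a ^ 2 * b + 0 * a ^ 3) * A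
      + (19683 * b ^ 3 + (-7337) * a * b ^ 2 + 914 * a ^ 2 * b + (-38) * a ^ 3) * B := by
      rw [hAdef, hBdef]; ring
    have hk : k ∣ 1259712 := by
      have d1 : k ∣ 1259712 * a ^ 7 := by
        rw [id1]; exact dvd_add (Dvd.dvd.mul_left hkA _) (Dvd.dvd.mul_left hkB _)
      have d2 : k ∣ 1259712 * b ^ 7 := by
        rw [id2]; exact dvd_add (Dvd.dvd.mul_left hkA _) (Dvd.dvd.mul_left hkB _)
      obtain ⟨u, v, huv⟩ := (num_den_coprime z).pow (m := 7) (n := 7)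
      have : (1259712 : ℤ) = u * (1259712 * a ^ 7) + v * (1259712 * b ^ 7) := by
        linear_combination (-1259712) * huv
      rw [this]
      exact dvd_add (Dvd.dvd.mul_left d1 _) (Dvd.dvd.mul_left d2 _)
    have hkR : |(k:ℝ)| ≤ 1259712 := by
      have := Int.le_of_dvd (by norm_num) ((abs_dvd k _).2 hk)
      exact_mod_cast this
    have hw0 : (0:ℝ) ≤ HH w := Nat.cast_nonneg _
    have hA2 : |(A:ℝ)| ≤ 1259712 * HH w := hA'.trans (by gcongr)
    have hB2 : |(B:ℝ)| ≤ 1259712 * HH w := hB'.trans (by gcongr)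
    have key : ∀ x : ℝ, |x| ≤ 24050368 * H ^ 3 * HH w → True := fun _ _ => trivial
    have r1 : 1259712 * |(a:ℝ)| ^ 7 ≤ 24050368 * H ^ 3 * (1259712 * HH w) := by
      have e : 1259712 * |(a:ℝ)| ^ 7 = |((1259712 * a ^ 7 : ℤ):ℝ)| := by
        push_cast; rw [abs_mul, abs_pow]; norm_num
      rw [e, id1]; push_cast
      have t1 := abs_cubic_le haH hbH 19456 58496 58696 19683
      have t2 := abs_cubic_le haH hbH 0 155648 (-57344) 6464
      norm_num at t1 t2
      refine (abs_add_le _ _).trans ?_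
      rw [abs_mul, abs_mul, abs_mul, abs_mul (64:ℝ)]
      norm_num
      calc _ ≤ 64 * (156331 * H ^ 3) * (1259712 * HH w) + 64 * (219456 * H ^ 3) * (1259712 * HH w) := by
            gcongr
        _ = _ := by ring
    have r2 : 1259712 * |(b:ℝ)| ^ 7 ≤ 24050368 * H ^ 3 * (1259712 * HH w) := by
      have e : 1259712 * |(b:ℝ)| ^ 7 = |((1259712 * b ^ 7 : ℤ):ℝ)| := by
        push_cast; rw [abs_mul, abs_pow]; norm_num
      rw [e, id2]; push_cast
      have t1 := abs_cubic_le haH hbH 6464 7168 2432 0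
      have t2 := abs_cubic_le haH hbH 19683 (-7337) 914 (-38)
      norm_num at t1 t2
      refine (abs_add_le _ _).trans ?_
      rw [abs_mul, abs_mul]
      norm_num
      calc _ ≤ (16064 * H ^ 3) * (1259712 * HH w) + (27972 * H ^ 3) * (1259712 * HH w) := by
            gcongr
        _ ≤ _ := by
            have : 0 ≤ H ^ 3 * (1259712 * HH w) := by positivity
            nlinarith
    have r3 : H ^ 7 ≤ 24050368 * H ^ 3 * HH w := by
      have e : H = |(a:ℝ)| ∨ H = |(b:ℝ)| := by
        rw [hH, HH, ha, hb]
        rcases max_choice z.num.natAbs z.den with h | h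
        · left; rw [h, Nat.cast_natAbs]; push_cast; rfl
        · right; rw [h]; push_cast; rw [Nat.abs_cast]
      rcases e with e | e
      · rw [← e] at r1; linarith
      · rw [← e] at r2; linarith
    have : H ^ 3 * H ^ 4 ≤ H ^ 3 * (24050368 * HH w) := by
      calc _ = H ^ 7 := by ring
        _ ≤ _ := r3
        _ = _ := by ring
    exact le_of_mul_le_mul_left this (by positivity)
  have hwp : (0:ℝ) < HH w := by have := HH_posR w; linarith
  have l1 := Real.log_le_log hwp hup
  have l2 := Real.log_le_log (by positivity) hlow
  rw [Real.log_mul (by norm_num) (by positivity), Real.log_pow] at l1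
  rw [Real.log_mul (by norm_num) (by positivity), Real.log_pow] at l2
  have l3 : Real.log 729 ≤ Cd := Real.log_le_log (by norm_num) (by norm_num)
  push_cast at l1 l2
  unfold hh
  rw [← hH]
  rw [abs_le]
  constructor
  · unfold Cd; linarith
  · linarith

end AM

set_option linter.unusedSectionVars false
set_option linter.unusedVariables false
namespace AM
open WeierstrassCurve WeierstrassCurve.Affine

/-- the `z`-coordinate `x³/c` -/
def zf {c : ℚ} (P : (EC c).Point) : ℚ := match P with
  | .zero => 0
  | .some x _ _ => x ^ 3 / c

/-- naive height of points -/
noncomputable def hz {c : ℚ} (P : (EC c).Point) : ℝ := hh (zf P)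

lemma hh_zero : hh 0 = 0 := by simp [hh, HH]
lemma hh_neg_one : hh (-1) = 0 := by simp [hh, HH]

section
variable {c : ℚ} (hc : c ≠ 0)
lemma zf_zero : zf (0 : (EC c).Point) = 0 := rfl
lemma hz_zero : hz (0 : (EC c).Point) = 0 := hh_zero
lemma zf_mk {x y : ℚ} (h) : zf (mk hc x y h) = x ^ 3 / c := rfl
lemma hz_mk {x y : ℚ} (h) : hz (mk hc x y h) = hh (x ^ 3 / c) := rfl
lemma hz_nonneg (P : (EC c).Point) : 0 ≤ hz P := hh_nonneg _
lemma hz_neg {c : ℚ} (hc : c ≠ 0) (P : (EC c).Point) : hz (-P) = hz P := by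
  rcases pt_cases hc P with rfl | ⟨x, y, h, rfl⟩
  · simp
  · rw [neg_mk]; rfl
lemma Cd_nonneg : 0 ≤ Cd := Real.log_nonneg (by norm_num)

lemma hz_dbl {c : ℚ} (hc : c ≠ 0) (P : (EC c).Point) : |hz (P + P) - 4 * hz P| ≤ Cd := by
  rcases pt_cases hc P with rfl | ⟨x, y, h, rfl⟩
  · simp [hz_zero, Cd_nonneg]
  · by_cases hy : y = 0
    · subst hy
      rw [mk_add_neg hc (by simp), hz_zero, hz_mk]
      have : x ^ 3 / c = -1 := by
        rw [div_eq_iff hc]; linear_combination -h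
      rw [this, hh_neg_one]; simp [Cd_nonneg]
    · have hl : ((3 * x ^ 2) / (2 * y)) * (2 * y) = 3 * x ^ 2 :=
        div_mul_cancel₀ _ (by simpa using hy)
      rw [mk_dbl hc hy hl rfl rfl (h3 := tangent_eq h hl), hz_mk, hz_mk]
      apply dup_height
      · intro h0
        rw [div_eq_iff hc] at h0
        apply hy
        have : y ^ 2 = 0 := by rw [h, h0]; ring
        simpa using this
      · have e : x ^ 3 / c + 1 = y ^ 2 / c := by rw [h]; field_simp
        rw [e]
        have e2 : c = y ^ 2 - x ^ 3 := by rw [h]; ring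
        have e3 : y ^ 2 - x ^ 3 ≠ 0 := by rw [← e2]; exact hc
        rw [e2]
        field_simp
        ring

lemma HH_pow3 (x : ℚ) : HH (x ^ 3) = HH x ^ 3 := by
  unfold HH
  rw [Rat.num_pow, Rat.den_pow, Int.natAbs_pow]
  symm
  exact (Monotone.map_max (f := fun k : ℕ => k ^ 3) (fun a b h => Nat.pow_le_pow_left h 3))

lemma hh_pow3 (x : ℚ) : hh (x ^ 3) = 3 * hh x := by
  rw [hh, HH_pow3]; push_cast; rw [Real.log_pow]; rfl
end

section int
variable {n : ℤ} (hn : n ≠ 0)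

lemma nq (hn : n ≠ 0) : (n : ℚ) ≠ 0 := by exact_mod_cast hn
lemma nabs (hn : n ≠ 0) : (1:ℝ) ≤ |(n:ℝ)| := by exact_mod_cast Int.one_le_abs hn
lemma mul_den' (z : ℚ) : z * ((z.den : ℤ) : ℚ) = z.num := by push_cast; exact Rat.mul_den_eq_num z

lemma hh_div_le (hn : n ≠ 0) (w : ℚ) : hh (w / n) ≤ hh w + Real.log |(n:ℝ)| := by
  have h1 := nabs hn
  have hw := HH_posR w
  have : (HH (w / n) : ℝ) ≤ HH w * |(n:ℝ)| := by
    have := nq hn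
    apply HH_le (A := w.num) (B := w.den * n) (by have := w.den_ne_zero; positivity)
    · push_cast; rw [← Rat.mul_den_eq_num w]; field_simp
    · have := abs_num_real w; nlinarith
    · have := abs_den_real w
      push_cast at this ⊢; rw [abs_mul]
      gcongr
  unfold hh
  rw [← Real.log_mul (by positivity) (by positivity)]
  exact Real.log_le_log (by have := HH_posR (w / n); linarith) this

lemma hh_mul_le (hn : n ≠ 0) (w : ℚ) : hh (w * n) ≤ hh w + Real.log |(n:ℝ)| := by
  have h1 := nabs hn
  have hw := HH_posR w
  have : (HH (w * n) : ℝ) ≤ HH w * |(n:ℝ)| := by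
    have := nq hn
    apply HH_le (A := w.num * n) (B := w.den) (by have := w.den_ne_zero; positivity)
    · push_cast; rw [← Rat.mul_den_eq_num w]; ring
    · have := abs_num_real w
      push_cast; rw [abs_mul]; gcongr
    · have := abs_den_real w; nlinarith
  unfold hh
  rw [← Real.log_mul (by positivity) (by positivity)]
  exact Real.log_le_log (by have := HH_posR (w * n); linarith) this

lemma hz_le {x y : ℚ} (h) : hz (mk (nq hn) x y h) ≤ 3 * hh x + Real.log |(n:ℝ)| := by
  rw [hz_mk, ← hh_pow3]; exact hh_div_le hn _

lemma le_hz {x y : ℚ} (h) : 3 * hh x ≤ hz (mk (nq hn) x y h) + Real.log |(n:ℝ)| := by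
  rw [hz_mk, ← hh_pow3]
  have := hh_mul_le hn (x ^ 3 / n)
  rwa [div_mul_cancel₀ _ (nq hn)] at this

/-- Gauss type lemma -/
lemma gauss_height {x y : ℚ} {D S T : ℤ} (hD : D ≠ 0) (hS : D * (x + y) = S) (hT : D * (x * y) = T)
    {M : ℝ} (h1 : |(D:ℝ)| ≤ M) (h2 : |(S:ℝ)| ≤ M) (h3 : |(T:ℝ)| ≤ M) :
    (HH x : ℝ) * HH y ≤ 2 * M := by
  set a := x.num with ha
  set b : ℤ := (x.den : ℤ) with hb
  set e := y.num with he
  set d : ℤ := (y.den : ℤ) with hd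
  have hx : x * b = a := mul_den' x
  have hy : y * d = e := mul_den' y
  have hb0 : b ≠ 0 := by rw [hb]; exact_mod_cast x.den_ne_zero
  have hd0 : d ≠ 0 := by rw [hd]; exact_mod_cast y.den_ne_zero
  have i1 : D * (a * e) = T * (b * d) := by
    have : (D:ℚ) * (a * e) = T * (b * d) := by rw [← hx, ← hy, ← hT]; ring
    exact_mod_cast this
  have i2 : D * (a * d + b * e) = S * (b * d) := by
    have : (D:ℚ) * (a * d + b * e) = S * (b * d) := by rw [← hx, ← hy, ← hS]; ring
    exact_mod_cast this
  obtain ⟨u, v, huv⟩ : IsCoprime a b := num_den_coprime x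
  obtain ⟨u', v', huv'⟩ : IsCoprime e d := num_den_coprime y
  have hdvd : b * d ∣ D := by
    -- coprimality of the product content
    have cop : ∃ p q r : ℤ, p * (a * e) + q * (a * d + b * e) + r * (b * d) = 1 := by
      have hI : Ideal.span {a * e, a * d + b * e, b * d} = (⊤ : Ideal ℤ) := by
        by_contra hne
        obtain ⟨m, hm, hle⟩ := Ideal.exists_le_maximal _ hne
        have hp := hm.isPrime
        have m1 : a * e ∈ m := hle (Ideal.subset_span (by simp))
        have m2 : a * d + b * e ∈ m := hle (Ideal.subset_span (by simp))
        have m3 : b * d ∈ m := hle (Ideal.subset_span (by simp))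
        have nab : ¬ (a ∈ m ∧ b ∈ m) := fun h => hp.ne_top ((Ideal.eq_top_iff_one _).2
          (by rw [← huv]; exact m.add_mem (m.mul_mem_left _ h.1) (m.mul_mem_left _ h.2)))
        have ned : ¬ (e ∈ m ∧ d ∈ m) := fun h => hp.ne_top ((Ideal.eq_top_iff_one _).2
          (by rw [← huv']; exact m.add_mem (m.mul_mem_left _ h.1) (m.mul_mem_left _ h.2)))
        rcases hp.mem_or_mem m1 with ma | me
        · have : b * e ∈ m := by
            have := m.sub_mem m2 (m.mul_mem_right d ma); simpa using this
          rcases hp.mem_or_mem this with h | h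
          · exact nab ⟨ma, h⟩
          · rcases hp.mem_or_mem m3 with h' | h'
            · exact nab ⟨ma, h'⟩
            · exact ned ⟨h, h'⟩
        · have : a * d ∈ m := by
            have := m.sub_mem m2 (m.mul_mem_left b me); simpa using this
          rcases hp.mem_or_mem this with h | h
          · rcases hp.mem_or_mem m3 with h' | h'
            · exact nab ⟨h, h'⟩
            · exact ned ⟨me, h'⟩
          · exact ned ⟨me, h⟩
      have h1 : (1:ℤ) ∈ Ideal.span {a * e, a * d + b * e, b * d} := by rw [hI]; trivial
      rw [Ideal.mem_span_insert] at h1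
      obtain ⟨p, z, hz, h1⟩ := h1
      rw [Ideal.mem_span_pair] at hz
      obtain ⟨q, r, hz⟩ := hz
      exact ⟨p, q, r, by rw [h1, ← hz]; ring⟩
    obtain ⟨p, q, r, hpqr⟩ := cop
    refine ⟨p * T + q * S + r * D, ?_⟩
    linear_combination (-D) * hpqr + p * i1 + q * i2
  obtain ⟨k, rfl⟩ := hdvd
  have hk : k ≠ 0 := by rintro rfl; simp at hD
  have hT' : T = k * (a * e) := by
    apply mul_left_cancel₀ (mul_ne_zero hb0 hd0); linear_combination -i1
  have hS' : S = k * (a * d + b * e) := by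
    apply mul_left_cancel₀ (mul_ne_zero hb0 hd0); linear_combination -i2
  have hk1 : (1:ℝ) ≤ |(k:ℝ)| := by exact_mod_cast Int.one_le_abs hk
  have j1 : |(b:ℝ)| * |(d:ℝ)| ≤ M := by
    push_cast at h1; rw [abs_mul, abs_mul] at h1
    exact (le_mul_of_one_le_right (by positivity) hk1).trans h1
  have j2 : |(a:ℝ) * d + b * e| ≤ M := by
    rw [hS'] at h2; push_cast at h2; rw [abs_mul] at h2
    exact (le_mul_of_one_le_left (by positivity) hk1).trans h2
  have j3 : |(a:ℝ)| * |(e:ℝ)| ≤ M := by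
    rw [hT'] at h3; push_cast at h3; rw [abs_mul, abs_mul] at h3
    exact (le_mul_of_one_le_left (by positivity) hk1).trans h3
  have eH : ∀ z : ℚ, (HH z : ℝ) = |(z.num:ℝ)| ∨ (HH z : ℝ) = |((z.den:ℤ):ℝ)| := by
    intro z
    rw [HH]
    rcases max_choice z.num.natAbs z.den with h | h
    · left; rw [h, Nat.cast_natAbs]; push_cast; rfl
    · right; rw [h]; push_cast; rw [Nat.abs_cast]
  have hM : 0 ≤ M := (abs_nonneg _).trans h1
  have cross : ∀ p q : ℝ, |p + q| ≤ M → |p| * |q| ≤ M * M → |p| ≤ 2 * M := by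
    intro p q hpq hm
    by_contra! hlt
    have t1 : |p| ≤ |p + q| + |q| := by
      have := abs_sub (p + q) q; simpa using this
    nlinarith [abs_nonneg q]
  have cr : |(a:ℝ) * d| * |(b:ℝ) * e| ≤ M * M := by
    rw [abs_mul, abs_mul]
    calc _ = (|(a:ℝ)| * |(e:ℝ)|) * (|(b:ℝ)| * |(d:ℝ)|) := by ring
      _ ≤ M * M := by gcongr
  rcases eH x with e1 | e1 <;> rcases eH y with e2 | e2 <;> rw [e1, e2]
  · linarith
  · rw [← abs_mul]; exact cross _ _ j2 cr
  · rw [← abs_mul]; exact cross ((b:ℝ) * e) ((a:ℝ) * d) (by rwa [add_comm]) (by rwa [mul_comm])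
  · linarith

end int
end AM

set_option linter.unusedSectionVars false
set_option linter.unusedVariables false
namespace AM
open WeierstrassCurve WeierstrassCurve.Affine

section int
variable {n : ℤ}


lemma par_x (hn : n ≠ 0) {x1 y1 x2 y2 l m : ℚ} (h1 : y1 ^ 2 = x1 ^ 3 + n) (h2 : y2 ^ 2 = x2 ^ 3 + n)
    (hne : x1 ≠ x2) (hl : l * (x1 - x2) = y1 - y2) (hm : m * (x1 - x2) = y1 + y2) :
    hh (l ^ 2 - x1 - x2) + hh (m ^ 2 - x1 - x2) ≤ 2 * hh x1 + 2 * hh x2 + Real.log (24 * |(n:ℝ)|) := by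
  set a := x1.num with ha
  set b : ℤ := (x1.den : ℤ) with hb
  set e := x2.num with he
  set d : ℤ := (x2.den : ℤ) with hd
  have hx : x1 * b = a := mul_den' x1
  have hy : x2 * d = e := mul_den' x2
  have hb0 : b ≠ 0 := by rw [hb]; exact_mod_cast x1.den_ne_zero
  have hd0 : d ≠ 0 := by rw [hd]; exact_mod_cast x2.den_ne_zero
  have hbq : (b:ℚ) ≠ 0 := by exact_mod_cast hb0
  have hdq : (d:ℚ) ≠ 0 := by exact_mod_cast hd0
  have hs : x1 - x2 ≠ 0 := sub_ne_zero.2 hne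
  have el : l = (y1 - y2) / (x1 - x2) := by rw [← hl, mul_div_cancel_right₀ _ hs]
  have em : m = (y1 + y2) / (x1 - x2) := by rw [← hm, mul_div_cancel_right₀ _ hs]
  have s1 : (x1 - x2) ^ 2 * ((l ^ 2 - x1 - x2) + (m ^ 2 - x1 - x2)) = 2 * (x1 * x2 * (x1 + x2) + 2 * n) := by
    rw [el, em]; field_simp
    linear_combination 2 * h1 + 2 * h2
  have s2 : (x1 - x2) ^ 2 * ((l ^ 2 - x1 - x2) * (m ^ 2 - x1 - x2)) = (x1 * x2) ^ 2 - 4 * n * (x1 + x2) := by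
    have t1 : (x1 - x2) ^ 2 * l ^ 2 = (y1 - y2) ^ 2 := by rw [← hl]; ring
    have t2 : (x1 - x2) ^ 2 * m ^ 2 = (y1 + y2) ^ 2 := by rw [← hm]; ring
    have t3 : l * m * (x1 - x2) = x1 ^ 2 + x1 * x2 + x2 ^ 2 := by
      apply mul_right_cancel₀ hs
      calc _ = (l * (x1 - x2)) * (m * (x1 - x2)) := by ring
        _ = (y1 - y2) * (y1 + y2) := by rw [hl, hm]
        _ = _ := by linear_combination h1 - h2
    linear_combination (l * m * (x1 - x2) + x1 ^ 2 + x1 * x2 + x2 ^ 2) * t3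
      - (x1 + x2) * (t1 + t2) - 2 * (x1 + x2) * (h1 + h2)
  have hD : (a * d - e * b) ^ 2 ≠ 0 := by
    apply pow_ne_zero
    intro h0
    have : (a:ℚ) * d - e * b = 0 := by exact_mod_cast h0
    rw [← hx, ← hy] at this
    apply mul_ne_zero hs (mul_ne_zero hbq hdq)
    linear_combination this
  have h1a := nabs hn
  have p1 : |(a:ℝ)| ≤ HH x1 := abs_num_real x1
  have p2 : |(b:ℝ)| ≤ HH x1 := abs_den_real x1
  have p3 : |(e:ℝ)| ≤ HH x2 := abs_num_real x2
  have p4 : |(d:ℝ)| ≤ HH x2 := abs_den_real x2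
  have q1 := HH_posR x1
  have q2 := HH_posR x2
  set X : ℝ := (HH x1 : ℝ)
  set Y : ℝ := (HH x2 : ℝ)
  set N : ℝ := |(n:ℝ)| with hN
  have mm : ∀ u v : ℝ, |u| ≤ X → |v| ≤ Y → |u * v| ≤ X * Y := by
    intro u v hu hv; rw [abs_mul]; gcongr
  have ad := mm _ _ p1 p4
  have be := mm _ _ p2 p3
  have ae := mm _ _ p1 p3
  have bd := mm _ _ p2 p4
  have adbe : |(a:ℝ) * d + b * e| ≤ 2 * (X * Y) := (abs_add_le _ _).trans (by linarith)
  have adbe' : |(a:ℝ) * d - b * e| ≤ 2 * (X * Y) := (abs_sub _ _).trans (by linarith)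
  set Z := X * Y with hZ
  have hZ1 : 0 ≤ Z := by positivity
  have main : (HH (l ^ 2 - x1 - x2) : ℝ) * HH (m ^ 2 - x1 - x2) ≤ 2 * (12 * N * Z ^ 2) := by
    apply gauss_height (D := (a * d - e * b) ^ 2)
      (S := 2 * (a * e * (a * d + b * e) + 2 * n * (b * d) ^ 2))
      (T := (a * e) ^ 2 - 4 * n * ((a * d + b * e) * (b * d))) hD
    · push_cast; rw [← hx, ← hy]
      linear_combination (b * d : ℚ) ^ 2 * s1
    · push_cast; rw [← hx, ← hy]
      linear_combination (b * d : ℚ) ^ 2 * s2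
    · push_cast
      rw [abs_pow, show (a:ℝ) * d - e * b = a * d - b * e by ring]
      calc _ ≤ (2 * Z) ^ 2 := by gcongr
        _ ≤ _ := by nlinarith [sq_nonneg Z]
    · push_cast
      rw [abs_mul, abs_two]
      have : |(a:ℝ) * e * (a * d + b * e) + 2 * n * (b * d) ^ 2| ≤ Z * (2 * Z) + 2 * N * Z ^ 2 := by
        refine (abs_add_le _ _).trans ?_
        rw [abs_mul ((a:ℝ) * e), abs_mul (2 * (n:ℝ)), abs_pow, abs_mul (2:ℝ), abs_two]
        gcongr
      nlinarith [sq_nonneg Z]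
    · push_cast
      have : |((a:ℝ) * e) ^ 2 - 4 * n * ((a * d + b * e) * (b * d))| ≤ Z ^ 2 + 4 * N * (2 * Z * Z) := by
        refine (abs_sub _ _).trans ?_
        rw [abs_pow, abs_mul (4 * (n:ℝ)), abs_mul (4:ℝ), abs_mul ((a:ℝ) * d + b * e)]
        rw [abs_of_pos (by norm_num : (0:ℝ) < 4)]
        gcongr
      nlinarith [sq_nonneg Z]
  have r1 := HH_posR (l ^ 2 - x1 - x2)
  have r2 := HH_posR (m ^ 2 - x1 - x2)
  unfold hh
  rw [← Real.log_mul (by positivity) (by positivity)]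
  have e1 : 2 * Real.log (HH x1) + 2 * Real.log (HH x2) + Real.log (24 * N)
    = Real.log (24 * N * Z ^ 2) := by
    rw [Real.log_mul (x := 24 * N) (y := Z ^ 2) (by positivity) (by positivity), Real.log_pow, hZ, Real.log_mul (x := X) (y := Y) (by positivity) (by positivity)]
    push_cast; ring
  rw [e1]
  apply Real.log_le_log (by positivity)
  linarith

lemma hz_par (hn : n ≠ 0) : ∃ C' : ℝ, ∀ P Q : (EC (n:ℚ)).Point,
    hz (P + Q) + hz (P - Q) ≤ 2 * hz P + 2 * hz Q + C' := by
  have hL : 0 ≤ Real.log |(n:ℝ)| := Real.log_nonneg (nabs hn)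
  have hL2 : 0 ≤ Real.log (24 * |(n:ℝ)|) := Real.log_nonneg (by have := nabs hn; linarith)
  have hCd := Cd_nonneg
  refine ⟨3 * Real.log (24 * |(n:ℝ)|) + 6 * Real.log |(n:ℝ)| + Cd, ?_⟩
  intro P Q
  have hc := nq hn
  rcases pt_cases hc P with rfl | ⟨x1, y1, h1, rfl⟩
  · simp only [zero_add, zero_sub, hz_neg hc, hz_zero]; linarith
  rcases pt_cases hc Q with rfl | ⟨x2, y2, h2, rfl⟩
  · simp only [add_zero, sub_zero, hz_zero]; linarith
  rcases add_cases hc h1 h2 with hne | hh | hh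
  · have hs : x1 - x2 ≠ 0 := sub_ne_zero.2 hne
    have hl : ((y1 - y2) / (x1 - x2)) * (x1 - x2) = y1 - y2 := div_mul_cancel₀ _ hs
    have hm : ((y1 + y2) / (x1 - x2)) * (x1 - x2) = y1 + y2 := div_mul_cancel₀ _ hs
    have hm' : ((y1 + y2) / (x1 - x2)) * (x1 - x2) = y1 - (-y2) := by rw [hm]; ring
    generalize (y1 - y2) / (x1 - x2) = l at hl
    generalize (y1 + y2) / (x1 - x2) = m at hm hm'
    have h2' : (-y2) ^ 2 = x2 ^ 3 + n := by rw [neg_sq, h2]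
    rw [sub_eq_add_neg, neg_mk, mk_add hc hne hl rfl rfl (h3 := chord_eq h1 h2 hne hl),
      mk_add hc hne hm' rfl rfl (h3 := chord_eq h1 h2' hne hm')]
    have t0 := par_x hn h1 h2 hne hl hm
    have t1 := hz_le hn (chord_eq h1 h2 hne hl)
    have t2 := hz_le hn (chord_eq h1 h2' hne hm')
    have t3 := le_hz hn h1
    have t4 := le_hz hn h2
    linarith
  · obtain ⟨rfl, rfl⟩ := hh
    have e : mk hc x1 (-y1) h2 = - mk hc x1 y1 h1 := by rw [neg_mk]
    rw [e, add_neg_cancel, sub_neg_eq_add, hz_neg hc, hz_zero]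
    have := (abs_le.1 (hz_dbl hc (mk hc x1 y1 h1))).2
    linarith
  · obtain ⟨rfl, rfl, _⟩ := hh
    rw [sub_self, hz_zero]
    have := (abs_le.1 (hz_dbl hc (mk hc x1 y1 h1))).2
    linarith

lemma finite_HH (B : ℝ) : {x : ℚ | (HH x : ℝ) ≤ B}.Finite := by
  set N := ⌊B⌋₊
  apply Set.Finite.subset (s := (fun p : ℤ × ℤ => (p.1 : ℚ) / p.2) '' (Set.Icc (-(N:ℤ)) N ×ˢ Set.Icc (-(N:ℤ)) N))
  · exact Set.Finite.image _ ((Set.finite_Icc _ _).prod (Set.finite_Icc _ _))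
  · intro x hx
    have hx' : HH x ≤ N := Nat.le_floor hx
    refine ⟨(x.num, x.den), ?_, ?_⟩
    · have h1 := num_le_HH x
      have h2 := den_le_HH x
      rw [abs_le] at h1
      simp only [Set.mem_prod, Set.mem_Icc]
      omega
    · simp only; push_cast; exact Rat.num_div_den x

lemma hz_finite (hn : n ≠ 0) (t : ℝ) : {P : (EC (n:ℚ)).Point | hz P ≤ t}.Finite := by
  have hc := nq hn
  set X := {x : ℚ | (HH x : ℝ) ≤ Real.exp (t + Real.log |(n:ℝ)|)} with hX
  have hXf : X.Finite := finite_HH _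
  apply Set.Finite.subset (s := {0} ∪ ⋃ x ∈ X, {P | ∃ y h, P = mk hc x y h})
  · apply (Set.finite_singleton _).union
    apply hXf.biUnion
    intro x _
    by_cases hex : ∃ y : ℚ, y ^ 2 = x ^ 3 + n
    · obtain ⟨y0, hy0⟩ := hex
      apply Set.Finite.subset (s := {mk hc x y0 hy0, mk hc x (-y0) (by rw [neg_sq, hy0])}) (by simp)
      rintro P ⟨y, h, rfl⟩
      have : (y - y0) * (y + y0) = 0 := by linear_combination h - hy0
      rcases mul_eq_zero.1 this with h' | h'
      · left; exact mk_congr hc rfl (sub_eq_zero.1 h')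
      · right; exact mk_congr hc rfl (eq_neg_of_add_eq_zero_left h')
    · convert Set.finite_empty
      ext P
      simp only [Set.mem_ofPred_eq, Set.mem_empty_iff_false, iff_false]
      rintro ⟨y, h, _⟩
      exact hex ⟨y, h⟩
  · intro P hP
    rcases pt_cases hc P with rfl | ⟨x, y, h, rfl⟩
    · left; rfl
    · right
      simp only [Set.mem_iUnion]
      refine ⟨x, ?_, y, h, rfl⟩
      have t1 := le_hz hn h
      have t2 : hz (mk hc x y h) ≤ t := hP
      have t3 := hh_nonneg x
      have t4 : hh x ≤ t + Real.log |(n:ℝ)| := by linarith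
      rw [hX]
      simp only [Set.mem_ofPred_eq]
      rw [← Real.log_le_iff_le_exp (by have := HH_posR x; linarith)]
      exact t4

lemma exists_ghat (hn : n ≠ 0) : ∃ g : (EC (n:ℚ)).Point → ℝ, (∀ P, 0 ≤ g P) ∧ (∀ P, |g P - hz P| ≤ Cd) ∧
      (∀ P Q, g (P + Q) + g (P - Q) = 2 * g P + 2 * g Q) ∧ ∀ t, {P | g P ≤ t}.Finite := by
  obtain ⟨C', hC'⟩ := hz_par hn
  obtain ⟨g, g0, g1, g2⟩ := exists_canon (G := (EC (n:ℚ)).Point) hz hz_nonneg Cd C' (hz_dbl (nq hn)) hC'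
  refine ⟨g, g0, g1, g2, fun t => ?_⟩
  apply (hz_finite hn (t + Cd)).subset
  intro P hP
  have := (abs_le.1 (g1 P)).1
  simp only [Set.mem_ofPred_eq] at hP ⊢
  linarith

end int
end AM

set_option linter.unusedSectionVars false
set_option linter.unusedVariables false
namespace AM
open WeierstrassCurve WeierstrassCurve.Affine

section lower
variable {n : ℤ}

lemma dvd_pow_five {n m : ℕ} (hn : n ≠ 0) (hm : m ≠ 0) (h6 : ∀ p : ℕ, p.Prime → ¬ p ^ 6 ∣ n)
    (h : ∀ p : ℕ, p.Prime → p ∣ n → p ∣ m) : n ∣ m ^ 5 := by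
  rw [← Nat.factorization_prime_le_iff_dvd hn (pow_ne_zero 5 hm)]
  intro p hp
  rw [Nat.factorization_pow]
  simp only [Finsupp.smul_apply, smul_eq_mul]
  have h5 : n.factorization p ≤ 5 := by
    by_contra! hlt
    exact h6 p hp ((hp.pow_dvd_iff_le_factorization hn).2 hlt)
  by_cases hpn : p ∣ n
  · have := (hp.dvd_iff_one_le_factorization hm).1 (h p hp hpn)
    omega
  · rw [Nat.factorization_eq_zero_of_not_dvd hpn]; omega

lemma num_add_one (z : ℚ) : z + 1 = ((z.num + z.den : ℤ) : ℚ) / ((z.den : ℤ) : ℚ) := by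
  have hd : (z.den : ℚ) ≠ 0 := by exact_mod_cast z.den_ne_zero
  push_cast
  rw [add_div, div_self hd, Rat.num_div_den]

lemma height_lower (hn : SixthPowerFree n) {x y : ℚ} (h : y ^ 2 = x ^ 3 + n) (hx : x ≠ 0) (hy : y ≠ 0) :
    Real.log |(n:ℝ)| ≤ Real.log 32 + 15 * hh (x ^ 3 / n) := by
  have hnq := nq hn.1
  set z := x ^ 3 / (n:ℚ) with hz
  have hz0 : z ≠ 0 := by positivity
  have hz1 : z + 1 = y ^ 2 / n := by rw [h, hz]; field_simp
  have hz10 : z + 1 ≠ 0 := by rw [hz1]; positivity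
  set v : ℤ := z.num + z.den with hv
  have hd0 : (z.den : ℤ) ≠ 0 := by exact_mod_cast z.den_ne_zero
  have hv0 : v ≠ 0 := by
    intro h0; apply hz10; rw [num_add_one, ← hv, h0]; simp
  have hu0 : z.num ≠ 0 := Rat.num_ne_zero.2 hz0
  set m : ℤ := z.num * v * z.den with hm
  have hm0 : m ≠ 0 := by positivity
  have key : n.natAbs ∣ m.natAbs ^ 5 := by
    apply dvd_pow_five (Int.natAbs_ne_zero.2 hn.1) (Int.natAbs_ne_zero.2 hm0)
    · intro p hp hdvd
      apply hn.2 p hp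
      rw [← Int.natAbs_dvd_natAbs, Int.natAbs_pow, Int.natAbs_natCast]; exact hdvd
    · intro p hp hpn
      have := Fact.mk hp
      by_contra hpm
      have hpm' : ¬ (p:ℤ) ∣ m := by rwa [Int.natCast_dvd]
      have a1 : ¬ (p:ℤ) ∣ z.num := fun hh => hpm' (by rw [hm]; exact (hh.mul_right _).mul_right _)
      have a2 : ¬ (p:ℤ) ∣ v := fun hh => hpm' (by rw [hm]; exact (hh.mul_left _).mul_right _)
      have a3 : ¬ (p:ℤ) ∣ z.den := fun hh => hpm' (by rw [hm]; exact (hh.mul_left _))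
      have v0 : ∀ k : ℤ, k ≠ 0 → ¬ (p:ℤ) ∣ k → padicValRat p (k:ℚ) = 0 := by
        intro k hk0 hk
        rw [padicValRat.of_int, padicValInt.eq_zero_of_not_dvd hk]; rfl
      have b1 : padicValRat p z = 0 := by
        have e : z = (z.num : ℚ) / ((z.den : ℤ) : ℚ) := by push_cast; exact (Rat.num_div_den z).symm
        rw [e, padicValRat.div (by exact_mod_cast hu0) (by exact_mod_cast hd0), v0 _ hu0 a1, v0 _ hd0 a3]; rfl
      have b2 : padicValRat p (z + 1) = 0 := by
        rw [num_add_one, padicValRat.div (by exact_mod_cast hv0) (by exact_mod_cast hd0), v0 _ hv0 a2, v0 _ hd0 a3]; rfl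
      rw [hz, padicValRat.div (by positivity) hnq, padicValRat.pow, padicValRat.of_int] at b1
      rw [hz1, padicValRat.div (by positivity) hnq, padicValRat.pow, padicValRat.of_int] at b2
      have c1 : padicValInt p n ≤ 5 := by
        by_contra! hlt
        apply hn.2 p hp
        rw [padicValInt_dvd_iff]
        right; omega
      have c2 : 1 ≤ padicValInt p n := by
        have : (p:ℤ) ^ 1 ∣ n := by rw [pow_one, Int.natCast_dvd]; exact hpn
        rw [padicValInt_dvd_iff] at this
        rcases this with h | h
        · exact absurd h hn.1
        · exact h
      push_cast at b1 b2
      omega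
  have hle : (n.natAbs : ℝ) ≤ (m.natAbs : ℝ) ^ 5 := by
    exact_mod_cast Nat.le_of_dvd (pow_pos (Int.natAbs_pos.2 hm0) 5) key
  rw [Nat.cast_natAbs, Nat.cast_natAbs] at hle
  push_cast at hle
  have p1 := abs_num_real z
  have p2 := abs_den_real z
  have p3 := HH_posR z
  set H : ℝ := (HH z : ℝ) with hH
  have hmle : |(m:ℝ)| ≤ 2 * H ^ 3 := by
    rw [hm]; push_cast; push_cast at p2
    rw [abs_mul, abs_mul]
    have : |(v:ℝ)| ≤ 2 * H := by
      rw [hv]; push_cast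
      exact (abs_add_le _ _).trans (by linarith)
    calc _ ≤ H * (2 * H) * H := by gcongr
      _ = _ := by ring
  have hfin : |(n:ℝ)| ≤ 32 * H ^ 15 := by
    calc _ ≤ |(m:ℝ)| ^ 5 := hle
      _ ≤ (2 * H ^ 3) ^ 5 := by gcongr
      _ = _ := by ring
  have := Real.log_le_log (by have := nabs hn.1; linarith) hfin
  rw [Real.log_mul (by norm_num) (by positivity), Real.log_pow] at this
  unfold hh
  rw [← hH]
  exact_mod_cast this

lemma small_ball (hn : SixthPowerFree n) (t : ℝ) (ht : Real.log 32 + 15 * t < Real.log |(n:ℝ)|) :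
    {P : (EC (n:ℚ)).Point | hz P ≤ t}.ncard ≤ 4 := by
  have hc := nq hn.1
  classical
  let f : (EC (n:ℚ)).Point → Fin 4 := fun P => match P with
    | .zero => 0
    | .some x y _ => if y = 0 then 1 else if 0 < y then 2 else 3
  have fmk : ∀ x y h, f (mk hc x y h) = if y = 0 then 1 else if 0 < y then 2 else 3 := fun _ _ _ => rfl
  have f0 : f 0 = 0 := rfl
  have hmk : ∀ x y h, hz (mk hc x y h) ≤ t → x = 0 ∨ y = 0 := by
    intro x y h hle
    by_contra! hxy
    have := height_lower hn h hxy.1 hxy.2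
    rw [hz_mk] at hle
    linarith
  have := Set.ncard_le_ncard_of_injOn (s := {P : (EC (n:ℚ)).Point | hz P ≤ t}) (t := Set.univ) f
    (fun _ _ => Set.mem_univ _) ?_ Set.finite_univ
  · simpa using this
  · intro P hP Q hQ hPQ
    have fne : ∀ x y h, f (mk hc x y h) ≠ 0 := by
      intro x y h; rw [fmk]; split_ifs <;> decide
    rcases pt_cases hc P with rfl | ⟨x1, y1, h1, rfl⟩
    · rcases pt_cases hc Q with rfl | ⟨x2, y2, h2, rfl⟩
      · rfl
      · rw [f0] at hPQ; exact absurd hPQ.symm (fne x2 y2 h2)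
    rcases pt_cases hc Q with rfl | ⟨x2, y2, h2, rfl⟩
    · rw [f0] at hPQ; exact absurd hPQ (fne x1 y1 h1)
    have e1 := hmk _ _ h1 hP
    have e2 := hmk _ _ h2 hQ
    rw [fmk, fmk] at hPQ
    rw [mk_inj]
    by_cases hy1 : y1 = 0
    · have hy2 : y2 = 0 := by
        by_contra hy2
        rw [if_pos hy1, if_neg hy2] at hPQ
        split_ifs at hPQ <;> exact absurd hPQ (by decide)
      refine ⟨?_, by rw [hy1, hy2]⟩
      have : x1 ^ 3 = x2 ^ 3 := by rw [hy1] at h1; rw [hy2] at h2; linear_combination h2 - h1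
      exact (Odd.strictMono_pow (by decide : Odd 3)).injective this
    · have hy2 : y2 ≠ 0 := by
        intro hy2
        rw [if_neg hy1, if_pos hy2] at hPQ
        split_ifs at hPQ <;> exact absurd hPQ (by decide)
      have hx1 := e1.resolve_right hy1
      have hx2 := e2.resolve_right hy2
      subst hx1 hx2
      refine ⟨rfl, ?_⟩
      rw [if_neg hy1, if_neg hy2] at hPQ
      have : (y1 - y2) * (y1 + y2) = 0 := by linear_combination h1 - h2
      rcases mul_eq_zero.1 this with h' | h'
      · linarith
      · exfalso
        by_cases hp : 0 < y1
        · rw [if_pos hp, if_neg (by linarith)] at hPQ; exact absurd hPQ (by decide)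
        · have : y1 < 0 := lt_of_le_of_ne (not_lt.1 hp) hy1
          rw [if_neg hp, if_pos (by linarith)] at hPQ; exact absurd hPQ (by decide)

end lower
end AM

set_option linter.unusedSectionVars false
set_option linter.unusedVariables false
namespace AM
open WeierstrassCurve WeierstrassCurve.Affine

/-- archimedean size -/
def mx (x : ℚ) : ℝ := max |(x:ℝ)| 1

lemma one_le_mx (x : ℚ) : 1 ≤ mx x := le_max_right _ _

lemma HH_eq_mx (x : ℚ) : (HH x : ℝ) = x.den * mx x := by
  have hd : (0:ℝ) < x.den := by exact_mod_cast x.den_pos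
  rw [mx, mul_max_of_nonneg _ _ hd.le, mul_one, HH]
  push_cast
  congr 1
  rw [Nat.cast_natAbs]; push_cast
  have : (x.num : ℝ) = x.den * (x:ℝ) := by
    have := Rat.mul_den_eq_num x
    have h2 : ((x.num : ℚ) : ℝ) = ((x * x.den : ℚ) : ℝ) := by rw [this]
    push_cast at h2; rw [h2, mul_comm]
  rw [this, abs_mul, abs_of_pos hd]

lemma hh_eq_mx (x : ℚ) : hh x = Real.log x.den + Real.log (mx x) := by
  have hd : (0:ℝ) < x.den := by exact_mod_cast x.den_pos
  rw [hh, HH_eq_mx, Real.log_mul hd.ne' (by have := one_le_mx x; linarith)]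

lemma int_of_den_dvd {x : ℚ} {L : ℕ} (h : x.den ∣ L) : ∃ k : ℤ, (L:ℚ) * x = k := by
  obtain ⟨e, rfl⟩ := h
  refine ⟨e * x.num, ?_⟩
  push_cast; rw [← Rat.mul_den_eq_num x]; ring

lemma int_of_sq {q : ℚ} {k : ℤ} (h : q ^ 2 = k) : ∃ m : ℤ, q = m := by
  have hd : (q ^ 2).den = 1 := by rw [h]; simp
  rw [Rat.den_pow] at hd
  have : q.den = 1 := by simpa using hd
  exact ⟨q.num, ((Rat.den_eq_one_iff q).1 this).symm⟩

section core
variable {n : ℤ}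

lemma sum_height (hn : n ≠ 0) {x1 y1 x2 y2 l : ℚ} (h1 : y1 ^ 2 = x1 ^ 3 + n) (h2 : y2 ^ 2 = x2 ^ 3 + n)
    (hne : x1 ≠ x2) (hl : l * (x1 - x2) = y1 - y2) {L : ℕ} (hL : 1 ≤ L) (d1 : x1.den ∣ L) (d2 : x2.den ∣ L)
    {B : ℝ} (hB : |(n:ℝ)| ≤ B) (b1 : |(x1:ℝ)| ≤ B) (b2 : |(x2:ℝ)| ≤ B) :
    hh (l ^ 2 - x1 - x2) ≤ Real.log (8 * (L:ℝ) ^ 3 * B ^ 3) := by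
  obtain ⟨a, ha⟩ := int_of_den_dvd d1
  obtain ⟨b, hb⟩ := int_of_den_dvd d2
  have hn1 := nabs hn
  have hB1 : 1 ≤ B := hn1.trans hB
  have hLq : (L:ℚ) ≠ 0 := by positivity
  have hs : x1 - x2 ≠ 0 := sub_ne_zero.2 hne
  obtain ⟨c, hc⟩ : ∃ c : ℤ, (L:ℚ) ^ 3 * (y1 * y2) = c := by
    apply int_of_sq (k := (a ^ 3 + L ^ 3 * n) * (b ^ 3 + L ^ 3 * n))
    push_cast
    rw [← ha, ← hb]
    calc _ = (L:ℚ) ^ 6 * (y1 ^ 2 * y2 ^ 2) := by ring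
      _ = _ := by rw [h1, h2]; ring
  have hLR : (1:ℝ) ≤ L := by exact_mod_cast hL
  have c3 : (c:ℝ) = (L:ℝ) ^ 3 * (y1 * y2) := by exact_mod_cast hc.symm
  have a3 : (a:ℝ) = (L:ℝ) * x1 := by exact_mod_cast ha.symm
  have b3 : (b:ℝ) = (L:ℝ) * x2 := by exact_mod_cast hb.symm
  have hnB3 : B ≤ B ^ 3 := le_self_pow₀ hB1 (by norm_num)
  have ysq : ∀ x y : ℚ, y ^ 2 = x ^ 3 + n → |(x:ℝ)| ≤ B → (y:ℝ) ^ 2 ≤ 2 * B ^ 3 := by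
    intro x y h hx
    have e : (y:ℝ) ^ 2 = (x:ℝ) ^ 3 + n := by exact_mod_cast h
    rw [e]
    have t1 : (x:ℝ) ^ 3 ≤ B ^ 3 := by
      calc (x:ℝ) ^ 3 ≤ |(x:ℝ) ^ 3| := le_abs_self _
        _ = |(x:ℝ)| ^ 3 := abs_pow _ _
        _ ≤ _ := by gcongr
    have t2 : (n:ℝ) ≤ B := (le_abs_self _).trans hB
    linarith
  have hyy : |(y1:ℝ) * y2| ≤ 2 * B ^ 3 := by
    have s1 := ysq _ _ h1 b1
    have s2 := ysq _ _ h2 b2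
    rw [abs_le]
    constructor <;> nlinarith [sq_nonneg ((y1:ℝ) + y2), sq_nonneg ((y1:ℝ) - y2)]
  have hDne : (L * (a - b) ^ 2 : ℤ) ≠ 0 := by
    intro h0
    have : ((L * (a - b) ^ 2 : ℤ) : ℚ) = 0 := by exact_mod_cast h0
    push_cast at this
    rw [← ha, ← hb] at this
    have h' : (L:ℚ) ^ 3 * (x1 - x2) ^ 2 ≠ 0 := by positivity
    apply h'; linear_combination this
  have main : (HH (l ^ 2 - x1 - x2) : ℝ) ≤ 8 * (L:ℝ) ^ 3 * B ^ 3 := by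
    apply HH_le (A := a * b * (a + b) + 2 * n * L ^ 3 - 2 * c) (B := L * (a - b) ^ 2) hDne
    · push_cast
      rw [← ha, ← hb, ← hc]
      have t1 : (x1 - x2) ^ 2 * l ^ 2 = (y1 - y2) ^ 2 := by rw [← hl]; ring
      linear_combination (L:ℚ) ^ 3 * t1 + (L:ℚ) ^ 3 * (h1 + h2)
    · push_cast
      rw [a3, b3, c3]
      have e : (L:ℝ) * x1 * (L * x2) * (L * x1 + L * x2) + 2 * n * L ^ 3 - 2 * (L ^ 3 * (y1 * y2))
        = (L:ℝ) ^ 3 * (x1 * x2 * (x1 + x2) + 2 * n - 2 * (y1 * y2)) := by ring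
      rw [e, abs_mul, abs_of_pos (by positivity : (0:ℝ) < (L:ℝ) ^ 3)]
      have t1 : |(x1:ℝ) * x2 * (x1 + x2)| ≤ B * B * (B + B) := by
        rw [abs_mul, abs_mul]
        gcongr
        exact (abs_add_le _ _).trans (add_le_add b1 b2)
      have t2 : |(x1:ℝ) * x2 * (x1 + x2) + 2 * n - 2 * (y1 * y2)| ≤ 8 * B ^ 3 := by
        refine (abs_sub _ _).trans ?_
        have u1 := abs_add_le ((x1:ℝ) * x2 * (x1 + x2)) (2 * n)
        rw [abs_mul (2:ℝ), abs_two] at u1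
        rw [abs_mul (2:ℝ), abs_two]
        nlinarith
      calc _ ≤ (L:ℝ) ^ 3 * (8 * B ^ 3) := by gcongr
        _ = _ := by ring
    · push_cast
      rw [a3, b3]
      have e : (L:ℝ) * (L * x1 - L * x2) ^ 2 = (L:ℝ) ^ 3 * (x1 - x2) ^ 2 := by ring
      rw [e, abs_mul, abs_of_pos (by positivity : (0:ℝ) < (L:ℝ) ^ 3), abs_pow]
      have t1 : |(x1:ℝ) - x2| ≤ 2 * B := (abs_sub _ _).trans (by linarith)
      calc _ ≤ (L:ℝ) ^ 3 * (2 * B) ^ 2 := by gcongr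
        _ = (L:ℝ) ^ 3 * (4 * B ^ 2) := by ring
        _ ≤ (L:ℝ) ^ 3 * (8 * B ^ 3) := by
            apply mul_le_mul_of_nonneg_left _ (by positivity)
            nlinarith [sq_nonneg B, mul_nonneg (sq_nonneg B) (by linarith : (0:ℝ) ≤ B - 1)]
        _ = _ := by ring
  exact Real.log_le_log (by have := HH_posR (l ^ 2 - x1 - x2); linarith) main

/-- data of a good set of points -/
def GoodSet (n : ℤ) (T : Finset (ℚ × ℚ)) (L : ℕ) : Prop :=
  1 ≤ L ∧ (∀ p ∈ T, p.2 ^ 2 = p.1 ^ 3 + n) ∧ (∀ p ∈ T, ∃ g : ℕ, L = p.1.den * g ∧ g ^ 16 ≤ L) ∧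
  ∀ p ∈ T, ∀ q ∈ T, mx q.1 ≤ 129 * |(n:ℝ)| * mx p.1

/-- class map mod 3 -/
def ClassMap (n : ℤ) (S : ℕ) : Prop :=
  ∃ f : (EC (n:ℚ)).Point → Fin S, ∀ P Q, f P = f Q → ∃ R : (EC (n:ℚ)).Point, P - Q = 3 • R

lemma hh_bounds (hn : n ≠ 0) {L : ℕ} (hL : 1 ≤ L) {x : ℚ} {g : ℕ} (hg : L = x.den * g) (hg16 : g ^ 16 ≤ L)
    {X : ℝ} (hX : 1 ≤ X) (h1 : mx x ≤ 129 * |(n:ℝ)| * X) (h2 : X ≤ 129 * |(n:ℝ)| * mx x) :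
    hh x ≤ Real.log (L * X) + Real.log 129 + Real.log |(n:ℝ)| ∧
    15/16 * Real.log (L * X) - Real.log 129 - Real.log |(n:ℝ)| ≤ hh x := by
  have hn1 := nabs hn
  have hm := one_le_mx x
  have hd : (1:ℝ) ≤ x.den := by exact_mod_cast x.den_pos
  have hLR : (1:ℝ) ≤ L := by exact_mod_cast hL
  have hg0 : 1 ≤ g := by
    rcases Nat.eq_zero_or_pos g with h | h
    · subst h; simp at hg; omega
    · exact h
  have hgR : (1:ℝ) ≤ g := by exact_mod_cast hg0
  have e1 : Real.log L = Real.log x.den + Real.log g := by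
    rw [← Real.log_mul (by positivity) (by positivity)]; rw [hg]; push_cast; rfl
  have e2 : 16 * Real.log g ≤ Real.log L := by
    have := Real.log_le_log (x := (g:ℝ) ^ 16) (y := L) (by positivity) (by exact_mod_cast hg16)
    rw [Real.log_pow] at this
    exact_mod_cast this
  have e3 : Real.log (mx x) ≤ Real.log 129 + Real.log |(n:ℝ)| + Real.log X := by
    rw [← Real.log_mul (by positivity) (by positivity), ← Real.log_mul (by positivity) (by positivity)]
    exact Real.log_le_log (by linarith) h1
  have e4 : Real.log X ≤ Real.log 129 + Real.log |(n:ℝ)| + Real.log (mx x) := by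
    rw [← Real.log_mul (by positivity) (by positivity), ← Real.log_mul (by positivity) (by positivity)]
    exact Real.log_le_log (by linarith) h2
  have e5 : Real.log (L * X) = Real.log L + Real.log X := Real.log_mul (by positivity) (by positivity)
  have e6 : 0 ≤ Real.log g := Real.log_nonneg hgR
  have e7 : 0 ≤ Real.log X := Real.log_nonneg hX
  rw [hh_eq_mx, e5]
  constructor <;> linarith

end core
end AM

set_option linter.unusedSectionVars false
set_option linter.unusedVariables false
namespace AM
open WeierstrassCurve WeierstrassCurve.Affine

section core2
variable {n : ℤ}

lemma abs_le_mx (x : ℚ) : |(x:ℝ)| ≤ mx x := le_max_left _ _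

lemma hz_sum (hn : n ≠ 0) {T : Finset (ℚ × ℚ)} {L : ℕ} (hT : GoodSet n T L) {p0 p q : ℚ × ℚ} (h0 : p0 ∈ T)
    (hp : p ∈ T) (hq : q ∈ T) (hne : p ≠ q) :
    hz (mk (nq hn) p.1 p.2 (hT.2.1 p hp) + mk (nq hn) q.1 q.2 (hT.2.1 q hq)) ≤
      9 * Real.log (L * mx p0.1) + 9 * Real.log 129 + 10 * Real.log |(n:ℝ)| + 3 * Real.log 8 := by
  obtain ⟨hL, hE, hD, hM⟩ := hT
  have hn1 := nabs hn
  have hm := one_le_mx p0.1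
  have hLR : (1:ℝ) ≤ L := by exact_mod_cast hL
  have hM0 : 0 ≤ Real.log (L * mx p0.1) := Real.log_nonneg (one_le_mul_of_one_le_of_one_le hLR hm)
  have hl0 : 0 ≤ Real.log |(n:ℝ)| := Real.log_nonneg hn1
  have h129 : 0 ≤ Real.log 129 := Real.log_nonneg (by norm_num)
  have h8 : 0 ≤ Real.log 8 := Real.log_nonneg (by norm_num)
  by_cases hx : p.1 = q.1
  · have e1 := hE p hp
    have e2 := hE q hq
    have hy : q.2 = - p.2 := by
      have : (q.2 - p.2) * (q.2 + p.2) = 0 := by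
        rw [hx] at e1; linear_combination e2 - e1
      rcases mul_eq_zero.1 this with h | h
      · exact absurd (Prod.ext hx (by linarith)) hne
      · linarith
    have : mk (nq hn) p.1 p.2 e1 + mk (nq hn) q.1 q.2 e2 = 0 := by
      have e3 : p.2 ^ 2 = q.1 ^ 3 + n := by rw [← hx]; exact e1
      rw [mk_congr (nq hn) hx rfl (h' := e3)]
      exact mk_add_neg _ hy
    rw [this, hz_zero]
    linarith
  · have hs : p.1 - q.1 ≠ 0 := sub_ne_zero.2 hx
    have hl : (p.2 - q.2) / (p.1 - q.1) * (p.1 - q.1) = p.2 - q.2 := div_mul_cancel₀ _ hs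
    rw [mk_add (nq hn) hx hl rfl rfl (h3 := chord_eq (hE p hp) (hE q hq) hx hl)]
    refine (hz_le hn _).trans ?_
    obtain ⟨g1, hg1, -⟩ := hD p hp
    obtain ⟨g2, hg2, -⟩ := hD q hq
    have := sum_height hn (hE p hp) (hE q hq) hx hl hL ⟨g1, hg1⟩ ⟨g2, hg2⟩ (B := 129 * |(n:ℝ)| * mx p0.1)
      (by nlinarith [mul_le_mul_of_nonneg_left hm (abs_nonneg (n:ℝ))])
      ((abs_le_mx _).trans (hM p0 h0 p hp)) ((abs_le_mx _).trans (hM p0 h0 q hq))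
    have e : Real.log (8 * (L:ℝ) ^ 3 * (129 * |(n:ℝ)| * mx p0.1) ^ 3) =
        Real.log 8 + 3 * Real.log (L * mx p0.1) + 3 * Real.log 129 + 3 * Real.log |(n:ℝ)| := by
      have : 8 * (L:ℝ) ^ 3 * (129 * |(n:ℝ)| * mx p0.1) ^ 3 = 8 * (L * mx p0.1) ^ 3 * 129 ^ 3 * |(n:ℝ)| ^ 3 := by
        ring
      rw [this, Real.log_mul (by positivity) (by positivity), Real.log_mul (by positivity) (by positivity),
        Real.log_mul (by positivity) (by positivity), Real.log_pow, Real.log_pow, Real.log_pow]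
      norm_num
    rw [e] at this
    linarith


lemma core_dich : ∃ C3 : ℝ, 0 < C3 ∧ ∀ n : ℤ, ∀ hn : n ≠ 0, ∀ S : ℕ, 0 < S → ClassMap n S →
    ∀ g : (EC (n:ℚ)).Point → ℝ, (∀ P, 0 ≤ g P) → (∀ P, |g P - hz P| ≤ Cd) →
      (∀ P Q, g (P + Q) + g (P - Q) = 2 * g P + 2 * g Q) → (∀ t, {P | g P ≤ t}.Finite) →
    ∀ T L, GoodSet n T L → T.card ≤ S ^ 5 ∨
      T.card ≤ {P | g P ≤ C3 * (Real.log |(n:ℝ)| + 1)}.ncard := by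
  have h129 : 0 ≤ Real.log 129 := Real.log_nonneg (by norm_num)
  have h8 : 0 ≤ Real.log 8 := Real.log_nonneg (by norm_num)
  have hCd := Cd_nonneg
  set C2 := 4 * (21 * Real.log 129 + 26 + 5 * Cd + 3 * Real.log 8) with hC2
  refine ⟨3 * C2 + 3 * Real.log 129 + 4 + Cd, by positivity, ?_⟩
  intro n hn S hS ⟨f, hf⟩ g g0 g1 par fin T L hT
  have hl0 : 0 ≤ Real.log |(n:ℝ)| := Real.log_nonneg (nabs hn)
  set l := Real.log |(n:ℝ)| with hl
  rcases T.eq_empty_or_nonempty with rfl | ⟨p0, h0⟩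
  · right; simp
  have hT' := hT
  obtain ⟨hL, hE, hD, hM⟩ := hT
  set M0 := Real.log (L * mx p0.1) with hM0
  have hm := one_le_mx p0.1
  have hLR : (1:ℝ) ≤ L := by exact_mod_cast hL
  have hM00 : 0 ≤ M0 := Real.log_nonneg (one_le_mul_of_one_le_of_one_le hLR hm)
  classical
  let φ : {p // p ∈ T} → (EC (n:ℚ)).Point := fun p => mk (nq hn) p.1.1 p.1.2 (hE p.1 p.2)
  have hφ : Function.Injective φ := by
    intro p q h
    have := (mk_inj (nq hn)).1 h
    exact Subtype.ext (Prod.ext this.1 this.2)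
  have hub : ∀ p, g (φ p) ≤ 3 * M0 + 3 * Real.log 129 + 4 * l + Cd ∧
      45/16 * M0 - 3 * Real.log 129 - 4 * l - Cd ≤ g (φ p) := by
    intro p
    obtain ⟨gg, hg, hg16⟩ := hD p.1 p.2
    obtain ⟨b1, b2⟩ := hh_bounds hn hL hg hg16 hm (hM _ h0 _ p.2) (hM _ p.2 _ h0)
    have a1 := hz_le hn (hE p.1 p.2)
    have a2 := le_hz hn (hE p.1 p.2)
    have a3 := abs_le.1 (g1 (φ p))
    change _ ≤ g (φ p) - hz (mk (nq hn) p.1.1 p.1.2 (hE p.1 p.2)) ∧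
      g (φ p) - hz (mk (nq hn) p.1.1 p.1.2 (hE p.1 p.2)) ≤ _ at a3
    constructor <;> linarith
  have hcard : (Finset.univ.image φ).card = T.card := by
    rw [Finset.card_image_of_injective _ hφ]; simp
  rcases le_or_gt (C2 * (l + 1)) M0 with hc | hc
  · left
    have hM0' : 21 * Real.log 129 + 26 * l + 5 * Cd + 3 * Real.log 8 ≤ M0 / 4 := by
      have : 4 * (21 * Real.log 129 + 26 * l + 5 * Cd + 3 * Real.log 8) ≤ C2 * (l + 1) := by
        rw [hC2]; nlinarith [mul_nonneg h129 hl0, mul_nonneg h8 hl0, mul_nonneg hCd hl0]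
      linarith
    have hpos : 0 < M0 := by
      have : 0 < C2 * (l + 1) := by positivity
      linarith
    rw [← hcard]
    apply packing g0 par fin hf M0 hpos
    · intro P hP
      obtain ⟨p, -, rfl⟩ := Finset.mem_image.1 hP
      have := (hub p).1
      linarith
    · intro P hP Q hQ hne
      obtain ⟨p, -, rfl⟩ := Finset.mem_image.1 hP
      obtain ⟨q, -, rfl⟩ := Finset.mem_image.1 hQ
      have hpq : p.1 ≠ q.1 := by
        intro h; exact hne (congrArg φ (Subtype.ext h))
      have a1 := hz_sum hn hT' h0 p.2 q.2 hpq
      have a2 := abs_le.1 (g1 (φ p + φ q))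
      have a3 := par (φ p) (φ q)
      have a4 := (hub p).2
      have a5 := (hub q).2
      change hz (φ p + φ q) ≤ _ at a1
      linarith
  · right
    rw [← hcard, Set.ncard_eq_toFinset_card _ (fin _)]
    apply Finset.card_le_card
    intro P hP
    obtain ⟨p, -, rfl⟩ := Finset.mem_image.1 hP
    simp only [Set.Finite.mem_toFinset, Set.mem_ofPred_eq]
    have := (hub p).1
    nlinarith [mul_nonneg h129 hl0, mul_nonneg hCd hl0]

theorem core_bound : ∃ K j : ℕ, 0 < j ∧ 0 < K ∧ ∀ n : ℤ, SixthPowerFree n → ∀ S : ℕ, 0 < S → ClassMap n S →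
    ∀ T L, GoodSet n T L → T.card ≤ K * S ^ j := by
  obtain ⟨C3, hC3, H⟩ := core_dich
  have hCd := Cd_nonneg
  obtain ⟨j2, hj2⟩ : ∃ j2 : ℕ, ((4:ℝ)/9) ^ j2 < 1 / (60 * C3) :=
    exists_pow_lt_of_lt_one (by positivity) (by norm_num)
  have hj2' : ((4:ℝ)/9) ^ j2 * C3 ≤ 1/60 := by
    calc _ ≤ 1 / (60 * C3) * C3 := by gcongr
      _ = 1/60 := by field_simp
  set A := 4/3 * (Real.log 32 + 1/4 + 15 * Cd) with hA
  set N0 : ℕ := ⌈Real.exp A⌉₊ with hN0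
  set Kf : ℤ → ℕ := fun n => {P : (EC (n:ℚ)).Point | hz P ≤ (Real.log |(n:ℝ)| + 1)/60 + Cd}.ncard with hKf
  refine ⟨4 + ∑ m ∈ Finset.Icc (-(N0:ℤ)) N0, Kf m, 5 + j2, by omega, by omega, ?_⟩
  intro n hn S hS hcm T L hT
  obtain ⟨g, g0, g1, par, fin⟩ := exists_ghat hn.1
  have hl0 : 0 ≤ Real.log |(n:ℝ)| := Real.log_nonneg (nabs hn.1)
  rcases H n hn.1 S hS hcm g g0 g1 par fin T L hT with h | h
  · calc T.card ≤ S ^ 5 := h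
      _ ≤ S ^ (5 + j2) := Nat.pow_le_pow_right hS (by omega)
      _ = 1 * S ^ (5 + j2) := (one_mul _).symm
      _ ≤ _ := Nat.mul_le_mul_right _ (by omega)
  · obtain ⟨f, hf⟩ := hcm
    have b1 := ball_iter g0 par fin hf (C3 * (Real.log |(n:ℝ)| + 1)) j2
    have b2 : {P | g P ≤ (4 / 9) ^ j2 * (C3 * (Real.log |(n:ℝ)| + 1))}.ncard ≤ Kf n := by
      apply Set.ncard_le_ncard _ (hz_finite hn.1 _)
      intro P hP
      simp only [Set.mem_ofPred_eq] at hP ⊢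
      have := abs_le.1 (g1 P)
      have h3 : ((4:ℝ) / 9) ^ j2 * (C3 * (Real.log |(n:ℝ)| + 1)) ≤ 1/60 * (Real.log |(n:ℝ)| + 1) := by
        rw [← mul_assoc]; gcongr
      linarith
    have b3 : Kf n ≤ 4 + ∑ m ∈ Finset.Icc (-(N0:ℤ)) N0, Kf m := by
      rcases lt_or_ge A (Real.log |(n:ℝ)|) with hc | hc
      · have := small_ball hn ((Real.log |(n:ℝ)| + 1)/60 + Cd) (by linarith)
        exact this.trans (by omega)
      · have hle : |(n:ℝ)| ≤ N0 := by
          have : |(n:ℝ)| ≤ Real.exp A := (Real.log_le_iff_le_exp (by have := nabs hn.1; linarith)).1 hc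
          exact this.trans (Nat.le_ceil _)
        have hle' : |n| ≤ N0 := by exact_mod_cast hle
        have hmem : n ∈ Finset.Icc (-(N0:ℤ)) N0 := Finset.mem_Icc.2 (abs_le.1 hle')
        have := Finset.single_le_sum (f := Kf) (fun _ _ => Nat.zero_le _) hmem
        omega
    calc T.card ≤ _ := h
      _ ≤ S ^ j2 * _ := b1
      _ ≤ S ^ j2 * (4 + ∑ m ∈ Finset.Icc (-(N0:ℤ)) N0, Kf m) := Nat.mul_le_mul_left _ (b2.trans b3)
      _ ≤ S ^ (5 + j2) * _ := Nat.mul_le_mul_right _ (Nat.pow_le_pow_right hS (by omega))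
      _ = _ := mul_comm _ _

end core2
end AM

set_option linter.unusedSectionVars false
set_option linter.unusedVariables false
namespace AM

lemma den_add_int (x : ℚ) (n : ℤ) : (x + n).den = x.den := by
  simp

lemma den_shape {x y : ℚ} {n : ℤ} (h : y ^ 2 = x ^ 3 + n) : ∃ d : ℕ, x.den = d ^ 2 ∧ y.den = d ^ 3 := by
  apply Nat.exists_eq_pow_of_exponent_coprime_of_pow_eq_pow rfl
  rw [← Rat.den_pow, ← Rat.den_pow, h, den_add_int]

lemma ap_coprime {N c : ℕ} (hc : 2 ≤ c) {z : Fin N → ℚ} {a b : ℚ} (hz : ∀ i, z i = a + (((i:ℕ)+1 : ℕ):ℚ) * b)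
    {d : Fin N → ℕ} (hd : ∀ i, (z i).den = d i ^ c) {D : ℕ} {r : Fin N → ℕ} (hr : ∀ i, D = d i * r i)
    (hD0 : 0 < D) (hD : ∀ D', (∀ i, d i ∣ D') → D ∣ D') {i j : Fin N} (hij : i < j) : Nat.Coprime (r i) (r j) := by
  by_contra hcop
  obtain ⟨p, hp, hpi, hpj⟩ := Nat.Prime.not_coprime_iff_dvd.1 hcop
  have hpI : Prime (p:ℤ) := Nat.prime_iff_prime_int.1 hp
  -- an index with p not dividing
  obtain ⟨k, hk⟩ : ∃ k, ¬ p ∣ r k := by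
    by_contra hall
    push Not at hall
    obtain ⟨D', hD'⟩ : p ∣ D := (hpi).trans ⟨d i, by rw [hr i, mul_comm]⟩
    have h1 : ∀ i, d i ∣ D' := by
      intro i
      obtain ⟨s, hs⟩ := hall i
      refine ⟨s, ?_⟩
      have := hr i
      rw [hs, hD'] at this
      apply Nat.eq_of_mul_eq_mul_left hp.pos
      rw [this]; ring
    have h2 := Nat.le_of_dvd (by
      rcases Nat.eq_zero_or_pos D' with h | h
      · subst h; omega
      · exact h) (hD D' h1)
    have := hp.two_le
    nlinarith [Nat.pos_of_ne_zero (by rintro rfl; omega : D' ≠ 0)]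
  have hpD : p ∣ D := (hpi).trans ⟨d i, by rw [hr i, mul_comm]⟩
  have hnum : ∀ k, ¬ p ∣ r k → ¬ (p:ℤ) ∣ (z k).num := by
    intro k hk h
    have h1 : p ∣ d k := by
      rw [hr k] at hpD
      exact (hp.dvd_mul.1 hpD).resolve_right hk
    have h2 : p ∣ (z k).den := by rw [hd k]; exact h1.trans (dvd_pow_self _ (by omega))
    have h3 : p ∣ (z k).num.natAbs := Int.natCast_dvd.1 h
    exact Nat.Prime.not_coprime_iff_dvd.2 ⟨p, hp, h3, h2⟩ (z k).reduced
  let w : Fin N → ℤ := fun k => (r k : ℤ) ^ c * (z k).num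
  have hw : ∀ k, (w k : ℚ) = (D:ℚ) ^ c * z k := by
    intro k
    have h1 : (D:ℚ) = d k * r k := by exact_mod_cast hr k
    have h2 : ((z k).den : ℚ) = (d k : ℚ) ^ c := by rw [hd k]; push_cast; rfl
    simp only [w]; push_cast
    rw [h1, mul_pow, ← h2, ← Rat.mul_den_eq_num (z k)]; ring
  have hN : 1 < N := by have := j.2; have : (i:ℕ) < j := hij; omega
  let B : ℤ := w ⟨1, hN⟩ - w ⟨0, by omega⟩
  have hB : ∀ k l, w k = w l + ((k:ℕ) - (l:ℕ) : ℤ) * B := by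
    intro k l
    have : (w k : ℚ) = (w l + ((k:ℕ) - (l:ℕ) : ℤ) * B : ℤ) := by
      simp only [B]
      push_cast
      rw [hw, hw, hw, hw, hz, hz, hz ⟨1, hN⟩, hz ⟨0, by omega⟩]
      push_cast; ring
    exact_mod_cast this
  have hwk : ∀ k, ¬ p ∣ r k → ¬ (p:ℤ) ∣ w k := by
    intro k hk h
    rcases hpI.dvd_or_dvd h with h | h
    · exact hk (by exact_mod_cast hpI.dvd_of_dvd_pow h)
    · exact hnum k hk h
  have hw2 : ∀ k, p ∣ r k → (p:ℤ) ^ 2 ∣ w k := by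
    intro k hk
    have : (p:ℤ) ∣ r k := by exact_mod_cast hk
    exact ((pow_dvd_pow_of_dvd this 2).trans (pow_dvd_pow _ hc)).trans (dvd_mul_right _ _)
  have hw1 : ∀ k, p ∣ r k → (p:ℤ) ∣ w k := fun k hk => (dvd_pow_self _ (by norm_num)).trans (hw2 k hk)
  have hpB : ¬ (p:ℤ) ∣ B := by
    intro h
    apply hwk k hk
    rw [hB k i]
    exact dvd_add (hw1 i hpi) (h.mul_left _)
  have hdiff : (p:ℤ) ∣ ((j:ℕ) - (i:ℕ) : ℤ) := by
    have h1 : ((j:ℕ) - (i:ℕ) : ℤ) * B = w j - w i := by rw [hB j i]; ring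
    have h2 : (p:ℤ) ∣ ((j:ℕ) - (i:ℕ) : ℤ) * B := by rw [h1]; exact dvd_sub (hw1 j hpj) (hw1 i hpi)
    exact (hpI.dvd_or_dvd h2).resolve_right hpB
  have hij' : (i:ℕ) < j := hij
  have hle : (p:ℤ) ≤ (j:ℕ) - (i:ℕ) := Int.le_of_dvd (by omega) hdiff
  have hj2 := j.2
  let m : Fin N := ⟨(i:ℕ) + p, by omega⟩
  have hm : w m = w i + p * B := by
    rw [hB m i]; simp [m]
  have hpm : (p:ℤ) ∣ w m := by rw [hm]; exact dvd_add (hw1 i hpi) (dvd_mul_right _ _)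
  have hpr : p ∣ r m := by
    by_contra h; exact hwk m h hpm
  have h3 : (p:ℤ) ^ 2 ∣ p * B := by
    have : (p:ℤ) * B = w m - w i := by rw [hm]; ring
    rw [this]; exact dvd_sub (hw2 m hpr) (hw2 i hpi)
  rw [sq] at h3
  exact hpB (Int.dvd_of_mul_dvd_mul_left (by exact_mod_cast hp.ne_zero) h3)

lemma few_big {N D : ℕ} (hD0 : 0 < D) {r : Fin N → ℕ} (hr : ∀ i, r i ∣ D)
    (hcop : ∀ i j, i < j → Nat.Coprime (r i) (r j)) :
    (Finset.univ.filter (fun i => D < r i ^ 16)).card ≤ 15 := by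
  by_contra h
  push Not at h
  set E := Finset.univ.filter (fun i => D < r i ^ 16) with hE
  have h1 : ∏ i ∈ E, r i ∣ D := by
    apply Finset.prod_dvd_of_isRelPrime
    · intro i _ j _ hij
      rw [Function.onFun, ← Nat.coprime_iff_isRelPrime]
      rcases lt_or_gt_of_ne hij with h | h
      · exact hcop _ _ h
      · exact (hcop _ _ h).symm
    · intro i _; exact hr i
  have h2 := Nat.le_of_dvd hD0 h1
  have h3 : D ^ E.card < ∏ i ∈ E, r i ^ 16 := by
    rw [← Finset.prod_const]
    apply Finset.prod_lt_prod_of_nonempty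
    · intro i _; exact hD0
    · intro i hi; exact (Finset.mem_filter.1 hi).2
    · rw [← Finset.card_pos]; omega
  rw [Finset.prod_pow] at h3
  have h4 : D ^ 16 ≤ D ^ E.card := Nat.pow_le_pow_right hD0 (by omega)
  have h5 := Nat.pow_le_pow_left h2 16
  omega

lemma many_good {N : ℕ} {z : Fin N → ℝ} {a b : ℝ} (hz : ∀ i, z i = a + (((i:ℕ)+1 : ℕ):ℝ) * b) :
    N ≤ 2 * (Finset.univ.filter (fun i => ∀ j, |z j| ≤ 5 * |z i|)).card + 1 := by
  set G := Finset.univ.filter (fun i => ∀ j, |z j| ≤ 5 * |z i|) with hG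
  set m := N / 2 with hm
  have key : ∀ i : Fin m, ∃ g : Fin N, g ∈ G ∧ ((g:ℕ) = i ∨ (g:ℕ) = i + m) := by
    intro i
    have hi := i.2
    let i1 : Fin N := ⟨i, by omega⟩
    let i2 : Fin N := ⟨i + m, by omega⟩
    have h1 : z i2 - z i1 = m * b := by
      rw [hz, hz]; simp only [i1, i2]; push_cast; ring
    have h2 : m * |b| ≤ |z i1| + |z i2| := by
      have : (m:ℝ) * |b| = |z i2 - z i1| := by rw [h1, abs_mul, Nat.abs_cast]
      rw [this]; have := abs_sub (z i2) (z i1); linarith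
    have h3 : ∀ i j, |z j| ≤ |z i| + 2 * (|z i1| + |z i2|) := by
      intro i j
      have e : z j = z i + ((j:ℕ) - (i:ℕ) : ℝ) * b := by rw [hz, hz]; push_cast; ring
      have e2 : |((j:ℕ) - (i:ℕ) : ℝ)| ≤ 2 * m := by
        have a1 := i.2
        have a2 := j.2
        rw [abs_le]
        have b1 : ((j:ℕ):ℝ) ≤ 2 * m := by exact_mod_cast (by omega : (j:ℕ) ≤ 2 * m)
        have b2 : ((i:ℕ):ℝ) ≤ 2 * m := by exact_mod_cast (by omega : (i:ℕ) ≤ 2 * m)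
        have b3 : (0:ℝ) ≤ (j:ℕ) := by positivity
        have b4 : (0:ℝ) ≤ (i:ℕ) := by positivity
        constructor <;> linarith
      rw [e]
      refine (abs_add_le _ _).trans ?_
      rw [abs_mul]
      have := mul_le_mul_of_nonneg_right e2 (abs_nonneg b)
      linarith
    rcases le_total (|z i2|) (|z i1|) with h | h
    · refine ⟨i1, ?_, Or.inl rfl⟩
      simp only [hG, Finset.mem_filter, Finset.mem_univ, true_and]
      intro j; have := h3 i1 j; linarith
    · refine ⟨i2, ?_, Or.inr rfl⟩
      simp only [hG, Finset.mem_filter, Finset.mem_univ, true_and]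
      intro j; have := h3 i2 j; linarith
  choose g hg1 hg2 using key
  have hinj : Function.Injective g := by
    intro i j h
    have a1 := hg2 i
    have a2 := hg2 j
    rw [h] at a1
    have b1 := i.2
    have b2 := j.2
    apply Fin.ext
    omega
  have : m ≤ G.card := by
    have h1 := Finset.card_le_card_of_injOn (s := Finset.univ) (t := G) g (fun i _ => hg1 i) hinj.injOn
    simpa using h1
  omega

lemma ap_good {n : ℤ} (hn : n ≠ 0) {N : ℕ} {x y : Fin N → ℚ} (h : ∀ i, y i ^ 2 = x i ^ 3 + n)
    (hap : IsNontrivAP x ∨ IsNontrivAP y) : ∃ T L, GoodSet n T L ∧ N ≤ 2 * T.card + 31 := by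
  classical
  choose d hd2 hd3 using fun i => den_shape (h i)
  have hdpos : ∀ i, d i ≠ 0 := by
    intro i h0
    have := hd2 i
    rw [h0] at this
    exact (x i).den_ne_zero (by simpa using this)
  set D := Finset.univ.lcm d with hDdef
  have hD0 : 0 < D := by
    rw [Nat.pos_iff_ne_zero]
    intro h0
    rw [hDdef, Finset.lcm_eq_zero_iff] at h0
    obtain ⟨i, hi⟩ := h0
    exact hdpos i (by simpa using hi)
  have hdvd : ∀ i, d i ∣ D := fun i => Finset.dvd_lcm (Finset.mem_univ i)
  choose r hr using hdvd
  have hmin : ∀ D', (∀ i, d i ∣ D') → D ∣ D' := fun D' hD' => Finset.lcm_dvd (fun i _ => hD' i)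
  have hcop : ∀ i j, i < j → Nat.Coprime (r i) (r j) := by
    intro i j hij
    rcases hap with ⟨a, b, -, hz⟩ | ⟨a, b, -, hz⟩
    · exact ap_coprime (le_refl 2) hz hd2 hr hD0 hmin hij
    · exact ap_coprime (by norm_num) hz hd3 hr hD0 hmin hij
  have hfew := few_big hD0 (fun i => ⟨d i, by rw [hr i, mul_comm]⟩) hcop
  set E := Finset.univ.filter (fun i => D < r i ^ 16) with hE
  have hinj : Function.Injective (fun i => (x i, y i)) := by
    intro i j hij
    have aux : ∀ z : Fin N → ℚ, IsNontrivAP z → z i = z j → i = j := by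
      rintro z ⟨a, b, hb, hz⟩ hz2
      rw [hz, hz] at hz2
      have := mul_right_cancel₀ hb (add_left_cancel hz2)
      have h2 : (i:ℕ) + 1 = (j:ℕ) + 1 := by exact_mod_cast this
      exact Fin.ext (by omega)
    have := Prod.ext_iff.1 hij
    rcases hap with hap | hap
    · exact aux x hap this.1
    · exact aux y hap this.2
  have hn1 := nabs hn
  have hG : ∃ G : Finset (Fin N), N ≤ 2 * G.card + 1 ∧ ∀ i ∈ G, ∀ j, mx (x j) ≤ 129 * |(n:ℝ)| * mx (x i) := by
    rcases hap with ⟨a, b, -, hz⟩ | ⟨a, b, -, hz⟩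
    · refine ⟨_, many_good (z := fun i => (x i : ℝ)) (a := a) (b := b) (fun i => by rw [hz]; push_cast; rfl), ?_⟩
      intro i hi j
      have h1 := (Finset.mem_filter.1 hi).2 j
      have h2 := one_le_mx (x i)
      have h3 := abs_le_mx (x i)
      have h4 : (129:ℝ) * 1 * mx (x i) ≤ 129 * |(n:ℝ)| * mx (x i) := by gcongr
      refine (max_le ?_ ?_) <;> linarith
    · refine ⟨_, many_good (z := fun i => (y i : ℝ)) (a := a) (b := b) (fun i => by rw [hz]; push_cast; rfl), ?_⟩
      intro i hi j
      have h1 := (Finset.mem_filter.1 hi).2 j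
      have h2 := one_le_mx (x i)
      have h3 := abs_le_mx (x i)
      have ei : (y i : ℝ) ^ 2 = (x i : ℝ) ^ 3 + n := by exact_mod_cast h i
      have ej : (y j : ℝ) ^ 2 = (x j : ℝ) ^ 3 + n := by exact_mod_cast h j
      have h5 : (y j : ℝ) ^ 2 ≤ 25 * (y i : ℝ) ^ 2 := by
        have := pow_le_pow_left₀ (abs_nonneg _) h1 2
        rw [mul_pow, sq_abs, sq_abs] at this
        linarith
      have h6 : (x i : ℝ) ^ 3 ≤ mx (x i) ^ 3 := by
        calc (x i:ℝ) ^ 3 ≤ |(x i:ℝ) ^ 3| := le_abs_self _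
          _ = |(x i:ℝ)| ^ 3 := abs_pow _ _
          _ ≤ _ := by gcongr
      have h7 : |(x j : ℝ)| ^ 3 ≤ (y j : ℝ) ^ 2 + |(n:ℝ)| := by
        rw [← abs_pow, abs_le]
        have := neg_abs_le (n:ℝ)
        have := le_abs_self (n:ℝ)
        have := sq_nonneg (y j : ℝ)
        constructor <;> linarith
      have h8 : |(x j : ℝ)| ^ 3 ≤ (129 * |(n:ℝ)| * mx (x i)) ^ 3 := by
        have a1 := le_abs_self (n:ℝ)
        have a2 : 1 ≤ mx (x i) ^ 3 := one_le_pow₀ h2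
        have a3 : |(x j : ℝ)| ^ 3 ≤ 25 * mx (x i) ^ 3 + 26 * |(n:ℝ)| := by linarith
        have a4 : 25 * mx (x i) ^ 3 + 26 * |(n:ℝ)| ≤ 51 * (|(n:ℝ)| * mx (x i) ^ 3) := by nlinarith
        have a5 : |(n:ℝ)| ≤ |(n:ℝ)| ^ 3 := le_self_pow₀ hn1 (by norm_num)
        calc _ ≤ 51 * (|(n:ℝ)| * mx (x i) ^ 3) := a3.trans a4
          _ ≤ 129 ^ 3 * (|(n:ℝ)| ^ 3 * mx (x i) ^ 3) := by gcongr; norm_num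
          _ = _ := by ring
      have h9 : |(x j : ℝ)| ≤ 129 * |(n:ℝ)| * mx (x i) := le_of_pow_le_pow_left₀ (by norm_num) (by positivity) h8
      refine max_le h9 ?_
      have h4 : (129:ℝ) * 1 * 1 ≤ 129 * |(n:ℝ)| * mx (x i) := by gcongr
      linarith
  obtain ⟨G, hGc, hG⟩ := hG
  refine ⟨(G \ E).image (fun i => (x i, y i)), D ^ 2, ⟨?_, ?_, ?_, ?_⟩, ?_⟩
  · exact Nat.one_le_pow _ _ hD0
  · intro p hp
    obtain ⟨i, -, rfl⟩ := Finset.mem_image.1 hp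
    exact h i
  · intro p hp
    obtain ⟨i, hi, rfl⟩ := Finset.mem_image.1 hp
    refine ⟨r i ^ 2, ?_, ?_⟩
    · simp only; rw [hd2 i, ← mul_pow, ← hr i]
    · have : i ∉ E := (Finset.mem_sdiff.1 hi).2
      simp only [hE, Finset.mem_filter, Finset.mem_univ, true_and, not_lt] at this
      calc (r i ^ 2) ^ 16 = (r i ^ 16) ^ 2 := by ring
        _ ≤ _ := Nat.pow_le_pow_left this 2
  · intro p hp q hq
    obtain ⟨i, hi, rfl⟩ := Finset.mem_image.1 hp
    obtain ⟨j, hj, rfl⟩ := Finset.mem_image.1 hq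
    exact hG i (Finset.mem_sdiff.1 hi).1 j
  · rw [Finset.card_image_of_injective _ hinj]
    have := Finset.le_card_sdiff E G
    omega

/-- main bound on the beta invariants in terms of the number of classes -/
theorem beta_bound : ∃ K j : ℕ, 0 < j ∧ 0 < K ∧ ∀ n : ℤ, SixthPowerFree n → ∀ S : ℕ, 0 < S → ClassMap n S →
    max (betaX (MordellCurve n)) (betaY (MordellCurve n)) ≤ ((K * S ^ j : ℕ) : ℕ∞) := by
  obtain ⟨K, j, hj, hK, H⟩ := core_bound
  refine ⟨2 * K + 31, j, hj, by omega, ?_⟩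
  intro n hn S hS hcm
  have key : ∀ N : ℕ, ∀ x y : Fin N → ℚ, (∀ i, (MordellCurve n).toAffine.Nonsingular (x i) (y i)) →
      (IsNontrivAP x ∨ IsNontrivAP y) → N ≤ (2 * K + 31) * S ^ j := by
    intro N x y hxy hap
    obtain ⟨T, L, hT, hN⟩ := ap_good hn.1 (fun i => (nonsing_iff (nq hn.1) _ _).1 (hxy i)) hap
    have h1 := H n hn S hS hcm T L hT
    have h2 : 1 ≤ S ^ j := Nat.one_le_pow _ _ hS
    nlinarith
  apply max_le
  · apply iSup₂_le
    rintro N ⟨x, y, h1, h2⟩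
    exact_mod_cast key N x y h1 (Or.inl h2)
  · apply iSup₂_le
    rintro N ⟨x, y, h1, h2⟩
    exact_mod_cast key N x y h1 (Or.inr h2)

end AM

set_option linter.unusedSectionVars false
set_option linter.unusedVariables false
namespace AM
open WeierstrassCurve WeierstrassCurve.Affine

lemma collin {F : Type*} [Field F] {x1 x2 x3 l m w : F} (hE : l^2*(x1+x2)+2*l*m = x1^2+x1*x2+x2^2)
    (h1 : (l*x1+m)^2 = x1^3+w^2) (h3 : x3 = l^2-x1-x2) :
    (l*x1+m+w)*(l*x2+m+w)*(l*x3+m+w) = (m+w)^3 ∧ m^2-w^2 = x1*x2*x3 := by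
  have e2 : x1*x2+x3*(x1+x2) = -2*l*m := by rw [h3]; linear_combination hE
  have e3 : m^2-w^2 = x1*x2*x3 := by
    rw [h3]
    linear_combination h1 - x1 * hE
  refine ⟨?_, e3⟩
  have e1 : x1+x2+x3 = l^2 := by rw [h3]; ring
  linear_combination -l^3*e3 + l^2*(m+w)*e2 + l*(m+w)^2*e1

lemma cube_core {F : Type*} [Field F] {x1 x2 x3 y1 y2 y3 m w z1 z2 : F}
    (hcol : (y1+w)*(-y2+w)*(-y3+w) = (m+w)^3) (hnrm : m^2-w^2 = x1*x2*x3)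
    (h2 : y2^2 = x2^3+w^2) (h3 : y3^2 = x3^3+w^2) (n1 : x1 ≠ 0) (n2 : x2 ≠ 0) (n3 : x3 ≠ 0)
    (hz : (y1+w)*z1^3 = (y2+w)*z2^3) (hz0 : (y2+w)*z2^3 ≠ 0) : ∃ z, z ≠ 0 ∧ y3+w = z^3 := by
  have hm : m + w ≠ 0 := by
    intro h
    have : m^2-w^2 = 0 := by linear_combination (m-w)*h
    rw [hnrm] at this
    exact mul_ne_zero (mul_ne_zero n1 n2) n3 this
  have hz1 : z1 ≠ 0 := by
    rintro rfl; apply hz0; rw [← hz]; ring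
  have hz2 : z2 ≠ 0 := by
    rintro rfl; apply hz0; ring
  have key : ((m+w)*z1)^3*(y3+w) = (z2*x2*x3)^3 := by
    rw [mul_pow, ← hcol]
    linear_combination (-y2+w)*(w^2-y3^2)*hz - (w^2-y3^2)*z2^3*h2 + z2^3*x2^3*h3
  refine ⟨(z2*x2*x3)/((m+w)*z1), by positivity, ?_⟩
  rw [div_pow, ← key]
  field_simp

section cls
variable {c : ℚ} (hc : c ≠ 0)

lemma fin_sq {x y w z : ℚ} (hw : w^2 = c) (h : y ^ 2 = x ^ 3 + c) (hz0 : z ≠ 0) (hz : y + w = z^3) :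
    mk hc x y h ∈ (psi hc).range := by
  have hw0 : w ≠ 0 := by rintro rfl; apply hc; rw [← hw]; norm_num
  have h2 : y - w = (x/z)^3 := by
    rw [div_pow, eq_div_iff (by positivity), ← hz]
    linear_combination h - hw
  apply D1 hc h (s := (z + x/z)/2) (t := (z - x/z)/(2*w))
  · set r := x/z
    rw [← hw]
    have : y = (z^3+r^3)/2 := by linear_combination (hz+h2)/2
    rw [this]; field_simp; ring
  · set r := x/z
    rw [← hw]
    have : w = (z^3-r^3)/2 := by linear_combination (hz-h2)/2
    field_simp
    linear_combination 8 * this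

lemma fin_nonsq (hns : ∀ m : ℚ, m^2 ≠ c) {x y : ℚ} (h : y ^ 2 = x ^ 3 + c) (z : QuadraticAlgebra ℚ c 0)
    (hz : algebraMap ℚ (QuadraticAlgebra ℚ c 0) y + ⟨0,1⟩ = z^3) :
    mk hc x y h ∈ (psi hc).range := by
  obtain ⟨s, t⟩ := z
  have e1 := congrArg QuadraticAlgebra.re hz
  have e2 := congrArg QuadraticAlgebra.im hz
  simp [pow_succ] at e1 e2
  apply D1 hc h (s := s) (t := t)
  · linear_combination e1
  · linear_combination e2

/-- relation between points and class data -/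
def Rl (c y a v : ℚ) : Prop :=
  ∃ s t : ℚ, v = y*(s^3+3*s*t^2*c)+c*(3*s^2*t+t^3*c) ∧ a = (s^3+3*s*t^2*c)+y*(3*s^2*t+t^3*c)

lemma Rl_field {F : Type*} [Field F] (f : ℚ →+* F) {w : F} (hw : w^2 = f c) {y a v : ℚ} (h : Rl c y a v) :
    ∃ z : F, (f y + w) * z^3 = f v + f a * w := by
  obtain ⟨s, t, rfl, rfl⟩ := h
  refine ⟨f s + f t * w, ?_⟩
  simp only [map_add, map_mul, map_pow, map_ofNat, ← hw]
  ring

lemma zero_class {x y r : ℚ} (h : y ^ 2 = x ^ 3 + c) (hr : r ≠ 0) (hR : Rl c y 0 (r^3)) :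
    mk hc x y h ∈ (psi hc).range := by
  by_cases hsq : ∃ m : ℚ, m^2 = c
  · obtain ⟨w, hw⟩ := hsq
    obtain ⟨z, hz⟩ := Rl_field (RingHom.id ℚ) (w := w) hw hR
    simp only [RingHom.id_apply, zero_mul, add_zero] at hz
    have hz0 : z ≠ 0 := by
      rintro rfl; apply pow_ne_zero 3 hr; rw [← hz]; ring
    apply fin_sq hc hw h (z := r/z) (by positivity)
    rw [div_pow, ← hz]; field_simp
  · push Not at hsq
    have : Fact (∀ r : ℚ, r ^ 2 ≠ c + 0 * r) := ⟨fun r => by rw [zero_mul, add_zero]; exact hsq r⟩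
    set f := algebraMap ℚ (QuadraticAlgebra ℚ c 0) with hf
    have hw : (⟨0,1⟩ : QuadraticAlgebra ℚ c 0)^2 = f c := by
      apply QuadraticAlgebra.ext <;> simp [pow_succ, hf]
    obtain ⟨z, hz⟩ := Rl_field f hw hR
    simp only [map_zero, zero_mul, add_zero] at hz
    have hr' : f r ≠ 0 := by simpa using hr
    have hz0 : z ≠ 0 := by
      rintro rfl; apply pow_ne_zero 3 hr'; rw [← map_pow, ← hz]; ring
    apply fin_nonsq hc hsq h (f r / z)
    rw [div_pow, ← map_pow, ← hz, hf]; field_simp; rfl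

lemma class_core {x1 x2 x3 y1 y2 y3 l m a v : ℚ} (h1 : y1 ^ 2 = x1 ^ 3 + c) (h2 : y2 ^ 2 = x2 ^ 3 + c)
    (h3 : y3 ^ 2 = x3 ^ 3 + c) (e1 : y1 = l*x1+m) (e2 : -y2 = l*x2+m) (e3 : -y3 = l*x3+m)
    (hE : l^2*(x1+x2)+2*l*m = x1^2+x1*x2+x2^2) (hx3 : x3 = l^2-x1-x2) (n1 : x1 ≠ 0) (n2 : x2 ≠ 0)
    (r1 : Rl c y1 a v) (r2 : Rl c y2 a v) (hav : a ≠ 0 ∨ v ≠ 0) : mk hc x3 y3 h3 ∈ (psi hc).range := by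
  by_cases hsq : ∃ m : ℚ, m^2 = c
  · obtain ⟨w, hw, hvw⟩ : ∃ w : ℚ, w^2 = c ∧ v + a * w ≠ 0 := by
      obtain ⟨w, hw⟩ := hsq
      by_cases h : v + a * w = 0
      · refine ⟨-w, by rw [neg_sq]; exact hw, ?_⟩
        intro h'
        have hv : v = 0 := by linarith
        have ha : a * w = 0 := by linarith
        have hw0 : w ≠ 0 := by rintro rfl; apply hc; rw [← hw]; norm_num
        rcases hav with h3 | h3
        · exact h3 ((mul_eq_zero.1 ha).resolve_right hw0)
        · exact h3 hv
      · exact ⟨w, hw, h⟩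
    have hw0 : w ≠ 0 := by rintro rfl; apply hc; rw [← hw]; norm_num
    obtain ⟨z1, hz1⟩ := Rl_field (RingHom.id ℚ) (w := w) hw r1
    obtain ⟨z2, hz2⟩ := Rl_field (RingHom.id ℚ) (w := w) hw r2
    simp only [RingHom.id_apply] at hz1 hz2
    obtain ⟨hcol, hnrm⟩ := collin (w := w) hE (by rw [← e1, hw]; exact h1) hx3
    rw [← e1, ← e2, ← e3] at hcol
    have hz20 : (y2+w)*z2^3 ≠ 0 := by rw [hz2]; exact hvw
    by_cases n3 : x3 = 0
    · -- degenerate third point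
      have hz10 : z1 ≠ 0 := by rintro rfl; apply hvw; rw [← hz1]; ring
      have hz2' : z2 ≠ 0 := by rintro rfl; apply hvw; rw [← hz2]; ring
      have hy2w : y2 + w ≠ 0 := left_ne_zero_of_mul hz20
      have hy : (y3 - w) * (y3 + w) = 0 := by
        rw [n3] at h3; linear_combination h3 - hw
      have hzz := hz1.trans hz2.symm
      rcases mul_eq_zero.1 hy with hy | hy
      · have hy3 : y3 = w := by linarith
        have hm : m = -w := by
          have : (m+w)^3 = 0 := by rw [← hcol, hy3]; ring
          have := pow_eq_zero_iff (by norm_num) |>.1 this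
          linarith
        obtain ⟨hcol', -⟩ := collin (w := -w) hE (by rw [← e1, neg_sq, hw]; exact h1) hx3
        rw [← e1, ← e2, ← e3, hm, hy3] at hcol'
        have k1 : (y1-w)*(y2+w) = -4*w^2 := by
          apply mul_left_cancel₀ hw0
          linear_combination hcol'/2
        -- (y1-w)*(y1+w) = x1^3
        have k2 : (y1-w)*(y1+w) = x1^3 := by linear_combination h1 - hw
        have k3 : (x1*z1)^3 = -4*w^2*z2^3 := by
          rw [mul_pow, ← k2]
          linear_combination (y1-w)*hzz + z2^3*k1
        apply fin_sq hc hw h3 (z := -2*w*z2/(x1*z1)) (by positivity)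
        rw [hy3, div_pow, k3]; field_simp; ring
      · have hy3 : y3 = -w := by linarith
        rw [hy3] at hcol
        have k2 : (y2-w)*(y2+w) = x2^3 := by linear_combination h2 - hw
        have k3 : (m+w)^3*z1^3 = -2*w*(x2*z2)^3 := by
          rw [← hcol]
          linear_combination (-y2+w)*(2*w)*hzz - 2*w*z2^3*k2
        have hmw : m + w ≠ 0 := by
          intro h0
          have : -2*w*(x2*z2)^3 ≠ 0 := by positivity
          apply this; rw [← k3, h0]; ring
        apply fin_sq hc (w := -w) (by rw [neg_sq]; exact hw) h3 (z := (m+w)*z1/(x2*z2)) (by positivity)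
        rw [div_pow, mul_pow, k3, hy3]; field_simp; ring
    · obtain ⟨z, hz0, hz⟩ := cube_core hcol hnrm (by rw [hw]; exact h2) (by rw [hw]; exact h3) n1 n2 n3
        (hz1.trans hz2.symm) hz20
      exact fin_sq hc hw h3 hz0 hz
  · push Not at hsq
    have : Fact (∀ r : ℚ, r ^ 2 ≠ c + 0 * r) := ⟨fun r => by rw [zero_mul, add_zero]; exact hsq r⟩
    set f := algebraMap ℚ (QuadraticAlgebra ℚ c 0) with hf
    set w : QuadraticAlgebra ℚ c 0 := ⟨0,1⟩ with hwdef
    have hw : w^2 = f c := by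
      apply QuadraticAlgebra.ext <;> simp [pow_succ, hf, hwdef]
    obtain ⟨z1, hz1⟩ := Rl_field f hw r1
    obtain ⟨z2, hz2⟩ := Rl_field f hw r2
    have n3 : x3 ≠ 0 := by
      rintro rfl; exact hsq y3 (by rw [h3]; ring)
    have inj : ∀ x : ℚ, x ≠ 0 → f x ≠ 0 := fun x hx => by simpa using hx
    have hvw : f v + f a * w ≠ 0 := by
      intro h0
      have a1 := congrArg QuadraticAlgebra.re h0
      have a2 := congrArg QuadraticAlgebra.im h0
      simp [hf, hwdef] at a1 a2
      rcases hav with h | h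
      · exact h a2
      · exact h a1
    have E1 := congrArg f e1
    have E2 := congrArg f e2
    have E3 := congrArg f e3
    have H1 := congrArg f h1
    have H2 := congrArg f h2
    have H3 := congrArg f h3
    have HE := congrArg f hE
    have X3 := congrArg f hx3
    simp only [map_add, map_mul, map_pow, map_ofNat, map_neg, map_sub] at E1 E2 E3 H1 H2 H3 HE X3
    obtain ⟨hcol, hnrm⟩ := collin (w := w) HE (by rw [← E1, hw]; exact H1) X3
    rw [← E1, ← E2, ← E3] at hcol
    obtain ⟨z, hz0, hz⟩ := cube_core hcol hnrm (by rw [hw]; exact H2) (by rw [hw]; exact H3) (inj _ n1) (inj _ n2)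
      (inj _ n3) (hz1.trans hz2.symm) (by rw [hz2]; exact hvw)
    exact fin_nonsq hc hsq h3 z hz

lemma same_class {x1 x2 y1 y2 a v : ℚ} (h1 : y1 ^ 2 = x1 ^ 3 + c) (h2 : y2 ^ 2 = x2 ^ 3 + c)
    (n1 : x1 ≠ 0) (n2 : x2 ≠ 0)
    (r1 : Rl c y1 a v) (r2 : Rl c y2 a v) (hav : a ≠ 0 ∨ v ≠ 0) :
    mk hc x1 y1 h1 - mk hc x2 y2 h2 ∈ (psi hc).range := by
  rw [sub_eq_add_neg, neg_mk]
  have h2' : (-y2) ^ 2 = x2 ^ 3 + c := by rw [neg_sq]; exact h2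
  rcases add_cases hc h1 h2' with hne | ⟨rfl, hy⟩ | ⟨rfl, hy, hy0⟩
  · have hs : x1 - x2 ≠ 0 := sub_ne_zero.2 hne
    obtain ⟨l, hl⟩ : ∃ l, l * (x1 - x2) = y1 - -y2 := ⟨_, div_mul_cancel₀ _ hs⟩
    rw [mk_add hc hne hl rfl rfl (h3 := chord_eq h1 h2' hne hl)]
    apply class_core hc h1 h2 (l := l) (m := y1 - l * x1) _ _ _ _ _ _ n1 n2 r1 r2 hav
    · ring
    · linear_combination hl
    · ring
    · apply mul_left_cancel₀ hs
      linear_combination h1 - h2 + (y1 - y2 - l*(x1-x2)) * hl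
    · rfl
  · rw [mk_add_neg hc hy]; exact zero_mem _
  · obtain ⟨l, hl⟩ : ∃ l, l * (2 * y1) = 3 * x1 ^ 2 := ⟨_, div_mul_cancel₀ _ (by simpa using hy0)⟩
    have e : mk hc x1 (-y2) h2' = mk hc x1 y1 h1 := mk_congr hc rfl hy.symm
    rw [e, mk_dbl hc hy0 hl rfl rfl (h3 := tangent_eq h1 hl)]
    apply class_core hc h1 h2 (l := l) (m := y1 - l * x1) _ _ _ _ _ _ n1 n2 r1 r2 hav
    · ring
    · rw [← hy]; ring
    · ring
    · linear_combination hl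
    · ring

end cls
end AM

set_option linter.unusedSectionVars false
set_option linter.unusedVariables false
namespace AM

lemma minvec {A B C : ℝ} (hA : 0 < A) (hD : 0 < 4*A*C-B^2) :
    ∃ X Y : ℤ, IsCoprime X Y ∧ A*X^2+B*X*Y+C*Y^2 ≤ √(4*A*C-B^2) := by
  set D := 4*A*C-B^2 with hDdef
  have hs : 0 < √D := Real.sqrt_pos.2 hD
  have hss : √D ^ 2 = D := Real.sq_sqrt hD.le
  rcases le_or_gt A (√D) with h | h
  · exact ⟨1, 0, isCoprime_one_left, by simpa using h⟩
  · set R := √(2*A/√D) with hR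
    have hR1 : 1 ≤ R := by
      rw [hR, Real.one_le_sqrt, le_div_iff₀ hs]; linarith
    have hR2 : R ^ 2 = 2*A/√D := Real.sq_sqrt (by positivity)
    set N := ⌊R⌋₊ with hN
    have hN1 : 1 ≤ N := Nat.le_floor (by simpa using hR1)
    have hN2 : (N:ℝ) ≤ R := Nat.floor_le (by linarith)
    have hN3 : R < N + 1 := Nat.lt_floor_add_one R
    obtain ⟨q, hq1, hq2⟩ := Real.exists_rat_abs_sub_le_and_den_le (-B/(2*A)) (n := N) (by omega)
    refine ⟨q.num, q.den, ?_, ?_⟩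
    · rw [Int.isCoprime_iff_gcd_eq_one]
      have := q.reduced
      simpa [Int.gcd, Nat.Coprime] using this
    · have hd : (0:ℝ) < q.den := by exact_mod_cast q.den_pos
      have hdN : (q.den:ℝ) ≤ N := by exact_mod_cast hq2
      have hnum : (q.num : ℝ) = (q:ℝ) * q.den := by
        have := Rat.mul_den_eq_num q
        exact_mod_cast this.symm
      have e : A*(q.num:ℝ)^2+B*q.num*(q.den:ℤ)+C*(q.den:ℤ)^2 =
          A * ((-B/(2*A) - q) * q.den)^2 + D/(4*A) * q.den^2 := by
        rw [hnum, hDdef]; push_cast; field_simp; ring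
      rw [e]
      have h1 : ((-B/(2*A) - q) * q.den)^2 ≤ (1/((N:ℝ)+1))^2 := by
        rw [← sq_abs, abs_mul, abs_of_pos hd]
        apply pow_le_pow_left₀ (by positivity)
        calc _ ≤ 1 / (((N:ℝ)+1) * q.den) * q.den := by gcongr
          _ = _ := by field_simp
      have h2 : (1/((N:ℝ)+1))^2 ≤ √D/(2*A) := by
        have : R^2 ≤ ((N:ℝ)+1)^2 := by gcongr
        rw [hR2] at this
        rw [div_pow, one_pow, div_le_div_iff₀ (by positivity) (by positivity)]
        rw [div_le_iff₀ hs] at this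
        linarith
      have h3 : (q.den:ℝ)^2 ≤ 2*A/√D := by
        rw [← hR2]; gcongr; linarith
      calc _ ≤ A * (√D/(2*A)) + D/(4*A) * (2*A/√D) := by
            gcongr; exact h1.trans h2
        _ = √D/2 + √D^2/(2*√D) := by rw [hss]; field_simp; ring
        _ = √D := by field_simp; norm_num

lemma small_vec_neg {n x y d b : ℝ} (hn : n < 0) (h : y^2 = x^3 + n) (hd : d ≠ 0) :
    ∃ X Y : ℤ, IsCoprime X Y ∧ ∃ A B : ℝ, A = d*X+b*Y ∧ B = Y/d ∧
      (x*A^2-2*y*A*B+x^2*B^2)^2 ≤ 4*|n| ∧ (A^3-3*x*A*B^2+2*y*B^3)^4 ≤ 4096*|n| := by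
  have hx : 0 < x := by
    by_contra hx
    have : x^3 ≤ 0 := by
      have := mul_nonneg_of_nonpos_of_nonpos (not_lt.1 hx) (not_lt.1 hx)
      nlinarith
    nlinarith [sq_nonneg y]
  have hDe : 4*(x*d^2)*(x*b^2-2*y*b/d+x^2/d^2)-(2*x*d*b-2*y)^2 = -4*n := by
    field_simp
    linear_combination (-4) * h
  obtain ⟨X, Y, hXY, hv⟩ := minvec (A := x*d^2) (B := 2*x*d*b-2*y) (C := x*b^2-2*y*b/d+x^2/d^2)
    (by positivity) (by rw [hDe]; linarith)
  rw [hDe] at hv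
  refine ⟨X, Y, hXY, d*X+b*Y, Y/d, rfl, rfl, ?_⟩
  set A := d*(X:ℝ)+b*Y with hA
  set B := (Y:ℝ)/d with hB
  have hY : (Y:ℝ) = B*d := by rw [hB]; field_simp
  have hX : (X:ℝ) = (A - b*Y)/d := by rw [hA]; field_simp; ring
  have e : x*A^2-2*y*A*B+x^2*B^2 ≤ √(-4*n) := by
    refine le_trans (le_of_eq ?_) hv
    rw [hX, hY]; field_simp; ring
  set u := x*A^2-2*y*A*B+x^2*B^2 with hu
  have hu0 : 0 ≤ u := by
    have : x*u = (x*A-y*B)^2+(-n)*B^2 := by rw [hu]; linear_combination (-B^2)*h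
    have h2 : 0 ≤ x*u := by rw [this]; nlinarith [sq_nonneg (x*A-y*B), sq_nonneg B]
    exact nonneg_of_mul_nonneg_right h2 hx
  have hu2 : u^2 ≤ 4*|n| := by
    rw [abs_of_neg hn]
    calc u^2 ≤ √(-4*n)^2 := by gcongr
      _ = -4*n := Real.sq_sqrt (by linarith)
      _ = _ := by ring
  refine ⟨hu2, ?_⟩
  set f := A^3-3*x*A*B^2+2*y*B^3 with hf
  have syz : (y*A^3-3*x^2*A^2*B+3*x*y*A*B^2-(2*y^2-x^3)*B^3)^2 = u^3+n*f^2 := by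
    have : n = y^2-x^3 := by linarith
    rw [hu, hf, this]; ring
  have h1 : |n| * f^2 ≤ u^3 := by
    rw [abs_of_neg hn]
    have := sq_nonneg (y*A^3-3*x^2*A^2*B+3*x*y*A*B^2-(2*y^2-x^3)*B^3)
    rw [syz] at this
    linarith
  have hn0 : 0 < |n| := abs_pos.2 hn.ne
  have h2 : (|n| * f^2)^2 ≤ (u^3)^2 := pow_le_pow_left₀ (by positivity) h1 2
  have h3 : (u^2)^3 ≤ (4*|n|) ^ 3 := pow_le_pow_left₀ (by positivity) hu2 3
  have h4 : |n| ^ 2 * f^4 ≤ |n| ^ 2*(64*|n|) := by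
    linarith [(by ring : (|n| * f^2)^2 = |n| ^ 2 * f^4), (by ring : (u^3)^2 = (u^2)^3),
      (by ring : (4*|n|) ^ 3 = |n| ^ 2*(64*|n|))]
  have h5 : f^4 ≤ 64*|n| := le_of_mul_le_mul_left h4 (by positivity)
  linarith

lemma cbrt_exists (r : ℝ) : ∃ g : ℝ, g^3 = r := by
  have : Function.Surjective (fun g : ℝ => g^3) := by
    apply Continuous.surjective (by fun_prop)
    · exact Filter.tendsto_pow_atTop (by norm_num)
    · have h1 : Filter.Tendsto (fun g : ℝ => -((-g)^3)) Filter.atBot Filter.atBot :=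
        Filter.tendsto_neg_atTop_atBot.comp
          ((Filter.tendsto_pow_atTop (n := 3) (by norm_num)).comp Filter.tendsto_neg_atBot_atTop)
      refine h1.congr (fun g => by ring)
  exact this r

lemma small_vec_pos {n x y d b : ℝ} (hn : 0 < n) (h : y^2 = x^3 + n) (hx : x ≠ 0) (hd : d ≠ 0) :
    ∃ X Y : ℤ, IsCoprime X Y ∧ ∃ A B : ℝ, A = d*X+b*Y ∧ B = Y/d ∧
      (x*A^2-2*y*A*B+x^2*B^2)^2 ≤ 4*|n| ∧ (A^3-3*x*A*B^2+2*y*B^3)^4 ≤ 4096*|n| := by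
  set w := √n with hw
  have hw0 : 0 < w := Real.sqrt_pos.2 hn
  have hw2 : w^2 = n := Real.sq_sqrt hn.le
  obtain ⟨g, hg⟩ := cbrt_exists (y+w)
  have hyw : (y+w)*(y-w) = x^3 := by linear_combination h - hw2
  have hg0 : g ≠ 0 := by
    rintro rfl
    have : y + w = 0 := by rw [← hg]; norm_num
    rw [this, zero_mul] at hyw
    exact hx (by simpa using hyw.symm)
  obtain ⟨k, hk⟩ : ∃ k, g*k = x := ⟨x/g, by field_simp⟩
  have hk3 : k^3 = y-w := by
    have : g^3*k^3 = g^3*(y-w) := by rw [← mul_pow, hk, hg, hyw]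
    exact mul_left_cancel₀ (pow_ne_zero 3 hg0) this
  have hk0 : k ≠ 0 := by rintro rfl; apply hx; rw [← hk]; ring
  -- the quadratic form
  have hDe : 4*((g*d)^2+(k*d)^2)*((g*b-k^2/d)^2+(k*b-g^2/d)^2)
      -(2*(g*d)*(g*b-k^2/d)+2*(k*d)*(k*b-g^2/d))^2 = (4*w)^2 := by
    have e1 : 2*w = g^3-k^3 := by rw [hg, hk3]; ring
    have e2 : (4*w)^2 = 4*(g^3-k^3)^2 := by rw [← e1]; ring
    rw [e2]; field_simp; ring
  obtain ⟨X, Y, hXY, hv⟩ := minvec (A := (g*d)^2+(k*d)^2) (B := 2*(g*d)*(g*b-k^2/d)+2*(k*d)*(k*b-g^2/d))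
    (C := (g*b-k^2/d)^2+(k*b-g^2/d)^2)
    (by positivity) (by rw [hDe]; positivity)
  rw [hDe, Real.sqrt_sq (by positivity)] at hv
  refine ⟨X, Y, hXY, d*X+b*Y, Y/d, rfl, rfl, ?_⟩
  set A := d*(X:ℝ)+b*Y with hA
  set B := (Y:ℝ)/d with hB
  have hY : (Y:ℝ) = B*d := by rw [hB]; field_simp
  have hX : (X:ℝ) = (A - b*Y)/d := by rw [hA]; field_simp; ring
  set p := g*A-k^2*B with hp
  set q := k*A-g^2*B with hq
  have e : p^2+q^2 ≤ 4*w := by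
    refine le_trans (le_of_eq ?_) hv
    rw [hX, hY, hp, hq]; field_simp; ring
  have hy2 : 2*y = g^3+k^3 := by rw [hg, hk3]; ring
  have hw3 : 2*w = g^3-k^3 := by rw [hg, hk3]; ring
  have hu : x*A^2-2*y*A*B+x^2*B^2 = p*q := by
    rw [hy2, ← hk, hp, hq]; ring
  have hf : 2*w*(A^3-3*x*A*B^2+2*y*B^3) = p^3-q^3 := by
    rw [hy2, ← hk, hp, hq, hw3]; ring
  rw [hu, abs_of_pos hn, ← hw2]
  generalize A^3-3*x*A*B^2+2*y*B^3 = f at hf ⊢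
  clear_value p q A B
  constructor
  · have h1 : |p*q| ≤ 2*w := by
      have a1 : 0 ≤ (p-q)^2 := sq_nonneg _
      have a2 : 0 ≤ (p+q)^2 := sq_nonneg _
      have a3 : (p-q)^2 = p^2+q^2-2*(p*q) := by ring
      have a4 : (p+q)^2 = p^2+q^2+2*(p*q) := by ring
      rw [abs_le]; constructor <;> linarith
    have := pow_le_pow_left₀ (abs_nonneg _) h1 2
    rw [sq_abs] at this; linarith
  · -- (p^3-q^3)^2 ≤ 4 (p^2+q^2)^3
    have hs0 : 0 ≤ p^2+q^2 := by positivity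
    have h1 : (p^3-q^3)^2 ≤ 4*(p^2+q^2)^3 := by
      have : 4*(p^2+q^2)^3 - (p^3-q^3)^2 = 2*(p^6+q^6) + (p^3+q^3)^2 + 12*p^2*q^2*(p^2+q^2) := by ring
      have h2 : 0 ≤ 2*(p^6+q^6) + (p^3+q^3)^2 + 12*p^2*q^2*(p^2+q^2) := by positivity
      linarith
    have h2 : (p^2+q^2)^3 ≤ (4*w)^3 := pow_le_pow_left₀ hs0 e 3
    have h3 : (2*w*f)^2 ≤ 4*(4*w)^3 := by rw [hf]; linarith
    have h4 : f^2 ≤ 64*w := by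
      have : (4*w^2)*f^2 ≤ (4*w^2)*(64*w) := by linarith [h3, (by ring : (2*w*f)^2 = (4*w^2)*f^2), (by ring : 4*(4*w)^3 = (4*w^2)*(64*w))]
      exact le_of_mul_le_mul_left this (by positivity)
    have h5 := pow_le_pow_left₀ (sq_nonneg f) h4 2
    linarith [(by ring : (f^2)^2 = f^4), (by ring : (64*w)^2 = 4096*w^2)]

lemma sl2_cong (a b c e X Y : ℤ) (hXY : IsCoprime X Y) (f u g : ℤ) (hf : f = a*X^3+3*b*X^2*Y+3*c*X*Y^2+e*Y^3)
    (hu : u = (b^2-a*c)*X^2+(b*c-a*e)*X*Y+(c^2-b*e)*Y^2)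
    (hg : g = (a^2*e-3*a*b*c+2*b^3)*X^3+3*(a*b*e-2*a*c^2+b^2*c)*X^2*Y-3*(a*c*e-2*b^2*e+b*c^2)*X*Y^2
      -(a*e^2-3*b*c*e+2*c^3)*Y^3) :
    ∃ t : ℤ, f ∣ t^2-u ∧ f^2 ∣ t^3-3*t*u+g := by
  obtain ⟨W, Z', hW⟩ := hXY
  -- W*X + Z'*Y = 1, set Z = -Z'
  set Z := -Z' with hZ
  have hdet : X*W-Y*Z = 1 := by rw [hZ]; linear_combination hW
  set b1 := a*X^2*Z+b*(X^2*W+2*X*Y*Z)+c*(2*X*Y*W+Y^2*Z)+e*Y^2*W with hb1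
  set c1 := a*X*Z^2+b*(2*X*Z*W+Y*Z^2)+c*(X*W^2+2*Y*Z*W)+e*Y*W^2 with hc1
  set e1 := a*Z^3+3*b*Z^2*W+3*c*Z*W^2+e*W^3 with he1
  have hu1 : u = b1^2-f*c1 := by
    have : b1^2-f*c1 = u*(X*W-Y*Z)^2 := by rw [hu, hf, hb1, hc1]; ring
    rw [this, hdet]; ring
  have hg1 : g = f^2*e1-3*f*b1*c1+2*b1^3 := by
    have : f^2*e1-3*f*b1*c1+2*b1^3 = g*(X*W-Y*Z)^3 := by rw [hg, hf, hb1, hc1, he1]; ring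
    rw [this, hdet]; ring
  refine ⟨b1, ⟨c1, by rw [hu1]; ring⟩, ⟨e1, by rw [hu1, hg1]; ring⟩⟩

end AM

set_option linter.unusedSectionVars false
set_option linter.unusedVariables false
namespace AM

lemma lift_b (u v n D : ℤ) (hco : IsCoprime u D) (h : v^2 = u^3 + n*D) :
    ∃ b : ℤ, D ∣ b^2-u ∧ D ∣ b^3-3*b*u+2*v := by
  obtain ⟨p, q, hpq⟩ := hco
  have h1 : D ∣ u*(p*v) - v := ⟨-q*v, by linear_combination v*hpq⟩
  have h2 : D ∣ (p*v)^2 - u := by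
    have : IsCoprime D (u^2) := IsCoprime.pow_right ⟨q, p, by linarith⟩
    apply this.dvd_of_dvd_mul_left
    have e : u^2*((p*v)^2-u) = (u*(p*v)-v)*(u*(p*v)+v) + D*n := by linear_combination h
    rw [e]
    exact dvd_add (h1.mul_right _) (dvd_mul_right _ _)
  refine ⟨p*v, h2, ?_⟩
  have e : (p*v)^3-3*(p*v)*u+2*v = (p*v)*((p*v)^2-u) - 2*(u*(p*v)-v) := by ring
  rw [e]
  exact dvd_sub (h2.mul_left _) (h1.mul_left _)

lemma small_vec {n x y d b : ℝ} (hn : n ≠ 0) (h : y^2 = x^3 + n) (hx : x ≠ 0) (hd : d ≠ 0) :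
    ∃ X Y : ℤ, IsCoprime X Y ∧ ∃ A B : ℝ, A = d*X+b*Y ∧ B = Y/d ∧
      (x*A^2-2*y*A*B+x^2*B^2)^2 ≤ 4*|n| ∧ (A^3-3*x*A*B^2+2*y*B^3)^4 ≤ 4096*|n| := by
  rcases lt_or_gt_of_ne hn with hn | hn
  · exact small_vec_neg hn h hd
  · exact small_vec_pos hn h hx hd

lemma rl_ne {n x y s t : ℚ} (hn0 : n ≠ 0) (h : y^2 = x^3 + n) (hx : x ≠ 0) (hst : s ≠ 0 ∨ t ≠ 0)
    (ha : (s^3+3*s*t^2*n)+y*(3*s^2*t+t^3*n) = 0) (hv : y*(s^3+3*s*t^2*n)+n*(3*s^2*t+t^3*n) = 0) : False := by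
  have h0 : x^3*(s^2-n*t^2)^3 = 0 := by
    have : x^3 = y^2 - n := by linarith
    rw [this]
    linear_combination (y*(s^3+3*s*t^2*n)+n*(3*s^2*t+t^3*n))*hv - n*((s^3+3*s*t^2*n)+y*(3*s^2*t+t^3*n))*ha
  have h1 : s^2 = n*t^2 := by
    have := (mul_eq_zero.1 h0).resolve_left (pow_ne_zero 3 hx)
    have := pow_eq_zero_iff (by norm_num) |>.1 this
    linarith
  by_cases ht : t = 0
  · subst ht
    have : s = 0 := by simpa using h1
    tauto
  · have hs : s ≠ 0 := by
      intro hs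
      rw [hs] at h1
      have hn : n*t^2=0 := by linarith
      simp [ht, hn0] at hn
    have e : 4*s^2*(s+y*t) = 0 := by linear_combination ha + (3*s+y*t)*h1
    have e1 : s + y*t = 0 := by simpa [hs] using e
    have e2 : (y^2-n)*t^2 = 0 := by linear_combination (y*t-s)*e1 + h1
    have e3 : y^2-n = 0 := by simpa [ht] using e2
    have : x^3 = 0 := by linarith
    exact hx (by simpa using this)

lemma red {n : ℤ} {x y : ℚ} (hn : n ≠ 0) (h : y^2 = x^3 + n) (hx : x ≠ 0) :
    ∃ a u v β : ℤ, Rl n y a v ∧ v^2 = u^3 + n*a^2 ∧ a ∣ β^2-u ∧ a^2 ∣ β^3-3*β*u+2*v ∧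
      a^4 ≤ 4096*|n| ∧ u^2 ≤ 4*|n| ∧ (a = 0 → v ≠ 0) := by
  obtain ⟨d, hdx, hdy⟩ := den_shape h
  have hd0 : d ≠ 0 := by rintro rfl; simp at hdx
  have hdq : (d:ℚ) ≠ 0 := by exact_mod_cast hd0
  have hxn : (x.num:ℚ) = x*d^2 := by
    have := Rat.mul_den_eq_num x
    rw [hdx] at this; push_cast at this; exact this.symm
  have hyn : (y.num:ℚ) = y*d^3 := by
    have := Rat.mul_den_eq_num y
    rw [hdy] at this; push_cast at this; exact this.symm
  have hco : IsCoprime x.num ((d:ℤ)^6) := by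
    have h1 : IsCoprime x.num (x.den:ℤ) := by
      rw [Int.isCoprime_iff_gcd_eq_one]; exact x.reduced
    rw [hdx] at h1; push_cast at h1
    have := h1.pow_right (n := 3)
    rwa [← pow_mul] at this
  have heq : y.num^2 = x.num^3 + n*(d:ℤ)^6 := by
    have : (y.num:ℚ)^2 = x.num^3 + n*(d:ℚ)^6 := by
      rw [hxn, hyn]; linear_combination (d:ℚ)^6*h
    exact_mod_cast this
  obtain ⟨b, ⟨c', hc'⟩, ⟨e, he⟩⟩ := lift_b x.num y.num n _ hco heq
  obtain ⟨X, Y, hXY, A', B', hA', hB', hH, hF⟩ := small_vec (n := n) (x := x) (y := y) (d := d) (b := b/d^2)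
    (by exact_mod_cast hn) (by exact_mod_cast h) (by exact_mod_cast hx) (by exact_mod_cast hd0)
  have cq : (d:ℚ)^6*c' = b^2 - x*d^2 := by rw [← hxn]; exact_mod_cast hc'.symm
  have eq : (d:ℚ)^6*e = b^3 - 3*b*(x*d^2) + 2*(y*d^3) := by rw [← hxn, ← hyn]; exact_mod_cast he.symm
  obtain ⟨A, hA⟩ : ∃ A : ℚ, A = d*X+b/d^2*Y := ⟨_, rfl⟩
  obtain ⟨B, hB⟩ : ∃ B : ℚ, B = Y/d := ⟨_, rfl⟩
  have hAA : A' = A := by rw [hA', hA]; push_cast; ring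
  have hBB : B' = B := by rw [hB', hB]; push_cast; ring
  rw [hAA, hBB] at hH hF
  have hH' : (x*A^2-2*y*A*B+x^2*B^2)^2 ≤ 4*|(n:ℚ)| := by exact_mod_cast hH
  have hF' : (A^3-3*x*A*B^2+2*y*B^3)^4 ≤ 4096*|(n:ℚ)| := by exact_mod_cast hF
  have cq' : (c':ℚ) = (b^2 - x*d^2)/d^6 := by rw [← cq]; field_simp
  have eq' : (e:ℚ) = (b^3 - 3*b*(x*d^2) + 2*(y*d^3))/d^6 := by rw [← eq]; field_simp
  set c : ℤ := d^3*c' with hc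
  have hcq : (c:ℚ) = (b^2 - x*d^2)/d^3 := by rw [hc]; push_cast; rw [cq']; field_simp
  set a0 : ℤ := d^3 with ha0
  have ha0q : (a0:ℚ) = d^3 := by rw [ha0]; push_cast; rfl
  clear_value c a0
  obtain ⟨f, hf⟩ : ∃ f : ℤ, f = a0*X^3+3*b*X^2*Y+3*c*X*Y^2+e*Y^3 := ⟨_, rfl⟩
  obtain ⟨u, hu⟩ : ∃ u : ℤ, u = (b^2-a0*c)*X^2+(b*c-a0*e)*X*Y+(c^2-b*e)*Y^2 := ⟨_, rfl⟩
  obtain ⟨g, hg⟩ : ∃ g : ℤ, g = (a0^2*e-3*a0*b*c+2*b^3)*X^3+3*(a0*b*e-2*a0*c^2+b^2*c)*X^2*Y-3*(a0*c*e-2*b^2*e+b*c^2)*X*Y^2-(a0*e^2-3*b*c*e+2*c^3)*Y^3 := ⟨_, rfl⟩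
  have hfq : (f:ℚ) = A^3-3*x*A*B^2+2*y*B^3 := by
    rw [hf, hA, hB]; push_cast; rw [ha0q, hcq, eq']; field_simp; ring
  have huq : (u:ℚ) = x*A^2-2*y*A*B+x^2*B^2 := by
    rw [hu, hA, hB]; push_cast; rw [ha0q, hcq, eq']; field_simp; ring
  have hgq : (g:ℚ) = 2*(y*A^3-3*x^2*A^2*B+3*x*y*A*B^2-(2*y^2-x^3)*B^3) := by
    rw [hg, hA, hB]; push_cast; rw [ha0q, hcq, eq']; field_simp; ring
  have hnq : (n:ℚ) = y^2-x^3 := by linarith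
  obtain ⟨v, hv⟩ : ∃ v : ℤ, y*A^3-3*x^2*A^2*B+3*x*y*A*B^2-(2*y^2-x^3)*B^3 = v := by
    apply int_of_sq (k := u^3+n*f^2)
    push_cast
    rw [huq, hfq, hnq]; ring
  obtain ⟨β, hβ1, hβ2⟩ := sl2_cong a0 b c e X Y hXY f u g hf hu hg
  have hgv : g = 2*v := by
    have : (g:ℚ) = 2*v := by rw [hgq, hv]
    exact_mod_cast this
  rw [hgv] at hβ2
  have hR1 : (v:ℚ) = y*((A-y/x*B)^3+3*(A-y/x*B)*(B/x)^2*n)+n*(3*(A-y/x*B)^2*(B/x)+(B/x)^3*n) := by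
    rw [← hv, hnq]; field_simp; ring
  have hR2 : (f:ℚ) = ((A-y/x*B)^3+3*(A-y/x*B)*(B/x)^2*n)+y*(3*(A-y/x*B)^2*(B/x)+(B/x)^3*n) := by
    rw [hfq, hnq]; field_simp; ring
  refine ⟨f, u, v, β, ⟨A-y/x*B, B/x, hR1, hR2⟩, ?_, hβ1, hβ2, ?_, ?_, ?_⟩
  · have : (v:ℚ)^2 = u^3+n*f^2 := by
      rw [← hv, huq, hfq, hnq]; ring
    exact_mod_cast this
  · rw [← hfq] at hF'; exact_mod_cast hF'
  · rw [← huq] at hH'; exact_mod_cast hH'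
  · intro hf0 hv0
    refine rl_ne (n := n) (x := x) (y := y) (s := A-y/x*B) (t := B/x) (by exact_mod_cast hn) h hx ?_ ?_ ?_
    · by_contra! hcon
      obtain ⟨h1, h2⟩ := hcon
      have hB0 : B = 0 := by simpa [hx] using h2
      have hY0 : Y = 0 := by rw [hB] at hB0; simpa [hd0] using hB0
      have hA0 : A = 0 := by rw [hB0] at h1; simpa using h1
      have hX0 : X = 0 := by rw [hA, hY0] at hA0; simpa [hd0] using hA0
      rw [hX0, hY0] at hXY
      exact not_isCoprime_zero_zero hXY
    · rw [← hR2, hf0]; simp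
    · rw [← hR1, hv0]; simp
end AM

set_option linter.unusedSectionVars false
set_option linter.unusedVariables false
namespace AM
open WeierstrassCurve WeierstrassCurve.Affine

/-- The reduced data attached to classes of points on `y² = x³ + n`. -/
def TP (n : ℤ) (q : ℤ × ℤ × ℤ × ℤ) : Prop :=
  0 < q.1 ∧ 0 ≤ q.2.1 ∧ q.2.1 < q.1 ∧ q.2.2.2^2 = q.2.2.1^3 + n*q.1^2 ∧ q.1 ∣ q.2.1^2-q.2.2.1 ∧
    q.1^2 ∣ q.2.1^3-3*q.2.1*q.2.2.1+2*q.2.2.2 ∧ q.1^4 ≤ 4096*|n| ∧ q.2.2.1^2 ≤ 4*|n|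

lemma le_sq_int (k : ℤ) : |k| ≤ k^2 := by
  rw [← sq_abs]
  rcases (abs_nonneg k).eq_or_lt with h | h
  · rw [← h]; norm_num
  · nlinarith

lemma TP_finite (n : ℤ) : {q | TP n q}.Finite := by
  apply Set.Finite.subset ((Set.finite_Icc 0 (4096*|n|)).prod ((Set.finite_Icc 0 (4096*|n|)).prod
    ((Set.finite_Icc (-(4*|n|)) (4*|n|)).prod (Set.finite_Icc (-((4*|n|)^3+ |n| * (4096*|n|)^2)) ((4*|n|)^3+ |n| * (4096*|n|)^2)))))
  rintro ⟨a, b, u, v⟩ ⟨h1, h2, h3, h4, h5, h6, h7, h8⟩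
  simp only at *
  have ha : a ≤ 4096*|n| := by
    have : a^1 ≤ a^4 := pow_le_pow_right₀ (by omega) (by norm_num)
    linarith
  have hu : |u| ≤ 4*|n| := (le_sq_int u).trans h8
  have hv : |v| ≤ (4*|n|)^3+ |n| * (4096*|n|)^2 := by
    refine (le_sq_int v).trans ?_
    rw [h4]
    have e1 : u^3 ≤ (4*|n|)^3 := by
      calc u^3 ≤ |u^3| := le_abs_self _
        _ = |u|^3 := abs_pow _ _
        _ ≤ _ := by gcongr
    have e2 : n*a^2 ≤ |n| * (4096*|n|)^2 := by
      have := le_abs_self n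
      gcongr
    linarith
  simp only [Set.mem_prod, Set.mem_Icc]
  refine ⟨⟨h1.le, ha⟩, ⟨h2, by linarith⟩, abs_le.1 hu, abs_le.1 hv⟩

/-- The finite set of reduced data. -/
noncomputable def TT (n : ℤ) : Finset (ℤ × ℤ × ℤ × ℤ) := (TP_finite n).toFinset

lemma mem_TT {n : ℤ} {q} : q ∈ TT n ↔ TP n q := by simp [TT]

lemma red2 {n : ℤ} {x y : ℚ} (hn : n ≠ 0) (h : y^2 = x^3 + n) (hx : x ≠ 0) :
    mk (nq hn) x y h ∈ (psi (nq hn)).range ∨ ∃ q ∈ TT n, Rl n y q.1 q.2.2.2 := by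
  obtain ⟨a, u, v, β, hR, h1, h2, h3, h4, h5, h6⟩ := red hn h hx
  have main : ∀ a v β : ℤ, 0 < a → Rl n y a v → v^2 = u^3 + n*a^2 → a ∣ β^2-u → a^2 ∣ β^3-3*β*u+2*v →
      a^4 ≤ 4096*|n| → ∃ q ∈ TT n, Rl n y q.1 q.2.2.2 := by
    intro a v β ha hR h1 h2 h3 h4
    refine ⟨(a, β % a, u, v), mem_TT.2 ⟨ha, Int.emod_nonneg _ ha.ne', Int.emod_lt_of_pos _ ha, h1, ?_, ?_, h4, h5⟩, hR⟩
    · obtain ⟨w, hw⟩ := h2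
      have hb : β % a = β - a*(β/a) := by have := Int.mul_ediv_add_emod β a; linarith
      simp only [hb]
      exact ⟨w - 2*β*(β/a) + a*(β/a)^2, by linear_combination hw⟩
    · obtain ⟨w, hw⟩ := h2
      obtain ⟨z, hz⟩ := h3
      have hb : β % a = β - a*(β/a) := by have := Int.mul_ediv_add_emod β a; linarith
      simp only [hb]
      generalize β / a = k
      exact ⟨z - 3*k*w + 3*β*k^2-a*k^3, by linear_combination hz - 3*a*k*hw⟩
  rcases lt_trichotomy a 0 with ha | ha | ha
  · right
    refine main (-a) (-v) (-β) (by omega) ?_ ?_ ?_ ?_ ?_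
    · obtain ⟨s, t, e1, e2⟩ := hR
      refine ⟨-s, -t, ?_, ?_⟩ <;> push_cast
      · rw [e1]; ring
      · rw [e2]; ring
    · linear_combination h1
    · rw [neg_dvd, neg_sq]; exact h2
    · have e : (-β)^3-3*(-β)*u+2*(-v) = -(β^3-3*β*u+2*v) := by ring
      rw [neg_sq, e, dvd_neg]; exact h3
    · convert h4 using 1; ring
  · left
    have hv := h6 ha
    rw [ha] at h1 hR
    have h1' : (v:ℚ)^2 = (u:ℚ)^3 := by
      have : v^2 = u^3 := by linarith
      exact_mod_cast this
    obtain ⟨r, hr, -⟩ := (pow_eq_pow_iff_of_coprime (by norm_num)).1 h1'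
    rw [hr] at hR
    refine zero_class (nq hn) h (r := r) ?_ (by simpa using hR)
    rintro rfl
    apply hv
    have : (v:ℚ) = 0 := by rw [hr]; norm_num
    exact_mod_cast this
  · right; exact main a v β ha hR h1 h2 h3 h4

def PsiClass (c : ℚ) (s : ℕ) : Prop :=
  ∀ hc : c ≠ 0, ∃ f : (EC c).Point → Fin s, ∀ P Q, f P = f Q → P - Q ∈ (psi hc).range

lemma psiClass_TT {n : ℤ} (hn : n ≠ 0) : PsiClass (n:ℚ) (3 + (TT n).card) := by
  intro hc
  have key : ∀ P : (EC (n:ℚ)).Point, ∃ o : Option (Option (Option (TT n))),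
      (o = none ∧ P ∈ (psi hc).range) ∨
      (o = some none ∧ ∃ x y h, P = mk hc x y h ∧ x = 0 ∧ 0 < y) ∨
      (o = some (some none) ∧ ∃ x y h, P = mk hc x y h ∧ x = 0 ∧ y < 0) ∨
      (∃ q : TT n, o = some (some (some q)) ∧ ∃ x y h, P = mk hc x y h ∧ x ≠ 0 ∧ Rl n y q.1.1 q.1.2.2.2) := by
    intro P
    rcases pt_cases hc P with rfl | ⟨x, y, h, rfl⟩
    · exact ⟨none, Or.inl ⟨rfl, zero_mem _⟩⟩
    · by_cases hx : x = 0
      · rcases lt_trichotomy y 0 with hy | hy | hy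
        · exact ⟨some (some none), Or.inr (Or.inr (Or.inl ⟨rfl, x, y, h, rfl, hx, hy⟩))⟩
        · exfalso; apply hc; rw [hx, hy] at h; simpa using h.symm
        · exact ⟨some none, Or.inr (Or.inl ⟨rfl, x, y, h, rfl, hx, hy⟩)⟩
      · rcases red2 hn h hx with hr | ⟨q, hq, hR⟩
        · exact ⟨none, Or.inl ⟨rfl, hr⟩⟩
        · exact ⟨some (some (some ⟨q, hq⟩)), Or.inr (Or.inr (Or.inr ⟨⟨q, hq⟩, rfl, x, y, h, rfl, hx, hR⟩))⟩
  choose f hf using key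
  have hcard : Fintype.card (Option (Option (Option (TT n)))) = 3 + (TT n).card := by
    simp only [Fintype.card_option, Fintype.card_coe]; ring
  refine ⟨fun P => Fintype.equivFinOfCardEq hcard (f P), ?_⟩
  intro P Q hPQ
  have hPQ : f P = f Q := (Fintype.equivFinOfCardEq hcard).injective hPQ
  have hQ := hf Q
  rw [← hPQ] at hQ
  have eq0 : ∀ {x y x' y' : ℚ} (h : y^2 = x^3+n) (h' : y'^2 = x'^3+n), x = 0 → x' = 0 → (0 < y*y') →
      mk hc x y h - mk hc x' y' h' ∈ (psi hc).range := by
    intro x y x' y' h h' hx hx' hy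
    have : mk hc x y h = mk hc x' y' h' := by
      apply mk_congr hc (hx.trans hx'.symm)
      rw [hx] at h; rw [hx'] at h'
      have e : (y-y')*(y+y') = 0 := by linear_combination h - h'
      rcases mul_eq_zero.1 e with e | e
      · linarith
      · exfalso
        have : y = -y' := by linarith
        rw [this] at hy
        nlinarith [sq_nonneg y']
    rw [this, sub_self]; exact zero_mem _
  rcases hf P with ⟨e, h1⟩ | ⟨e, x, y, h, rfl, hx, hy⟩ | ⟨e, x, y, h, rfl, hx, hy⟩ | ⟨q, e, x, y, h, rfl, hx, hR⟩ <;>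
  rw [e] at hQ <;>
  rcases hQ with ⟨e', h1'⟩ | ⟨e', x', y', h', rfl, hx', hy'⟩ | ⟨e', x', y', h', rfl, hx', hy'⟩ | ⟨q', e', x', y', h', rfl, hx', hR'⟩ <;>
  simp at e'
  · exact sub_mem h1 h1'
  · exact eq0 h h' hx hx' (mul_pos hy hy')
  · exact eq0 h h' hx hx' (mul_pos_of_neg_of_neg hy hy')
  · subst e'
    apply same_class hc h h' hx hx' hR hR'
    left
    have := (mem_TT.1 q.2).1
    exact_mod_cast this.ne'

lemma jj_surj {c : ℚ} (hc : c ≠ 0) (R : (EC (-27 * (-27 * c))).Point) : ∃ P, jj hc P = R := by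
  rcases pt_cases (m27_ne (m27_ne hc)) R with rfl | ⟨X, Y, h, rfl⟩
  · exact ⟨0, map_zero _⟩
  · refine ⟨mk hc (X/9) (Y/27) (by linear_combination h/729), ?_⟩
    rw [jj, scaleHom_mk (h' := by simp only [RingHom.id_apply]; linear_combination h)]
    apply mk_congr <;> simp only [RingHom.id_apply] <;> ring

lemma classMap_of {n : ℤ} (hn : n ≠ 0) {s1 s2 : ℕ} (h1 : PsiClass (n:ℚ) s1) (h2 : PsiClass (-27*(n:ℚ)) s2) :
    ClassMap n (s1*s2) := by
  have hc := nq hn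
  obtain ⟨f1, hf1⟩ := h1 hc
  obtain ⟨f2, hf2⟩ := h2 (m27_ne hc)
  have hrep : ∀ P, ∃ T, psi hc T = P - Function.invFun f1 (f1 P) := by
    intro P
    have : P - Function.invFun f1 (f1 P) ∈ (psi hc).range := by
      apply hf1
      exact (Function.invFun_eq ⟨P, rfl⟩).symm
    exact this
  choose T hT using hrep
  refine ⟨fun P => finProdFinEquiv (f1 P, f2 (T P)), ?_⟩
  intro P Q hPQ
  have hPQ := finProdFinEquiv.injective hPQ
  rw [Prod.mk.injEq] at hPQ
  obtain ⟨R, hR⟩ := hf2 _ _ hPQ.2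
  obtain ⟨R', rfl⟩ := jj_surj hc R
  refine ⟨R', ?_⟩
  rw [← psi_psi hc, hR, map_sub, hT, hT, hPQ.1]
  abel

lemma classMap_TT {n : ℤ} (hn : n ≠ 0) : ClassMap n ((3 + (TT n).card) * (3 + (TT (-27*n)).card)) := by
  apply classMap_of hn (psiClass_TT hn)
  have := psiClass_TT (n := -27*n) (by omega)
  have e : ((-27*n : ℤ):ℚ) = -27*(n:ℚ) := by push_cast; ring
  rwa [e] at this
end AM

set_option linter.unusedSectionVars false
set_option linter.unusedVariables false
namespace AM

lemma card_ap (S : Finset ℤ) (m : ℤ) (hm : 0 < m) (L : ℝ) (hL : 0 ≤ L)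
    (h1 : ∀ v ∈ S, ∀ w ∈ S, m ∣ 2*(w-v)) (h2 : ∀ v ∈ S, ∀ w ∈ S, v ≤ w → ((w-v:ℤ):ℝ) ≤ L) :
    (S.card:ℝ) ≤ 2*L/m+1 := by
  have hmr : (0:ℝ) < m := by exact_mod_cast hm
  rcases S.eq_empty_or_nonempty with rfl | hne
  · simp; positivity
  set v0 := S.min' hne
  have hv0 : v0 ∈ S := S.min'_mem hne
  have hmin : ∀ v ∈ S, v0 ≤ v := fun v hv => S.min'_le v hv
  have hc : S.card ≤ (Finset.range (⌊2*L/m⌋₊+1)).card := by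
    apply Finset.card_le_card_of_injOn (fun v => (2*(v-v0)/m).toNat)
    · intro v hv
      obtain ⟨k, hk⟩ := h1 v0 hv0 v hv
      have hk' : 2*(v-v0)/m = k := by rw [hk]; exact Int.mul_ediv_cancel_left _ hm.ne'
      have hk0 : 0 ≤ k := by
        by_contra hneg
        have := hmin v hv
        nlinarith
      simp only [Finset.coe_range, Set.mem_Iio, hk']
      rw [Nat.lt_succ_iff]
      apply Nat.le_floor
      rw [le_div_iff₀ hmr]
      have e := h2 v0 hv0 v hv (hmin v hv)
      have e2 : ((k.toNat:ℕ):ℝ) = (k:ℝ) := by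
        have : ((k.toNat:ℕ):ℤ) = k := Int.toNat_of_nonneg hk0
        exact_mod_cast this
      have e3 : (k:ℝ)*m = 2*((v-v0:ℤ):ℝ) := by
        have : k*m = 2*(v-v0) := by linarith
        exact_mod_cast this
      rw [e2, e3]; linarith
    · intro v hv w hw hvw
      obtain ⟨k, hk⟩ := h1 v0 hv0 v hv
      obtain ⟨l, hl⟩ := h1 v0 hv0 w hw
      have hk' : 2*(v-v0)/m = k := by rw [hk]; exact Int.mul_ediv_cancel_left _ hm.ne'
      have hl' : 2*(w-v0)/m = l := by rw [hl]; exact Int.mul_ediv_cancel_left _ hm.ne'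
      have hk0 : 0 ≤ k := by
        by_contra hneg
        have := hmin v hv
        nlinarith
      have hl0 : 0 ≤ l := by
        by_contra hneg
        have := hmin w hw
        nlinarith
      simp only [hk', hl'] at hvw
      have : k = l := by omega
      rw [this] at hk
      linarith
  rw [Finset.card_range] at hc
  calc (S.card:ℝ) ≤ ((⌊2*L/m⌋₊+1:ℕ):ℝ) := by exact_mod_cast hc
    _ = ⌊2*L/m⌋₊+1 := by push_cast; rfl
    _ ≤ _ := by gcongr; exact Nat.floor_le (by positivity)

lemma gap {E u v w : ℝ} (hE : 0 ≤ E) (hv : 0 ≤ v) (hvw : v ≤ w) (h1 : |v^2-u^3| ≤ E) (h2 : |w^2-u^3| ≤ E) :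
    (w-v)^2 ≤ 2*E ∧ (w-v)^2*|u|^3 ≤ 4*E^2 := by
  rw [abs_le] at h1 h2
  have a1 : w^2-v^2 ≤ 2*E := by linarith
  have a2 : (w-v)^2 ≤ 2*E := by nlinarith
  refine ⟨a2, ?_⟩
  rcases le_or_gt (|u|^3) (2*E) with h | h
  · calc (w-v)^2*|u|^3 ≤ (2*E)*(2*E) := by gcongr
      _ = _ := by ring
  · have hu : 0 ≤ u := by
      by_contra hneg
      push Not at hneg
      rw [abs_of_neg hneg] at h
      nlinarith [sq_nonneg v]
    rw [abs_of_nonneg hu] at h ⊢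
    have b1 : u^3 ≤ 2*v^2 := by linarith
    have b2 : (w-v)^2*(w+v)^2 ≤ (2*E)^2 := by
      rw [← mul_pow]
      apply pow_le_pow_left₀ (mul_nonneg (by linarith) (by linarith))
      linarith [(by ring : (w-v)*(w+v) = w^2-v^2)]
    have b3 : 4*v^2 ≤ (w+v)^2 := by nlinarith
    have b4 : (w-v)^2*u^3 ≤ (w-v)^2*(w+v)^2 := by
      apply mul_le_mul_of_nonneg_left _ (sq_nonneg _)
      nlinarith [sq_nonneg v]
    linarith [(by ring : (2*E)^2 = 4*E^2)]

lemma vcount (S : Finset ℤ) (m r u : ℤ) (hm : 0 < m) (E L : ℝ) (hE : 0 ≤ E) (hL : 0 ≤ L)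
    (h1 : ∀ v ∈ S, m ∣ r + 2*v) (h2 : ∀ v ∈ S, |(v:ℝ)^2-(u:ℝ)^3| ≤ E)
    (h3 : ∀ t : ℝ, 0 ≤ t → t^2 ≤ 2*E → t^2*|(u:ℝ)|^3 ≤ 4*E^2 → t ≤ L) :
    (S.card:ℝ) ≤ 4*L/m+2 := by
  have hd : ∀ v ∈ S, ∀ w ∈ S, m ∣ 2*(w-v) := by
    intro v hv w hw
    have := dvd_sub (h1 w hw) (h1 v hv)
    have e : 2*(w-v) = r+2*w-(r+2*v) := by ring
    rw [e]; exact this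
  have c1 := card_ap (S.filter (0 ≤ ·)) m hm L hL
    (fun v hv w hw => hd v (Finset.mem_filter.1 hv).1 w (Finset.mem_filter.1 hw).1) (by
      intro v hv w hw hvw
      rw [Finset.mem_filter] at hv hw
      have hv0 : (0:ℝ) ≤ v := by exact_mod_cast hv.2
      have hvw' : (v:ℝ) ≤ w := by exact_mod_cast hvw
      have := gap hE hv0 hvw' (h2 v hv.1) (h2 w hw.1)
      push_cast
      exact h3 _ (by linarith) this.1 this.2)
  have c2 := card_ap (S.filter (fun v => ¬ (0 ≤ v))) m hm L hL
    (fun v hv w hw => hd v (Finset.mem_filter.1 hv).1 w (Finset.mem_filter.1 hw).1) (by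
      intro v hv w hw hvw
      rw [Finset.mem_filter] at hv hw
      have hv0 : (0:ℝ) ≤ -w := by have := hw.2; have : w ≤ 0 := by omega
                                  have : (w:ℝ) ≤ 0 := by exact_mod_cast this
                                  linarith
      have hvw' : (-w:ℝ) ≤ -v := by have : (v:ℝ) ≤ w := by exact_mod_cast hvw
                                    linarith
      have := gap (u := u) hE hv0 hvw' (by rw [neg_sq]; exact h2 w hw.1) (by rw [neg_sq]; exact h2 v hv.1)
      push_cast
      have := h3 _ (by linarith) this.1 this.2
      linarith)
  have hs := Finset.card_filter_add_card_filter_not (s := S) (0 ≤ ·)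
  have hs' : (S.card:ℝ) = (S.filter (0 ≤ ·)).card + (S.filter (fun v => ¬ (0 ≤ v))).card := by exact_mod_cast hs.symm
  rw [hs']
  calc _ ≤ (2*L/m+1) + (2*L/m+1) := add_le_add c1 c2
    _ = _ := by ring

lemma sum_inv_sqrt (n : ℕ) : ∑ a ∈ Finset.Icc 1 n, 1/√(a:ℝ) ≤ 2*√(n:ℝ) := by
  induction n with
  | zero => simp
  | succ n ih =>
    rw [Finset.sum_Icc_succ_top (by omega)]
    have h1 : 0 < √((n+1:ℕ):ℝ) := Real.sqrt_pos.2 (by positivity)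
    have h2 : 0 ≤ √(n:ℝ) := Real.sqrt_nonneg _
    have e1 : √((n+1:ℕ):ℝ)^2 = n+1 := by rw [Real.sq_sqrt (by positivity)]; push_cast; rfl
    have e2 : √(n:ℝ)^2 = n := Real.sq_sqrt (by positivity)
    set t := √((n+1:ℕ):ℝ)
    set s := √(n:ℝ)
    have : 1/t ≤ 2*t - 2*s := by
      rw [div_le_iff₀ h1]
      nlinarith [sq_nonneg (t-s)]
    linarith

lemma sum_tail (Q N : ℕ) (hQ : 0 < Q) (hN : Q ≤ N) :
    ∑ k ∈ Finset.Ioc Q N, 1/((k:ℝ)*√(k:ℝ)) ≤ 2/√(Q:ℝ) - 2/√(N:ℝ) := by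
  induction N, hN using Nat.le_induction with
  | base => simp
  | succ n hn ih =>
    rw [Finset.sum_Ioc_succ_top (by omega)]
    have hn0 : 0 < n := by omega
    have h1 : 0 < √((n+1:ℕ):ℝ) := Real.sqrt_pos.2 (by positivity)
    have h2 : 0 < √(n:ℝ) := Real.sqrt_pos.2 (by positivity)
    have e1 : ((n+1:ℕ):ℝ) = √((n+1:ℕ):ℝ)^2 := by rw [Real.sq_sqrt (by positivity)]
    have e2 : √(n:ℝ)^2 = n := Real.sq_sqrt (by positivity)
    have e3 : √((n+1:ℕ):ℝ)^2 = √(n:ℝ)^2 + 1 := by rw [← e1, e2]; push_cast; rfl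
    have : 1/(((n+1:ℕ):ℝ)*√((n+1:ℕ):ℝ)) ≤ 2/√(n:ℝ) - 2/√((n+1:ℕ):ℝ) := by
      nth_rw 1 [e1]
      set t := √((n+1:ℕ):ℝ)
      set s := √(n:ℝ)
      have hst : s ≤ t := by nlinarith
      rw [div_sub_div _ _ h2.ne' h1.ne', div_le_div_iff₀ (by positivity) (by positivity)]
      have k1 : (t-s)*(t+s) = 1 := by linarith [(by ring : (t-s)*(t+s) = t^2-s^2)]
      have k2 : s*(t+s) ≤ 2*t^2 := by nlinarith
      have k3 : 0 ≤ (t-s) := by linarith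
      have k4 : s = (t-s)*(s*(t+s)) := by linear_combination -s*k1
      have k5 : (t-s)*(s*(t+s)) ≤ (t-s)*(2*t^2) := mul_le_mul_of_nonneg_left k2 k3
      have k6 : s*t ≤ ((t-s)*(2*t^2))*t := mul_le_mul_of_nonneg_right (k4.le.trans k5) h1.le
      linarith [(by ring : ((t-s)*(2*t^2))*t = (2*t-s*2)*(t^2*t))]
    linarith
end AM

set_option linter.unusedSectionVars false
set_option linter.unusedVariables false
namespace AM

/-- Bound for the number of `v` for given `a` and `κ = |u / a|`. -/
noncomputable def gg (Q a κ : ℕ) : ℝ :=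
  if κ ≤ Q then 8*(Q:ℝ)^2/a+2 else 24*(Q:ℝ)^4/((a:ℝ)*√a*(κ*√κ))+2

lemma gg_nonneg (Q a κ : ℕ) : 0 ≤ gg Q a κ := by
  unfold gg; split_ifs <;> positivity

lemma abs_u_lower {a u : ℤ} (ha : 0 < a) (h : 2 ≤ (u/a).natAbs) : ((u/a).natAbs:ℤ)*a ≤ 2*|u| := by
  have h1 := Int.mul_ediv_add_emod u a
  have h2 := Int.emod_nonneg u ha.ne'
  have h3 := Int.emod_lt_of_pos u ha
  generalize u / a = k at *
  rcases le_or_gt 0 k with hk | hk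
  · have e : (k.natAbs:ℤ) = k := Int.natAbs_of_nonneg hk
    rw [e]
    have := le_abs_self u
    nlinarith [mul_nonneg hk ha.le]
  · have e : (k.natAbs:ℤ) = -k := by omega
    rw [e]
    have h4 : k ≤ -2 := by omega
    have := neg_le_abs u
    nlinarith

lemma vcount2 (S : Finset ℤ) (Q : ℕ) (hQ : 0 < Q) (a : ℕ) (ha : 0 < a) (r u : ℤ)
    (h1 : ∀ v ∈ S, (a:ℤ)^2 ∣ r + 2*v) (h2 : ∀ v ∈ S, |(v:ℝ)^2-(u:ℝ)^3| ≤ (Q:ℝ)^4*a^2) :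
    (S.card:ℝ) ≤ gg Q a (u/a).natAbs := by
  have har : (0:ℝ) < a := by exact_mod_cast ha
  have hQr : (0:ℝ) < Q := by exact_mod_cast hQ
  unfold gg
  split_ifs with hk
  · have := vcount S ((a:ℤ)^2) r u (by positivity) ((Q:ℝ)^4*a^2) (2*Q^2*a) (by positivity) (by positivity) h1 h2 (by
      intro t ht h _
      refine (pow_le_pow_iff_left₀ ht (by positivity) two_ne_zero).1 ?_
      have : 0 ≤ (Q:ℝ)^4*a^2 := by positivity
      linarith [(by ring : (2*(Q:ℝ)^2*a)^2 = 4*(Q^4*a^2))])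
    refine this.trans (le_of_eq ?_)
    push_cast
    field_simp; ring
  · push Not at hk
    set κ := (u/a).natAbs with hκ
    have hκ2 : 2 ≤ κ := by omega
    have hκr : (0:ℝ) < κ := by positivity
    have hlow := abs_u_lower (a := a) (u := u) (by exact_mod_cast ha) hκ2
    have hlow' : (κ:ℝ)*a ≤ 2*|(u:ℝ)| := by exact_mod_cast hlow
    have hsa : √(a:ℝ)^2 = a := Real.sq_sqrt har.le
    have hsk : √(κ:ℝ)^2 = κ := Real.sq_sqrt hκr.le
    have hsa0 : 0 < √(a:ℝ) := Real.sqrt_pos.2 har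
    have hsk0 : 0 < √(κ:ℝ) := Real.sqrt_pos.2 hκr
    have := vcount S ((a:ℤ)^2) r u (by positivity) ((Q:ℝ)^4*a^2) (6*Q^4*√a/(κ*√κ)) (by positivity) (by positivity) h1 h2 (by
      intro t ht _ h
      refine (pow_le_pow_iff_left₀ ht (by positivity) two_ne_zero).1 ?_
      have e1 : (κ*a:ℝ)^3 ≤ (2*|(u:ℝ)|)^3 := by gcongr
      have e2 : t^2*(κ*a:ℝ)^3 ≤ 8*(4*((Q:ℝ)^4*a^2)^2) := by
        calc t^2*(κ*a:ℝ)^3 ≤ t^2*(2*|(u:ℝ)|)^3 := by gcongr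
          _ = 8*(t^2*|(u:ℝ)|^3) := by ring
          _ ≤ _ := by gcongr
      have e3 : (6*(Q:ℝ)^4*√a/(κ*√κ))^2 = 36*Q^8*a/κ^3 := by
        rw [div_pow, mul_pow, mul_pow, mul_pow, hsa, hsk]; ring
      rw [e3, le_div_iff₀ (by positivity)]
      have e4 : (t^2*κ^3)*(a:ℝ)^3 ≤ (36*Q^8*a)*a^3 := by
        have : 0 ≤ (Q:ℝ)^8*a^4 := by positivity
        linarith [(by ring : (t^2*κ^3)*(a:ℝ)^3 = t^2*(κ*a:ℝ)^3), (by ring : 8*(4*((Q:ℝ)^4*a^2)^2) = 32*(Q^8*a^4)), (by ring : (36*(Q:ℝ)^8*a)*a^3 = 36*(Q^8*a^4))]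
      exact le_of_mul_le_mul_right e4 (by positivity))
    refine this.trans (le_of_eq ?_)
    congr 1
    push_cast
    rw [mul_div_assoc', div_div, div_eq_div_iff (by positivity) (by positivity)]
    linear_combination (24*(Q:ℝ)^4*a*κ*√κ)*hsa

end AM

set_option linter.unusedSectionVars false
set_option linter.unusedVariables false
namespace AM
open Finset

noncomputable def WW (Q : ℕ) : Finset (Σ _ : ℤ, ℤ × ℤ × ℤ × ℤ) :=
  ((Finset.Icc (-(Q:ℤ)^4) ((Q:ℤ)^4)).erase 0).sigma TT

def f1 (p : Σ _ : ℤ, ℤ × ℤ × ℤ × ℤ) : ℕ × ℕ := (p.2.1.toNat, (p.2.2.2.1 / p.2.1).natAbs)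
def f2 (p : Σ _ : ℤ, ℤ × ℤ × ℤ × ℤ) : ℤ × ℤ := (p.2.2.1, p.2.2.2.1 / p.2.1)

lemma mem_WW {Q : ℕ} {p} : p ∈ WW Q ↔ (p.1 ≠ 0 ∧ |p.1| ≤ (Q:ℤ)^4) ∧ TP p.1 p.2 := by
  rw [WW, Finset.mem_sigma, mem_TT, Finset.mem_erase, Finset.mem_Icc, abs_le]

lemma f1_mem {Q : ℕ} (hQ : 0 < Q) {p} (hp : p ∈ WW Q) : f1 p ∈ Finset.Icc 1 (8*Q) ×ˢ Finset.range (3*Q^2+1) := by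
  rw [mem_WW] at hp
  obtain ⟨n, a, b, u, v⟩ := p
  obtain ⟨⟨-, hn⟩, h1, h2, h3, h4, h5, h6, h7, h8⟩ := hp
  simp only [f1, Finset.mem_product, Finset.mem_Icc, Finset.mem_range] at *
  have ha : a ≤ 8*Q := by
    refine (pow_le_pow_iff_left₀ h1.le (by positivity) (by norm_num : 4 ≠ 0)).1 ?_
    linarith [(by ring : (8*(Q:ℤ))^4 = 4096*Q^4)]
  have hu : |u| ≤ 2*(Q:ℤ)^2 := by
    refine (pow_le_pow_iff_left₀ (abs_nonneg _) (by positivity) two_ne_zero).1 ?_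
    rw [sq_abs]
    linarith [(by ring : (2*(Q:ℤ)^2)^2 = 4*Q^4)]
  have hk := Int.natAbs_ediv_le_natAbs u a
  have hu' : u.natAbs ≤ 2*Q^2 := by
    zify; exact hu
  refine ⟨⟨by omega, by omega⟩, ?_⟩
  have : 0 < Q^2 := by positivity
  omega

lemma fib3 {Q : ℕ} (hQ : 0 < Q) (a κ : ℕ) (ha : 0 < a) (q : ℤ × ℤ) :
    ((((WW Q).filter (fun p => f1 p = (a, κ))).filter (fun p => f2 p = q)).card:ℝ) ≤ gg Q a κ := by
  set S3 := ((WW Q).filter (fun p => f1 p = (a, κ))).filter (fun p => f2 p = q) with hS3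
  rcases S3.eq_empty_or_nonempty with he | ⟨p0, hp0⟩
  · rw [he]; simpa using gg_nonneg Q a κ
  have hS : ∀ p ∈ S3, ∃ n b u v : ℤ, p = ⟨n, (a, b, u, v)⟩ ∧ |n| ≤ (Q:ℤ)^4 ∧ (u/a).natAbs = κ ∧ b = q.1 ∧ u/a = q.2 ∧
      v^2 = u^3+n*a^2 ∧ (a:ℤ) ∣ b^2-u ∧ (a:ℤ)^2 ∣ b^3-3*b*u+2*v := by
    intro p hp
    rw [hS3, Finset.mem_filter, Finset.mem_filter, mem_WW] at hp
    obtain ⟨⟨⟨⟨-, hn⟩, ht⟩, hf1⟩, hf2⟩ := hp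
    obtain ⟨n, a', b, u, v⟩ := p
    obtain ⟨h1, h2, h3, h4, h5, h6, h7, h8⟩ := ht
    simp only [f1, f2, Prod.mk.injEq] at *
    obtain ⟨e1, e2⟩ := hf1
    have e3 : a' = (a:ℤ) := by omega
    subst e3
    refine ⟨n, b, u, v, rfl, hn, e2, ?_, ?_, h4, h5, h6⟩ <;> rw [← hf2]
  obtain ⟨n0, b0, u0, v0, -, -, hκ, hb0, hu0, -, hd0, -⟩ := hS p0 hp0
  have hu : ∀ p ∈ S3, p.2.2.2.1 = u0 := by
    intro p hp
    obtain ⟨n, b, u, v, rfl, -, -, hb, hu, -, hd, -⟩ := hS p hp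
    simp only
    have : (a:ℤ) ∣ u - u0 := by
      rw [hb] at hd; rw [hb0] at hd0
      have := dvd_sub hd0 hd
      have e : u - u0 = (q.1^2-u0) - (q.1^2-u) := by ring
      rw [e]; exact this
    have h1 := Int.mul_ediv_add_emod u a
    have h2 := Int.mul_ediv_add_emod u0 a
    have h3 : u % a = u0 % a := (Int.modEq_iff_dvd.2 this).symm
    rw [← h1, ← h2, hu, hu0, h3]
  have hinj : Set.InjOn (fun p : Σ _ : ℤ, ℤ × ℤ × ℤ × ℤ => p.2.2.2.2) S3 := by
    intro p hp p' hp' hv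
    have e1 := hu p hp
    have e2 := hu p' hp'
    obtain ⟨n, b, u, v, rfl, -, -, hb, -, h4, -, -⟩ := hS p hp
    obtain ⟨n', b', u', v', rfl, -, -, hb', -, h4', -, -⟩ := hS p' hp'
    simp only at *
    subst e1 hv hb
    subst e2 hb'
    have : (n-n')*(a:ℤ)^2 = 0 := by linear_combination h4' - h4
    have ha2 : (a:ℤ)^2 ≠ 0 := by positivity
    have : n = n' := by
      have := (mul_eq_zero.1 this).resolve_right ha2
      omega
    rw [this]
  rw [← Finset.card_image_of_injOn hinj, ← hκ]
  apply vcount2 _ Q hQ a ha (q.1^3-3*q.1*u0) u0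
  · intro w hw
    obtain ⟨p, hp, rfl⟩ := Finset.mem_image.1 hw
    have e1 := hu p hp
    obtain ⟨n, b, u, v, rfl, -, -, hb, -, h4, -, h6⟩ := hS p hp
    simp only at *
    rw [← e1, ← hb]; exact h6
  · intro w hw
    obtain ⟨p, hp, rfl⟩ := Finset.mem_image.1 hw
    have e1 := hu p hp
    obtain ⟨n, b, u, v, rfl, hn, -, hb, -, h4, -, h6⟩ := hS p hp
    simp only at *
    rw [← e1]
    have : |v^2-u^3| ≤ (Q:ℤ)^4*a^2 := by
      rw [h4, add_sub_cancel_left, abs_mul, abs_of_nonneg (sq_nonneg (a:ℤ))]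
      gcongr
    exact_mod_cast this

lemma fib2 {Q : ℕ} (hQ : 0 < Q) (a κ : ℕ) (ha : 0 < a) :
    (((WW Q).filter (fun p => f1 p = (a, κ))).card:ℝ) ≤ 2*a*gg Q a κ := by
  have H : ∀ p ∈ (WW Q).filter (fun p => f1 p = (a, κ)), f2 p ∈ Finset.Ico (0:ℤ) a ×ˢ ({(κ:ℤ), -(κ:ℤ)} : Finset ℤ) := by
    intro p hp
    rw [Finset.mem_filter, mem_WW] at hp
    obtain ⟨⟨-, ht⟩, hf1⟩ := hp
    obtain ⟨n, a', b, u, v⟩ := p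
    obtain ⟨h1, h2, h3, h4, h5, h6, h7, h8⟩ := ht
    simp only [f1, f2, Prod.mk.injEq, Finset.mem_product, Finset.mem_Ico, Finset.mem_insert, Finset.mem_singleton] at *
    refine ⟨⟨h2, by omega⟩, by omega⟩
  rw [Finset.card_eq_sum_card_fiberwise H]
  push_cast
  refine (Finset.sum_le_card_nsmul _ _ _ (fun q _ => fib3 hQ a κ ha q)).trans ?_
  rw [nsmul_eq_mul]
  apply mul_le_mul_of_nonneg_right _ (gg_nonneg _ _ _)
  rw [Finset.card_product]
  have : ({(κ:ℤ), -(κ:ℤ)} : Finset ℤ).card ≤ 2 := Finset.card_le_two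
  have h2 : (Finset.Ico (0:ℤ) a).card = a := by simp
  rw [h2]
  have : a * ({(κ:ℤ), -(κ:ℤ)} : Finset ℤ).card ≤ 2*a := by nlinarith
  exact_mod_cast this

lemma agg (Q a κ : ℕ) (ha : 0 < a) : 2*a*gg Q a κ ≤ (if κ ≤ Q then 16*(Q:ℝ)^2 else 0) +
    (if κ ≤ Q then 0 else 48*(Q:ℝ)^4*(1/√a)*(1/(κ*√κ))) + 4*a := by
  have har : (0:ℝ) < a := by exact_mod_cast ha
  unfold gg
  split_ifs with h
  · apply le_of_eq; field_simp; ring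
  · push Not at h
    have hκ : (0:ℝ) < κ := by
      have : 0 < κ := by omega
      exact_mod_cast this
    have := Real.sqrt_pos.2 har
    have := Real.sqrt_pos.2 hκ
    apply le_of_eq; field_simp; ring

lemma count_main {Q : ℕ} (hQ : 0 < Q) : ((WW Q).card:ℝ) ≤ 3000*(Q:ℝ)^4 := by
  have hQr : (1:ℝ) ≤ Q := by exact_mod_cast hQ
  rw [Finset.card_eq_sum_card_fiberwise (fun p hp => f1_mem hQ hp)]
  push_cast
  rw [Finset.sum_product]
  have step : ∀ a ∈ Finset.Icc 1 (8*Q), ∑ κ ∈ Finset.range (3*Q^2+1), (((WW Q).filter (fun p => f1 p = (a, κ))).card:ℝ)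
      ≤ 160*(Q:ℝ)^3 + (96*(Q:ℝ)^4/√Q)*(1/√a) := by
    intro a ha
    rw [Finset.mem_Icc] at ha
    have ha8 : (a:ℝ) ≤ 8*Q := by exact_mod_cast ha.2
    calc _ ≤ ∑ κ ∈ Finset.range (3*Q^2+1), ((if κ ≤ Q then 16*(Q:ℝ)^2 else 0) +
          (if κ ≤ Q then 0 else 48*(Q:ℝ)^4*(1/√a)*(1/(κ*√κ))) + 4*(a:ℝ)) :=
          Finset.sum_le_sum (fun κ _ => (fib2 hQ a κ (by omega)).trans (agg Q a κ (by omega)))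
      _ = ∑ κ ∈ Finset.range (3*Q^2+1), (if κ ≤ Q then 16*(Q:ℝ)^2 else 0) +
          ∑ κ ∈ Finset.range (3*Q^2+1), (if κ ≤ Q then 0 else 48*(Q:ℝ)^4*(1/√a)*(1/(κ*√κ))) +
          ∑ κ ∈ Finset.range (3*Q^2+1), 4*(a:ℝ) := by rw [Finset.sum_add_distrib, Finset.sum_add_distrib]
      _ ≤ 32*(Q:ℝ)^3 + (96*(Q:ℝ)^4/√Q)*(1/√a) + 128*(Q:ℝ)^3 := by
        have t1 : ∑ κ ∈ Finset.range (3*Q^2+1), (if κ ≤ Q then 16*(Q:ℝ)^2 else 0) ≤ 32*(Q:ℝ)^3 := by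
          rw [← Finset.sum_filter, Finset.sum_const, nsmul_eq_mul]
          have hc : ((Finset.range (3*Q^2+1)).filter (· ≤ Q)).card ≤ Q + 1 := by
            rw [← Finset.card_range (Q+1)]
            apply Finset.card_le_card
            intro k hk
            rw [Finset.mem_filter] at hk
            rw [Finset.mem_range]; omega
          have hc' : (((Finset.range (3*Q^2+1)).filter (· ≤ Q)).card:ℝ) ≤ 2*Q := by
            have : (((Finset.range (3*Q^2+1)).filter (· ≤ Q)).card:ℝ) ≤ Q+1 := by exact_mod_cast hc
            linarith
          calc _ ≤ (2*(Q:ℝ))*(16*Q^2) := by gcongr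
            _ = _ := by ring
        have t2 : ∑ κ ∈ Finset.range (3*Q^2+1), (if κ ≤ Q then 0 else 48*(Q:ℝ)^4*(1/√a)*(1/(κ*√κ))) ≤
            (96*(Q:ℝ)^4/√Q)*(1/√a) := by
          have e : ∑ κ ∈ Finset.range (3*Q^2+1), (if κ ≤ Q then 0 else 48*(Q:ℝ)^4*(1/√a)*(1/(κ*√κ))) =
              48*(Q:ℝ)^4*(1/√a) * ∑ κ ∈ Finset.Ioc Q (3*Q^2), 1/((κ:ℝ)*√κ) := by
            rw [Finset.mul_sum]
            rw [← Finset.sum_filter_not_add_sum_filter _ (· ≤ Q)]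
            rw [Finset.sum_congr rfl (s₁ := Finset.filter (· ≤ Q) _) (g := fun _ => (0:ℝ)) (fun k hk => if_pos (Finset.mem_filter.1 hk).2)]
            rw [Finset.sum_const_zero, add_zero]
            refine Finset.sum_congr ?_ (fun k hk => ?_)
            · ext k
              simp only [Finset.mem_filter, Finset.mem_range, Finset.mem_Ioc]
              omega
            · rw [Finset.mem_Ioc] at hk
              rw [if_neg (by omega)]
          rw [e]
          have h3 := sum_tail Q (3*Q^2) hQ (by nlinarith)
          have h4 : 0 ≤ 2/√((3*Q^2:ℕ):ℝ) := by positivity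
          calc _ ≤ 48*(Q:ℝ)^4*(1/√a) * (2/√Q) := by gcongr; linarith
            _ = _ := by ring
        have t3 : ∑ κ ∈ Finset.range (3*Q^2+1), 4*(a:ℝ) ≤ 128*(Q:ℝ)^3 := by
          rw [Finset.sum_const, nsmul_eq_mul, Finset.card_range]
          push_cast
          have : 3*(Q:ℝ)^2+1 ≤ 4*Q^2 := by nlinarith
          calc _ ≤ (4*(Q:ℝ)^2)*(4*(8*Q)) := by gcongr
            _ = _ := by ring
        linarith
      _ = _ := by ring
  refine (Finset.sum_le_sum step).trans ?_
  rw [Finset.sum_add_distrib, Finset.sum_const, nsmul_eq_mul, Nat.card_Icc, ← Finset.mul_sum]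
  have h5 := sum_inv_sqrt (8*Q)
  have h6 : √((8*Q:ℕ):ℝ) ≤ 3*√Q := by
    apply Real.sqrt_le_iff.2 ⟨by positivity, ?_⟩
    rw [mul_pow, Real.sq_sqrt (by positivity)]; push_cast; linarith
  have h7 : 0 < √(Q:ℝ) := Real.sqrt_pos.2 (by linarith)
  have h8 : (96*(Q:ℝ)^4/√Q) * ∑ a ∈ Finset.Icc 1 (8*Q), 1/√(a:ℝ) ≤ 576*(Q:ℝ)^4 := by
    calc _ ≤ (96*(Q:ℝ)^4/√Q) * (2*(3*√Q)) := by gcongr; linarith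
      _ = _ := by field_simp; norm_num
  have h9 : ((8*Q+1-1:ℕ):ℝ) = 8*Q := by simp
  rw [h9]
  have : 0 ≤ (Q:ℝ)^4 := by positivity
  linarith [(by ring : 8*(Q:ℝ)*(160*Q^3) = 1280*Q^4)]

lemma count_TT {Q : ℕ} (hQ : 0 < Q) :
    ∑ n ∈ (Finset.Icc (-(Q:ℤ)^4) ((Q:ℤ)^4)).erase 0, ((TT n).card:ℝ) ≤ 3000*(Q:ℝ)^4 := by
  have := count_main hQ
  rw [WW, Finset.card_sigma] at this
  exact_mod_cast this
end AM

set_option linter.unusedSectionVars false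
set_option linter.unusedVariables false
namespace AM

lemma exists_Q (N : ℕ) (hN : 0 < N) : ∃ Q : ℕ, 0 < Q ∧ N ≤ Q^4 ∧ Q^4 ≤ 16*N := by
  have hex : ∃ Q : ℕ, N ≤ Q^4 := ⟨N, Nat.le_self_pow (by norm_num) N⟩
  classical
  set Q := Nat.find hex
  have h1 : N ≤ Q^4 := Nat.find_spec hex
  have h0 : 0 < Q := by
    rcases Nat.eq_zero_or_pos Q with h | h
    · rw [h] at h1; simp at h1; omega
    · exact h
  refine ⟨Q, h0, h1, ?_⟩
  rcases Nat.lt_or_ge Q 2 with h | h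
  · have : Q = 1 := by omega
    rw [this]; omega
  · have h2 : ¬ N ≤ (Q-1)^4 := Nat.find_min hex (by omega)
    have h3 : Q ≤ 2*(Q-1) := by omega
    calc Q^4 ≤ (2*(Q-1))^4 := Nat.pow_le_pow_left h3 4
      _ = 16*(Q-1)^4 := by ring
      _ ≤ _ := by omega

lemma count_N (N : ℕ) (hN : 0 < N) :
    ∑ n ∈ (Finset.Icc (-(N:ℤ)) (N:ℤ)).erase 0, (TT n).card ≤ 48000*N := by
  obtain ⟨Q, hQ, h1, h2⟩ := exists_Q N hN
  have h3 := count_TT hQ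
  have h4 : ∑ n ∈ (Finset.Icc (-(Q:ℤ)^4) ((Q:ℤ)^4)).erase 0, (TT n).card ≤ 3000*Q^4 := by exact_mod_cast h3
  refine le_trans (Finset.sum_le_sum_of_subset ?_) (h4.trans (by omega))
  apply Finset.erase_subset_erase
  have : (N:ℤ) ≤ (Q:ℤ)^4 := by exact_mod_cast h1
  apply Finset.Icc_subset_Icc <;> linarith

open Classical in
/-- sixth-power free integers up to `N` -/
noncomputable def FF (N : ℕ) : Finset ℤ := (Finset.Icc (-(N:ℤ)) (N:ℤ)).filter SixthPowerFree

lemma mem_FF {N : ℕ} {n : ℤ} : n ∈ FF N ↔ (-(N:ℤ) ≤ n ∧ n ≤ N) ∧ SixthPowerFree n := by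
  classical
  rw [FF, Finset.mem_filter, Finset.mem_Icc]

lemma sum_inv (N : ℕ) (hN : 1 ≤ N) : ∑ d ∈ Finset.Icc 2 N, 1/((d:ℝ)^6) ≤ (1 - 1/(N:ℝ))/16 := by
  induction N, hN using Nat.le_induction with
  | base => simp
  | succ n hn ih =>
    rw [Finset.sum_Icc_succ_top (by omega)]
    have hn0 : (1:ℝ) ≤ n := by exact_mod_cast hn
    have : 1/(((n+1:ℕ):ℝ)^6) ≤ (1/(n:ℝ) - 1/((n+1:ℕ):ℝ))/16 := by
      push_cast
      have e : (1/(n:ℝ) - 1/((n:ℝ)+1))/16 = 1/(16*(n*(n+1))) := by field_simp; ring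
      rw [e]
      apply one_div_le_one_div_of_le (by positivity)
      have h4 : (16:ℝ) ≤ ((n:ℝ)+1)^4 := by
        calc (16:ℝ) = 2^4 := by norm_num
          _ ≤ _ := by gcongr; linarith
      have h2 : (n:ℝ)*(n+1) ≤ ((n:ℝ)+1)^2 := by nlinarith
      calc 16*((n:ℝ)*(n+1)) ≤ ((n:ℝ)+1)^4*((n:ℝ)+1)^2 := by gcongr
        _ = _ := by ring
    linarith

lemma FF_lower (N : ℕ) (hN : 1 ≤ N) : N ≤ 2*(FF N).card := by
  classical
  set B := (Finset.Icc 2 N).biUnion (fun d => (Finset.Ioc 0 N).filter (fun n => d^6 ∣ n)) with hB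
  have hcov : Finset.Ioc 0 N ⊆ B ∪ (FF N).image Int.toNat := by
    intro n hn
    rw [Finset.mem_Ioc] at hn
    rw [Finset.mem_union]
    by_cases h : SixthPowerFree (n:ℤ)
    · right
      exact Finset.mem_image.2 ⟨n, mem_FF.2 ⟨⟨by omega, by omega⟩, h⟩, by simp⟩
    · left
      have hn0 : (n:ℤ) ≠ 0 := by omega
      simp only [SixthPowerFree, not_and, not_forall, not_not] at h
      obtain ⟨p, hp, hd⟩ := h hn0
      have hd' : p^6 ∣ n := by exact_mod_cast hd
      rw [hB, Finset.mem_biUnion]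
      refine ⟨p, Finset.mem_Icc.2 ⟨hp.two_le, ?_⟩, Finset.mem_filter.2 ⟨Finset.mem_Ioc.2 hn, hd'⟩⟩
      have h1 := Nat.le_of_dvd hn.1 hd'
      have h2 : p ≤ p^6 := Nat.le_self_pow (by norm_num) p
      omega
  have h1 := Finset.card_le_card hcov
  rw [Nat.card_Ioc] at h1
  have h2 := Finset.card_union_le B ((FF N).image Int.toNat)
  have h3 : ((FF N).image Int.toNat).card ≤ (FF N).card := Finset.card_image_le
  have h4 : (B.card:ℝ) ≤ N/16 := by
    have e1 : B.card ≤ ∑ d ∈ Finset.Icc 2 N, N/d^6 := by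
      refine Finset.card_biUnion_le.trans (le_of_eq ?_)
      exact Finset.sum_congr rfl (fun d _ => Nat.Ioc_filter_dvd_card_eq_div N (d^6))
    have e2 : (B.card:ℝ) ≤ ∑ d ∈ Finset.Icc 2 N, ((N/d^6:ℕ):ℝ) := by exact_mod_cast e1
    have e3 : ∑ d ∈ Finset.Icc 2 N, ((N/d^6:ℕ):ℝ) ≤ ∑ d ∈ Finset.Icc 2 N, (N:ℝ)*(1/(d:ℝ)^6) := by
      apply Finset.sum_le_sum
      intro d _
      have := Nat.cast_div_le (α := ℝ) (m := N) (n := d^6)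
      refine this.trans (le_of_eq ?_)
      push_cast; ring
    rw [← Finset.mul_sum] at e3
    have e4 := sum_inv N hN
    have hNr : (0:ℝ) < N := by exact_mod_cast hN
    have e5 : (1 - 1/(N:ℝ))/16 ≤ 1/16 := by
      have : 0 < 1/(N:ℝ) := by positivity
      linarith
    have e6 : (N:ℝ) * ∑ d ∈ Finset.Icc 2 N, 1/((d:ℝ)^6) ≤ N*(1/16) := by gcongr; linarith
    linarith
  have h5 : (16*B.card:ℕ) ≤ N := by
    have : (16:ℝ)*B.card ≤ N := by linarith
    exact_mod_cast this
  omega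

lemma FF_sum1 (N : ℕ) (hN : 1 ≤ N) : ∑ n ∈ FF N, (TT n).card ≤ 48000*N := by
  refine le_trans (Finset.sum_le_sum_of_subset ?_) (count_N N hN)
  intro n hn
  rw [mem_FF] at hn
  rw [Finset.mem_erase, Finset.mem_Icc]
  exact ⟨hn.2.1, hn.1⟩

lemma FF_sum2 (N : ℕ) (hN : 1 ≤ N) : ∑ n ∈ FF N, (TT (-27*n)).card ≤ 48000*(27*N) := by
  classical
  have hinj : Set.InjOn (fun n : ℤ => -27*n) (FF N) := by
    intro a _ b _ h
    simp only at h
    omega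
  rw [← Finset.sum_image (f := fun n => (TT n).card) (g := fun n : ℤ => -27*n) hinj]
  refine le_trans (Finset.sum_le_sum_of_subset ?_) (count_N (27*N) (by omega))
  intro n hn
  obtain ⟨m, hm, rfl⟩ := Finset.mem_image.1 hn
  rw [mem_FF] at hm
  rw [Finset.mem_erase, Finset.mem_Icc]
  have := hm.2.1
  push_cast
  refine ⟨by omega, by omega, by omega⟩

lemma pointwise : ∃ K j : ℕ, 0 < K ∧ 0 < j ∧ ∀ n : ℤ, SixthPowerFree n →
    (ENat.toENNReal (max (betaX (MordellCurve n)) (betaY (MordellCurve n)))) ^ (1/(2*j:ℝ)) ≤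
      ((K*(6 + (TT n).card + (TT (-27*n)).card) : ℕ) : ℝ≥0∞) := by
  obtain ⟨K, j, hj, hK, H⟩ := beta_bound
  refine ⟨K, j, hK, hj, ?_⟩
  intro n hn
  have h1 := H n hn _ (by positivity) (classMap_TT hn.1)
  set s1 := 3 + (TT n).card
  set s2 := 3 + (TT (-27*n)).card
  have e : 6 + (TT n).card + (TT (-27*n)).card = s1 + s2 := by omega
  rw [e]
  have h2 : K*(s1*s2)^j ≤ (K*(s1+s2))^(2*j) := by
    rw [mul_pow K, pow_mul (s1+s2)]
    apply Nat.mul_le_mul (Nat.le_self_pow (by omega) K)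
    apply Nat.pow_le_pow_left
    nlinarith
  have h3 : ENat.toENNReal (max (betaX (MordellCurve n)) (betaY (MordellCurve n))) ≤
      (((K*(s1+s2) : ℕ):ℝ≥0∞))^(2*j) := by
    have h4 := ENat.toENNReal_mono h1
    rw [ENat.toENNReal_coe] at h4
    refine h4.trans ?_
    exact_mod_cast h2
  have hj' : (0:ℝ) < j := by exact_mod_cast hj
  calc _ ≤ ((((K*(s1+s2) : ℕ):ℝ≥0∞))^(2*j))^(1/(2*j:ℝ)) := ENNReal.rpow_le_rpow h3 (by positivity)
    _ = _ := by
      rw [← ENNReal.rpow_natCast, ← ENNReal.rpow_mul]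
      have : ((2*j:ℕ):ℝ)*(1/(2*j:ℝ)) = 1 := by push_cast; field_simp
      rw [this, ENNReal.rpow_one]

lemma mem_iff {x : ℝ} (hx : 1 < x) (n : ℤ) : n ∈ FF ⌊x⌋₊ ↔ SixthPowerFree n ∧ |(n:ℝ)| ≤ x := by
  rw [mem_FF, and_comm, ← abs_le]
  have : |n| ≤ (⌊x⌋₊:ℤ) ↔ |(n:ℝ)| ≤ x := by
    have e : |(n:ℝ)| = (n.natAbs:ℝ) := by rw [Nat.cast_natAbs]; push_cast; rfl
    rw [e, ← Nat.le_floor_iff (by linarith)]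
    rw [Int.abs_eq_natAbs]; exact Nat.cast_le
  rw [this]
end AM

/-- Mohanty's conjecture holds on average: there are `τ, M > 0` such that for all `x > 1`,
the sum over sixth-power free `n` with `|n| ≤ x` of `max{βx(Aₙ), βy(Aₙ)}^τ` is less than
`M` times the number of such `n`. -/
theorem average_mohanty :
    ∃ τ : ℝ, 0 < τ ∧ ∃ M : ℝ, 0 < M ∧
      ∀ x : ℝ, 1 < x →
        ∑' n : {n : ℤ // SixthPowerFree n ∧ |(n : ℝ)| ≤ x},
            (ENat.toENNReal (max (betaX (MordellCurve n)) (betaY (MordellCurve n)))) ^ τ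
          < ENNReal.ofReal M *
              ({n : ℤ | SixthPowerFree n ∧ |(n : ℝ)| ≤ x}.ncard : ℝ≥0∞) := by
  obtain ⟨K, j, hK, hj, H⟩ := AM.pointwise
  have hj' : (0:ℝ) < j := by exact_mod_cast hj
  refine ⟨1/(2*j:ℝ), by positivity, ((K*2688007 : ℕ):ℝ), by positivity, ?_⟩
  intro x hx
  set N := ⌊x⌋₊ with hN
  have hN1 : 1 ≤ N := Nat.le_floor (by simpa using hx.le)
  have hset : {n : ℤ | SixthPowerFree n ∧ |(n : ℝ)| ≤ x} = ((AM.FF N : Finset ℤ) : Set ℤ) := by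
    ext n
    rw [Finset.mem_coe, hN, AM.mem_iff hx]
    rfl
  rw [hset, Set.ncard_coe_finset, ENNReal.ofReal_natCast]
  rw [← (Equiv.subtypeEquivRight (AM.mem_iff hx)).tsum_eq]
  have hsum := Finset.tsum_subtype (AM.FF N)
    (fun n : ℤ => (ENat.toENNReal (max (betaX (MordellCurve n)) (betaY (MordellCurve n)))) ^ (1/(2*j:ℝ)))
  have hlow := AM.FF_lower N hN1
  have hs1 := AM.FF_sum1 N hN1
  have hs2 := AM.FF_sum2 N hN1
  calc _ = ∑ n ∈ AM.FF N, (ENat.toENNReal (max (betaX (MordellCurve n)) (betaY (MordellCurve n)))) ^ (1/(2*j:ℝ)) := hsum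
    _ ≤ ∑ n ∈ AM.FF N, ((K*(6 + (AM.TT n).card + (AM.TT (-27*n)).card) : ℕ) : ℝ≥0∞) :=
      Finset.sum_le_sum (fun n hn => H n (AM.mem_FF.1 hn).2)
    _ = ((∑ n ∈ AM.FF N, (K*(6 + (AM.TT n).card + (AM.TT (-27*n)).card)) : ℕ) : ℝ≥0∞) := by
      rw [Nat.cast_sum]
    _ < ((K*2688007*(AM.FF N).card : ℕ) : ℝ≥0∞) := by
      rw [Nat.cast_lt, ← Finset.mul_sum, mul_assoc]
      apply Nat.mul_lt_mul_of_pos_left _ hK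
      rw [Finset.sum_add_distrib, Finset.sum_add_distrib, Finset.sum_const, smul_eq_mul]
      omega
    _ = _ := by push_cast; rfl
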